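/- arXiv:2407.20877 — 2 statements merged into one kernel-verified Lean document; each statement's English description precedes it below -/
import Mathlib

section
/- Let A be a brick-finite finite-dimensional algebra over an algebraically closed field of rank n. Then the only semibrick of size n in mod A is the set of the n simple A-modules; that is, if {X_1, ..., X_n} is a set of n pairwise non-isomorphic, pairwise Hom-orthogonal bricks, then each X_i is a simple A-module and {X_1, ..., X_n} is a complete set of representatives of the simple A-modules. -/
universe u v

open Module

/-- A finite-dimensional left module over the `k`-algebra `A`. -/
structure FDMod (k A : Type u) [Field k] [Ring A] [Algebra k A] : Type (u + 1) where
  carrier : Type u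
  [addCommGroup : AddCommGroup carrier]
  [moduleK : Module k carrier]
  [moduleA : Module A carrier]
  [tower : IsScalarTower k A carrier]
  [fd : FiniteDimensional k carrier]

attribute [instance] FDMod.addCommGroup FDMod.moduleK FDMod.moduleA FDMod.tower FDMod.fd

variable {k A : Type u} [Field k] [Ring A] [Algebra k A]

/-- `M` is a brick: `M ≠ 0` and every `A`-endomorphism of `M` is a `k`-scalar,
i.e. `End_A(M) ≅ k`. -/
def FDMod.IsBrick (M : FDMod k A) : Prop :=
  Nontrivial M.carrier ∧ ∀ f : M.carrier →ₗ[A] M.carrier, ∃ c : k, ∀ x : M.carrier, f x = c • x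

/-- `M` and `N` are Hom-orthogonal: `Hom_A(M,N) = 0` and `Hom_A(N,M) = 0`. -/
def FDMod.HomOrth (M N : FDMod k A) : Prop :=
  (∀ f : M.carrier →ₗ[A] N.carrier, f = 0) ∧ (∀ f : N.carrier →ₗ[A] M.carrier, f = 0)

/-- `M` and `N` are isomorphic as `A`-modules. -/
def FDMod.Iso (M N : FDMod k A) : Prop :=
  Nonempty (M.carrier ≃ₗ[A] N.carrier)

/-- A family of modules forms a Hom-orthogonal set: the modules are nonzero,
pairwise non-isomorphic and pairwise Hom-orthogonal. -/
def HomOrthFamily {I : Type v} (X : I → FDMod k A) : Prop :=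
  (∀ i, Nontrivial (X i).carrier) ∧
  (∀ i j, i ≠ j → ¬(X i).Iso (X j)) ∧
  (∀ i j, i ≠ j → (X i).HomOrth (X j))

/-- `A` is brick-finite: there are only finitely many isomorphism classes of bricks. -/
def BrickFinite (k A : Type u) [Field k] [Ring A] [Algebra k A] : Prop :=
  ∃ (m : ℕ) (f : Fin m → FDMod k A), ∀ N : FDMod k A, N.IsBrick → ∃ i, N.Iso (f i)

/-- `A` has rank `n`: there are exactly `n` isomorphism classes of simple modules. -/
def HasRank (k A : Type u) [Field k] [Ring A] [Algebra k A] (n : ℕ) : Prop :=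
  ∃ S : Fin n → FDMod k A,
    (∀ i, IsSimpleModule A (S i).carrier) ∧
    (∀ i j, i ≠ j → ¬(S i).Iso (S j)) ∧
    (∀ T : FDMod k A, IsSimpleModule A T.carrier → ∃ i, T.Iso (S i))


instance subFD (M : FDMod k A) (p : Submodule A M.carrier) : FiniteDimensional k p :=
  FiniteDimensional.of_injective (p.subtype.restrictScalars k) (by
    intro x y h; exact Subtype.ext h)

instance quoFD (M : FDMod k A) (p : Submodule A M.carrier) :
    FiniteDimensional k (M.carrier ⧸ p) :=
  Module.Finite.of_surjective (p.mkQ.restrictScalars k) p.mkQ_surjective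

abbrev FDMod.sub (M : FDMod k A) (p : Submodule A M.carrier) : FDMod k A := ⟨p⟩
abbrev FDMod.quo (M : FDMod k A) (p : Submodule A M.carrier) : FDMod k A := ⟨M.carrier ⧸ p⟩
abbrev FDMod.prod (M N : FDMod k A) : FDMod k A := ⟨M.carrier × N.carrier⟩
abbrev FDMod.pow (M : FDMod k A) (r : ℕ) : FDMod k A := ⟨Fin r → M.carrier⟩

noncomputable abbrev FDMod.dim (M : FDMod k A) : ℕ := finrank k M.carrier

abbrev FDMod.H (M N : FDMod k A) := M.carrier →ₗ[A] N.carrier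

instance homFD (M N : FDMod k A) : FiniteDimensional k (M.H N) :=
  FiniteDimensional.of_injective (V₂ := M.carrier →ₗ[k] N.carrier)
    ({ toFun := fun f => f.restrictScalars k
       map_add' := fun _ _ => rfl
       map_smul' := fun _ _ => rfl }) (by
      intro f g h
      ext x
      exact LinearMap.congr_fun h x)

noncomputable abbrev FDMod.hom (M N : FDMod k A) : ℕ := finrank k (M.H N)

structure Tors (U : FDMod k A → Prop) : Prop where
  quot : ∀ {M N : FDMod k A} (g : M.H N), Function.Surjective g → U M → U N
  ext : ∀ {M N : FDMod k A} (g : M.H N), Function.Surjective g → U N →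
    U (M.sub (LinearMap.ker g)) → U M
  zero : ∀ M : FDMod k A, Subsingleton M.carrier → U M

variable {U : FDMod k A → Prop}

theorem Tors.equiv (h : Tors U) {M N : FDMod k A} (e : M.carrier ≃ₗ[A] N.carrier) (hM : U M) :
    U N := h.quot (M := M) (N := N) e.toLinearMap e.surjective hM

theorem Tors.range (h : Tors U) {M N : FDMod k A} (g : M.H N) (hM : U M) :
    U (N.sub (LinearMap.range g)) :=
  h.quot (M := M) (N := N.sub (LinearMap.range g)) g.rangeRestrict g.surjective_rangeRestrict hM

theorem Tors.prod (h : Tors U) {M N : FDMod k A} (hM : U M) (hN : U N) : U (M.prod N) := by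
  refine h.ext (M := M.prod N) (N := N) (LinearMap.snd A M.carrier N.carrier)
    (LinearMap.snd_surjective) hN ?_
  refine h.quot (M := M) ((LinearMap.inl A M.carrier N.carrier).codRestrict _ ?_) ?_ hM
  · intro c; simp
  · rintro ⟨⟨x, y⟩, hy⟩
    refine ⟨x, ?_⟩
    have : y = 0 := by simpa using hy
    subst this
    rfl

theorem Tors.top (h : Tors U) {M : FDMod k A} : U (M.sub ⊤) ↔ U M :=
  ⟨fun hM => h.equiv (M := M.sub ⊤) Submodule.topEquiv hM,
   fun hM => h.equiv (N := M.sub ⊤) Submodule.topEquiv.symm hM⟩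

/-- Given a nonempty class of modules, there is one of minimal dimension. -/
theorem exists_min_dim (P : FDMod k A → Prop) (h : ∃ M, P M) :
    ∃ M, P M ∧ ∀ N, P N → M.dim ≤ N.dim := by
  classical
  have h' : ∃ d, ∃ M, P M ∧ M.dim = d := by
    obtain ⟨M, hM⟩ := h; exact ⟨_, M, hM, rfl⟩
  obtain ⟨M, hM, hd⟩ := Nat.find_spec h'
  refine ⟨M, hM, fun N hN => ?_⟩
  rw [hd]
  exact Nat.find_min' h' ⟨N, hN, rfl⟩

theorem sub_dim_lt {M : FDMod k A} {p q : Submodule A M.carrier} (h : p < q) :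
    (M.sub p).dim < (M.sub q).dim := by
  have := Submodule.finrank_lt_finrank_of_lt (K := k)
    (s := p.restrictScalars k) (t := q.restrictScalars k) h
  exact this

theorem sub_dim_le {M : FDMod k A} (p : Submodule A M.carrier) :
    (M.sub p).dim ≤ M.dim :=
  Submodule.finrank_le (p.restrictScalars k)

theorem sub_dim_eq {M : FDMod k A} {p : Submodule A M.carrier} (h : M.dim ≤ (M.sub p).dim) :
    p = ⊤ := by
  have := Submodule.eq_top_of_finrank_eq (K := k) (S := p.restrictScalars k)
    (le_antisymm (sub_dim_le p) h)
  exact (Submodule.restrictScalars_eq_top_iff k A _).mp this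

theorem sub_dim_lt_top {M : FDMod k A} {p : Submodule A M.carrier} (h : p ≠ ⊤) :
    (M.sub p).dim < M.dim := by
  by_contra h'
  exact h (sub_dim_eq (not_lt.mp h'))

theorem dim_ker_range {M N : FDMod k A} (g : M.H N) :
    (N.sub (LinearMap.range g)).dim + (M.sub (LinearMap.ker g)).dim = M.dim :=
  LinearMap.finrank_range_add_finrank_ker (g.restrictScalars k)

theorem dim_quo {M : FDMod k A} (p : Submodule A M.carrier) :
    (M.quo p).dim + (M.sub p).dim = M.dim := by
  have := dim_ker_range (M := M) (N := M.quo p) p.mkQ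
  rw [Submodule.ker_mkQ, Submodule.range_mkQ] at this
  rw [← this]
  congr 1
  exact ((Submodule.topEquiv (R := A) (M := M.carrier ⧸ p)).restrictScalars k).finrank_eq.symm

/-- maximal-dimension submodule with property -/
theorem exists_max_sub (M : FDMod k A) (P : Submodule A M.carrier → Prop) (h : ∃ p, P p) :
    ∃ p, P p ∧ ∀ q, P q → (M.sub q).dim ≤ (M.sub p).dim := by
  classical
  by_contra hc
  push Not at hc
  obtain ⟨p, hp⟩ := h
  have : ∀ n : ℕ, ∃ q, P q ∧ n ≤ (M.sub q).dim := by
    intro n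
    induction n with
    | zero => exact ⟨p, hp, Nat.zero_le _⟩
    | succ n ih =>
      obtain ⟨q, hq, hn⟩ := ih
      obtain ⟨q', hq', hlt⟩ := hc q hq
      exact ⟨q', hq', by omega⟩
  obtain ⟨q, -, hq⟩ := this (M.dim + 1)
  have := sub_dim_le q
  omega

theorem Tors.sup (h : Tors U) {M : FDMod k A} {p q : Submodule A M.carrier}
    (hp : U (M.sub p)) (hq : U (M.sub q)) : U (M.sub (p ⊔ q)) := by
  have := h.range (M := (M.sub p).prod (M.sub q)) (N := M)
    (LinearMap.coprod p.subtype q.subtype) (h.prod hp hq)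
  rwa [LinearMap.range_coprod, Submodule.range_subtype, Submodule.range_subtype] at this

theorem Tors.rad (h : Tors U) (M : FDMod k A) :
    ∃ p : Submodule A M.carrier, U (M.sub p) ∧ ∀ q, U (M.sub q) → q ≤ p := by
  obtain ⟨p, hp, hmax⟩ := exists_max_sub M (fun p => U (M.sub p))
    ⟨⊥, h.zero _ (inferInstanceAs (Subsingleton (⊥ : Submodule A M.carrier)))⟩
  refine ⟨p, hp, fun q hq => ?_⟩
  by_contra hc
  have : p < p ⊔ q := by
    refine lt_of_le_of_ne le_sup_left fun he => hc ?_
    rw [he]; exact le_sup_right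
  have h1 := sub_dim_lt this
  have h2 := hmax _ (h.sup hp hq)
  omega

theorem Tors.iSup (h : Tors U) {M : FDMod k A} {ι : Type*} (p : ι → Submodule A M.carrier)
    (hp : ∀ i, U (M.sub (p i))) : U (M.sub (⨆ i, p i)) := by
  -- the restriction of the torsion radical of the supremum
  obtain ⟨t, ht, htm⟩ := h.rad (M.sub (⨆ i, p i))
  have : t = ⊤ := by
    rw [eq_top_iff]
    have key : ∀ i, p i ≤ t.map (⨆ i, p i).subtype := by
      intro i
      have h1 : U ((M.sub (⨆ i, p i)).sub
          (LinearMap.range (Submodule.inclusion (le_iSup p i)))) :=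
        h.range (M := M.sub (p i)) (N := M.sub (⨆ i, p i))
          (Submodule.inclusion (le_iSup p i)) (hp i)
      have h2 := htm _ h1
      intro x hx
      exact ⟨⟨x, le_iSup p i hx⟩, h2 ⟨⟨x, hx⟩, rfl⟩, rfl⟩
    rintro ⟨x, hx⟩ -
    obtain ⟨y, hy, hyx⟩ := iSup_le key hx
    have : y = ⟨x, hx⟩ := Subtype.ext hyx
    rwa [← this]
  subst this
  exact h.top.mp ht

/-- relative Ext-projectives -/
def EP (U : FDMod k A → Prop) (N : FDMod k A) : Prop :=
  ∀ (Z Y : FDMod k A) (p : Z.H Y), Function.Surjective p → U (Z.sub (LinearMap.ker p)) →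
    ∀ g : N.H Y, ∃ h : N.H Z, p.comp h = g

theorem EP.quo {N Z : FDMod k A} (hN : EP U N) (W : Submodule A Z.carrier) (hW : U (Z.sub W))
    (g : N.H (Z.quo W)) : ∃ h : N.H Z, W.mkQ.comp h = g := by
  refine hN Z (Z.quo W) W.mkQ W.mkQ_surjective ?_ g
  rwa [Submodule.ker_mkQ]

theorem EP.retract {N N' : FDMod k A} (hN : EP U N) (i : N'.H N) (r : N.H N')
    (h : ∀ x, r (i x) = x) : EP U N' := by
  intro Z Y p hp hk g
  obtain ⟨f, hf⟩ := hN Z Y p hp hk (g.comp r)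
  refine ⟨f.comp i, ?_⟩
  ext x
  have := LinearMap.congr_fun hf (i x)
  simp only [LinearMap.comp_apply, h] at this ⊢
  exact this

theorem EP.prod {N N' : FDMod k A} (hN : EP U N) (hN' : EP U N') : EP U (N.prod N') := by
  intro Z Y p hp hk g
  obtain ⟨f, hf⟩ := hN Z Y p hp hk (g.comp (LinearMap.inl A _ _))
  obtain ⟨f', hf'⟩ := hN' Z Y p hp hk (g.comp (LinearMap.inr A _ _))
  refine ⟨LinearMap.coprod f f', ?_⟩
  ext x
  · simpa using LinearMap.congr_fun hf x
  · simpa using LinearMap.congr_fun hf' x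

/-- left approximation of `A` in `U`, recorded by the image of `1`. -/
structure Approx (U : FDMod k A → Prop) (M : FDMod k A) (m : M.carrier) : Prop where
  mem : U M
  univ : ∀ Y : FDMod k A, U Y → ∀ y : Y.carrier, ∃ h : M.H Y, h m = y

structure MinApprox (U : FDMod k A → Prop) (M : FDMod k A) (m : M.carrier) : Prop
    extends Approx U M m where
  min : ∀ s : M.H M, s m = m → Function.Bijective s

theorem bij_of_surj {M : FDMod k A} (s : M.H M) (h : Function.Surjective s) :
    Function.Bijective s :=
  ⟨(LinearMap.injective_iff_surjective (f := s.restrictScalars k)).mpr h, h⟩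

theorem Approx.exists_min (hU : Tors U) (h : ∃ M m, Approx U M m) : ∃ M m, MinApprox U M m := by
  obtain ⟨M, ⟨m, hm⟩, hmin⟩ := exists_min_dim (fun M => ∃ m, Approx U M m) h
  refine ⟨M, m, hm, fun s hs => bij_of_surj s ?_⟩
  rw [← LinearMap.range_eq_top]
  apply sub_dim_eq
  apply hmin
  refine ⟨⟨m, m, hs⟩, hU.range s hm.mem, fun Y hY y => ?_⟩
  obtain ⟨f, hf⟩ := hm.univ Y hY y
  exact ⟨f.comp (LinearMap.range s).subtype, hf⟩

theorem Approx.gen {T : FDMod k A → Prop} (hT : Tors T) {M : FDMod k A} {m : M.carrier}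
    (h : Approx U M m) (hM : T M) {Y : FDMod k A} (hY : U Y) : T Y := by
  have h1 : T (Y.sub (⨆ g : M.H Y, LinearMap.range g)) :=
    hT.iSup _ fun g => hT.range g hM
  have : (⨆ g : M.H Y, LinearMap.range g) = ⊤ := by
    rw [eq_top_iff]
    intro y _
    obtain ⟨g, hg⟩ := h.univ Y hY y
    exact (le_iSup (fun g : M.H Y => LinearMap.range g) g) ⟨m, hg⟩
  rw [this] at h1
  exact hT.top.mp h1

theorem MinApprox.ep (hU : Tors U) {M : FDMod k A} {m : M.carrier} (h : MinApprox U M m) :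
    EP U M := by
  intro Z Y p hp hk g
  let E : Submodule A (M.carrier × Z.carrier) :=
    LinearMap.ker (g.comp (LinearMap.fst A _ _) - p.comp (LinearMap.snd A _ _))
  have hE : ∀ x : M.carrier × Z.carrier, x ∈ E ↔ g x.1 = p x.2 := by
    intro x
    simp [E, LinearMap.mem_ker, sub_eq_zero]
  let q : ((M.prod Z).sub E).H M := (LinearMap.fst A M.carrier Z.carrier).comp E.subtype
  have hq : Function.Surjective q := by
    intro x
    obtain ⟨z, hz⟩ := hp (g x)
    exact ⟨⟨(x, z), (hE _).mpr hz.symm⟩, rfl⟩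
  have hUE : U ((M.prod Z).sub E) := by
    refine hU.ext q hq h.mem ?_
    let f0 : (Z.sub (LinearMap.ker p)).H ((M.prod Z).sub E) :=
      ((LinearMap.inr A M.carrier Z.carrier).comp (LinearMap.ker p).subtype).codRestrict E (by
        rintro ⟨z, hz⟩
        rw [hE]
        simpa using hz.symm)
    refine hU.quot (M := Z.sub (LinearMap.ker p)) (f0.codRestrict _ ?_) ?_ hk
    · intro z
      rfl
    · rintro ⟨⟨⟨x, z⟩, hxz⟩, hx⟩
      have hx0 : x = 0 := hx
      subst hx0
      refine ⟨⟨z, ?_⟩, rfl⟩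
      have := (hE _).mp hxz
      simpa using this.symm
  obtain ⟨z0, hz0⟩ := hp (g m)
  obtain ⟨f, hf⟩ := h.univ _ hUE ⟨(m, z0), (hE _).mpr hz0.symm⟩
  have hb : Function.Bijective (q.comp f) := h.min (q.comp f) (by
    simp only [LinearMap.comp_apply, hf]
    rfl)
  let e := LinearEquiv.ofBijective (q.comp f) hb
  refine ⟨((LinearMap.snd A M.carrier Z.carrier).comp E.subtype).comp (f.comp e.symm.toLinearMap),
    ?_⟩
  ext x
  have h1 : (q.comp f) (e.symm x) = x := e.apply_symm_apply x
  have h2 := (hE _).mp (f (e.symm x)).2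
  have h3 : g x = g (f (e.symm x)).1.1 := by
    congr 1
    exact h1.symm
  rw [h3, h2]
  rfl

/-- The cokernel of the approximation. -/
abbrev coker (M : FDMod k A) (m : M.carrier) : FDMod k A := M.quo (Submodule.span A {m})

theorem MinApprox.ep_coker (hU : Tors U) {M : FDMod k A} {m : M.carrier} (h : MinApprox U M m) :
    EP U (coker M m) := by
  intro Z Y p hp hk g
  obtain ⟨f, hf⟩ := h.ep hU Z Y p hp hk (g.comp (Submodule.mkQ _))
  have hm : f m ∈ LinearMap.ker p := by
    have := LinearMap.congr_fun hf m
    simp only [LinearMap.comp_apply] at this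
    rw [LinearMap.mem_ker, this]
    have : (Submodule.span A {m}).mkQ m = 0 := by
      simp [Submodule.mem_span_singleton_self]
    rw [this, map_zero]
  obtain ⟨v, hv⟩ := h.univ _ hk ⟨f m, hm⟩
  have hle : Submodule.span A {m} ≤
      LinearMap.ker (f - (LinearMap.ker p).subtype.comp v) := by
    rw [Submodule.span_singleton_le_iff_mem, LinearMap.mem_ker]
    simp [hv]
  refine ⟨Submodule.liftQ _ _ hle, ?_⟩
  apply LinearMap.ext
  intro x
  obtain ⟨x, rfl⟩ := Submodule.mkQ_surjective _ x
  have h1 := LinearMap.congr_fun hf x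
  have h2 : p (v x) = 0 := (v x).2
  simp only [LinearMap.comp_apply, Submodule.mkQ_apply, Submodule.liftQ_apply,
    LinearMap.sub_apply, Submodule.subtype_apply, map_sub, h2, sub_zero] at h1 ⊢
  exact h1

theorem MinApprox.mem_coker (hU : Tors U) {M : FDMod k A} {m : M.carrier}
    (h : MinApprox U M m) : U (coker M m) :=
  hU.quot (M := M) (Submodule.mkQ _) (Submodule.mkQ_surjective _) h.mem

/-- `B` is simple in the wide subcategory attached to `U`. -/
structure ASimple (U : FDMod k A → Prop) (B : FDMod k A) : Prop where
  nontriv : Nontrivial B.carrier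
  mem : U B
  surj : ∀ Y : FDMod k A, U Y → ∀ g : Y.H B, g ≠ 0 → Function.Surjective g
  ker : ∀ Y : FDMod k A, U Y → ∀ g : Y.H B, g ≠ 0 → U (Y.sub (LinearMap.ker g))

theorem ASimple.hom_coker {M : FDMod k A} {m : M.carrier} (h : MinApprox U M m)
    {B : FDMod k A} (hB : ASimple U B) (g : (coker M m).H B) : g = 0 := by
  by_contra hg
  let b : M.H B := g.comp (Submodule.mkQ _)
  have hb0 : b ≠ 0 := by
    intro hb
    apply hg
    apply LinearMap.ext
    intro x
    obtain ⟨x, rfl⟩ := Submodule.mkQ_surjective _ x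
    exact LinearMap.congr_fun hb x
  have hbm : b m = 0 := by
    have : (Submodule.span A {m}).mkQ m = 0 := by
      simp [Submodule.mem_span_singleton_self]
    change g ((Submodule.span A {m}).mkQ m) = 0
    rw [this, map_zero]
  obtain ⟨f, hf⟩ := h.univ _ (hB.ker M h.mem b hb0) ⟨m, hbm⟩
  have := h.min ((LinearMap.ker b).subtype.comp f) (by
    simp only [LinearMap.comp_apply, hf]
    rfl)
  apply hb0
  ext x
  obtain ⟨y, rfl⟩ := this.2 x
  exact (f y).2

theorem ASimple.brick [IsAlgClosed k] {B : FDMod k A} (hB : ASimple U B) : B.IsBrick := by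
  have := hB.nontriv
  refine ⟨hB.nontriv, fun f => ?_⟩
  obtain ⟨c, hc⟩ := Module.End.exists_eigenvalue (K := k) (V := B.carrier) (f.restrictScalars k)
  obtain ⟨x, hx⟩ := hc.exists_hasEigenvector
  refine ⟨c, fun y => ?_⟩
  have h0 : f - c • (LinearMap.id : B.H B) = 0 := by
    by_contra hne
    have h1 := bij_of_surj _ (hB.surj B hB.mem _ hne)
    apply hx.2
    apply h1.1
    have := hx.apply_eq_smul
    simp only [LinearMap.restrictScalars_apply] at this
    simp [this]
  have := LinearMap.congr_fun h0 y
  simpa [sub_eq_zero] using this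

/-- scalar factorization -/
theorem factor {N X Y : FDMod k A} (b : N.H X) (hb : Function.Surjective b) (a : N.H Y)
    (h : LinearMap.ker b ≤ LinearMap.ker a) : ∃ φ : X.H Y, φ.comp b = a := by
  let e := b.quotKerEquivOfSurjective hb
  refine ⟨((LinearMap.ker b).liftQ a h).comp e.symm.toLinearMap, ?_⟩
  ext x
  have : e.symm (b x) = (LinearMap.ker b).mkQ x := by
    rw [LinearEquiv.symm_apply_eq]
    rfl
  simp only [LinearMap.comp_apply, LinearEquiv.coe_coe, this]
  rfl

theorem ker_of_split (hU : Tors U) {B : FDMod k A}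
    (hs : ∀ Y : FDMod k A, U Y → ∀ g : Y.H B, Function.Surjective g →
      (∀ q : Submodule A Y.carrier, U (Y.sub q) → q ≤ LinearMap.ker g → q = ⊥) →
      ∃ σ : B.H Y, g.comp σ = LinearMap.id)
    (Y : FDMod k A) (hY : U Y) (g : Y.H B) (hg : Function.Surjective g) :
    U (Y.sub (LinearMap.ker g)) := by
  obtain ⟨N, ⟨hNU, hNg⟩, hmax⟩ := exists_max_sub Y
    (fun p => U (Y.sub p) ∧ p ≤ LinearMap.ker g)
    ⟨⊥, hU.zero _ (inferInstanceAs (Subsingleton (⊥ : Submodule A Y.carrier))), bot_le⟩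
  let g' : (Y.quo N).H B := N.liftQ g hNg
  have hg'x : ∀ x, g' (N.mkQ x) = g x := fun x => rfl
  have hg' : Function.Surjective g' := by
    intro b
    obtain ⟨y, rfl⟩ := hg b
    exact ⟨N.mkQ y, rfl⟩
  have hY' : U (Y.quo N) := hU.quot (M := Y) N.mkQ N.mkQ_surjective hY
  have hcond : ∀ q : Submodule A (Y.quo N).carrier, U ((Y.quo N).sub q) →
      q ≤ LinearMap.ker g' → q = ⊥ := by
    intro q hq hqg
    let q' : Submodule A Y.carrier := q.comap N.mkQ
    have hNq : N ≤ q' := by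
      intro x hx
      have : N.mkQ x = 0 := by simpa using hx
      change N.mkQ x ∈ q
      rw [this]
      exact q.zero_mem
    have hUq : U (Y.sub q') := by
      let r : (Y.sub q').H ((Y.quo N).sub q) := N.mkQ.restrict (fun x hx => hx)
      refine hU.ext r ?_ hq ?_
      · rintro ⟨z, hz⟩
        obtain ⟨y, rfl⟩ := N.mkQ_surjective z
        exact ⟨⟨y, hz⟩, rfl⟩
      · refine hU.quot (M := Y.sub N) ((Submodule.inclusion hNq).codRestrict _ ?_) ?_ hNU
        · rintro ⟨x, hx⟩
          rw [LinearMap.mem_ker]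
          apply Subtype.ext
          change N.mkQ x = 0
          simpa using hx
        · rintro ⟨⟨x, hx⟩, hxr⟩
          have h1 : N.mkQ x = 0 := congrArg Subtype.val (LinearMap.mem_ker.mp hxr)
          have h2 : x ∈ N := by simpa using h1
          exact ⟨⟨x, h2⟩, rfl⟩
    have hq'g : q' ≤ LinearMap.ker g := by
      intro x hx
      exact hqg (show N.mkQ x ∈ q from hx)
    have hle := hmax q' ⟨hUq, hq'g⟩
    have hEq : N = q' := by
      by_contra hne
      have := sub_dim_lt (lt_of_le_of_ne hNq hne)
      omega
    rw [eq_bot_iff]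
    intro z hz
    obtain ⟨y, rfl⟩ := N.mkQ_surjective z
    have : y ∈ N := by rw [hEq]; exact hz
    simpa using this
  obtain ⟨σ, hσ⟩ := hs _ hY' g' hg' hcond
  have hσ' : ∀ b, g' (σ b) = b := fun b => LinearMap.congr_fun hσ b
  have hker : LinearMap.ker g' = ⊥ := by
    refine hcond _ ?_ le_rfl
    refine hU.quot (M := Y.quo N)
      ((LinearMap.id - σ.comp g').codRestrict (LinearMap.ker g') ?_) ?_ hY'
    rotate_left
    · intro x
      simp [hσ']
    · rintro ⟨x, hx⟩
      refine ⟨x, ?_⟩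
      apply Subtype.ext
      have hx' : g' x = 0 := hx
      change x - σ (g' x) = x
      rw [hx']
      simp
  have : LinearMap.ker g = N := by
    refine le_antisymm ?_ hNg
    intro x hx
    have h1 : N.mkQ x ∈ LinearMap.ker g' := hx
    rw [hker] at h1
    simpa using h1
  rw [this]
  exact hNU

/-- trace of a set of endomorphisms -/
def trS {M : FDMod k A} (I : Submodule k (M.H M)) : Submodule A M.carrier :=
  ⨆ s : I, LinearMap.range s.1

theorem mem_trS {M : FDMod k A} {I : Submodule k (M.H M)} {s : M.H M} (hs : s ∈ I)
    (x : M.carrier) : s x ∈ trS I :=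
  (le_iSup (fun s : I => LinearMap.range s.1) ⟨s, hs⟩) ⟨x, rfl⟩

theorem trS_le {M : FDMod k A} {I : Submodule k (M.H M)} {p : Submodule A M.carrier}
    (h : ∀ s ∈ I, ∀ x, s x ∈ p) : trS I ≤ p := by
  refine iSup_le fun s => ?_
  rintro _ ⟨x, rfl⟩
  exact h s.1 s.2 x

theorem exists_right_ideal {T : FDMod k A → Prop} (hT : Tors T) {M : FDMod k A} (hM : ¬ T M) :
    ∃ I : Submodule k (M.H M), ¬ T (M.quo (trS I)) ∧
      ∀ s, s ∉ I → ∃ t : M.H M, ∃ m ∈ I, s.comp t + m = LinearMap.id := by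
  classical
  let P : Submodule k (M.H M) → Prop := fun I =>
    (∀ s ∈ I, ∀ t : M.H M, s.comp t ∈ I) ∧ ¬ T (M.quo (trS I))
  have hex : ∃ d, ∃ I, P I ∧ finrank k (M.H M ⧸ I) = d := by
    refine ⟨_, ⊥, ⟨?_, ?_⟩, rfl⟩
    · intro s hs t
      rw [Submodule.mem_bot] at hs ⊢
      rw [hs]; rfl
    · intro h
      apply hM
      have h0 : trS (⊥ : Submodule k (M.H M)) = ⊥ := by
        rw [eq_bot_iff]
        apply trS_le
        intro s hs x
        rw [Submodule.mem_bot] at hs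
        simp [hs]
      rw [h0] at h
      exact hT.equiv (M := M.quo ⊥) (Submodule.quotEquivOfEqBot ⊥ rfl) h
  obtain ⟨I, ⟨hI, hIT⟩, hd⟩ := Nat.find_spec hex
  have hmin : ∀ J, (∀ s ∈ J, ∀ t : M.H M, s.comp t ∈ J) →
      finrank k (M.H M ⧸ J) < finrank k (M.H M ⧸ I) → T (M.quo (trS J)) := by
    intro J hJ hlt
    by_contra hc
    have := Nat.find_min' hex ⟨J, ⟨hJ, hc⟩, rfl⟩
    omega
  refine ⟨I, hIT, fun s hs => ?_⟩
  let L : M.H M →ₗ[k] (M.H M ⧸ I) := I.mkQ.comp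
    ({ toFun := fun t => s.comp t
       map_add' := fun a b => LinearMap.comp_add _ _ _
       map_smul' := fun c a => by
        ext x
        simp only [LinearMap.comp_apply, LinearMap.smul_apply, RingHom.id_apply]
        exact (s.restrictScalars k).map_smul c (a x) } : M.H M →ₗ[k] M.H M)
  have hL : ∀ t, L t = I.mkQ (s.comp t) := fun t => rfl
  by_cases hsurj : Function.Surjective L
  · obtain ⟨t, ht⟩ := hsurj (I.mkQ LinearMap.id)
    refine ⟨t, LinearMap.id - s.comp t, ?_, by abel⟩
    rw [hL] at ht
    have := sub_eq_zero.mpr ht.symm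
    rw [← map_sub] at this
    exact (Submodule.Quotient.mk_eq_zero _).mp this
  · exfalso
    apply hIT
    have h1 : T (M.quo (trS (LinearMap.ker L))) := by
      apply hmin
      · intro s' hs' t
        rw [LinearMap.mem_ker, hL] at hs' ⊢
        have hs'' : s.comp s' ∈ I := by simpa using hs'
        have := hI _ hs'' t
        simpa [LinearMap.comp_assoc] using this
      · rw [L.quotKerEquivRange.finrank_eq]
        apply Submodule.finrank_lt
        rwa [Ne, LinearMap.range_eq_top]
    let J : Submodule k (M.H M) := (LinearMap.range L).comap I.mkQ
    have hJ : ∀ x, x ∈ J ↔ ∃ t : M.H M, x - s.comp t ∈ I := by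
      intro x
      constructor
      · rintro ⟨t, ht⟩
        refine ⟨t, ?_⟩
        rw [hL] at ht
        have := sub_eq_zero.mpr ht.symm
        rw [← map_sub] at this
        exact (Submodule.Quotient.mk_eq_zero _).mp this
      · rintro ⟨t, ht⟩
        refine ⟨t, ?_⟩
        rw [hL]
        refine (sub_eq_zero.mp ?_).symm
        rw [← map_sub]
        exact (Submodule.Quotient.mk_eq_zero _).mpr ht
    have h2 : T (M.quo (trS J)) := by
      apply hmin
      · intro x hx t
        obtain ⟨t', ht'⟩ := (hJ x).mp hx
        rw [hJ]
        refine ⟨t'.comp t, ?_⟩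
        have := hI _ ht' t
        rwa [LinearMap.sub_comp, LinearMap.comp_assoc] at this
      · have hlt : I < J := by
          refine lt_of_le_of_ne ?_ ?_
          · intro x hx
            rw [hJ]
            exact ⟨0, by simpa using hx⟩
          · intro he
            apply hs
            rw [he, hJ]
            exact ⟨LinearMap.id, by simp⟩
        have a1 := Submodule.finrank_lt_finrank_of_lt hlt
        have a2 := Submodule.finrank_quotient_add_finrank I
        have a3 := Submodule.finrank_quotient_add_finrank J
        omega
    let φ : M.H (M.quo (trS I)) := (trS I).mkQ.comp s
    have h3 : T ((M.quo (trS I)).sub (LinearMap.range φ)) := by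
      have hle : trS (LinearMap.ker L) ≤ LinearMap.ker φ := by
        apply trS_le
        intro t ht x
        rw [LinearMap.mem_ker, hL] at ht
        have ht' : s.comp t ∈ I := by simpa using ht
        have := mem_trS ht' x
        rw [LinearMap.mem_ker]
        simpa [φ] using this
      have h4 := hT.range (M := M.quo (trS (LinearMap.ker L))) (N := M.quo (trS I))
        (Submodule.liftQ _ φ hle) h1
      rwa [Submodule.range_liftQ] at h4
    refine hT.ext (M := M.quo (trS I)) (N := (M.quo (trS I)).quo (LinearMap.range φ))
      (LinearMap.range φ).mkQ (Submodule.mkQ_surjective _) ?_ ?_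
    · have hle : trS J ≤ LinearMap.ker ((LinearMap.range φ).mkQ.comp (trS I).mkQ) := by
        apply trS_le
        intro x hx y
        obtain ⟨t, ht⟩ := (hJ x).mp hx
        have h5 := mem_trS ht y
        have h6 : (trS I).mkQ (x y) = φ (t y) := by
          refine sub_eq_zero.mp ?_
          change (trS I).mkQ (x y) - (trS I).mkQ (s (t y)) = 0
          rw [← map_sub]
          exact (Submodule.Quotient.mk_eq_zero _).mpr h5
        rw [LinearMap.mem_ker, LinearMap.comp_apply, h6]
        simp
      refine hT.quot (M := M.quo (trS J)) (Submodule.liftQ _ _ hle) ?_ h2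
      intro z
      obtain ⟨z, rfl⟩ := Submodule.mkQ_surjective _ z
      obtain ⟨z, rfl⟩ := Submodule.mkQ_surjective _ z
      exact ⟨(trS J).mkQ z, rfl⟩
    · rw [Submodule.ker_mkQ]
      exact h3

theorem exists_B {T : FDMod k A → Prop} (hT : Tors T) (hU : Tors U) (hTU : ∀ Y, T Y → U Y)
    {M : FDMod k A} {m : M.carrier} (h : MinApprox U M m) (hM : ¬ T M) :
    ∃ B, ASimple U B ∧ ∀ Y, T Y → ∀ g : Y.H B, g = 0 := by
  obtain ⟨I, hIT, hI⟩ := exists_right_ideal hT hM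
  have hItr : U (M.sub (trS I)) := hU.iSup _ fun s => hU.range s.1 h.mem
  let B := M.quo (trS I)
  have hBU : U B := hU.quot (M := M) (trS I).mkQ (Submodule.mkQ_surjective _) h.mem
  have hnt : Nontrivial B.carrier := by
    by_contra hc
    rw [not_nontrivial_iff_subsingleton] at hc
    exact hIT (hT.zero _ hc)
  have hlift : ∀ g : M.H B, g ≠ 0 → ∃ t : M.H M, ∀ x, g (t x) = (trS I).mkQ x := by
    intro g hg
    obtain ⟨s, hs⟩ := (h.ep hU).quo (trS I) hItr g
    have hsI : s ∉ I := by
      intro hsI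
      apply hg
      rw [← hs]
      ext x
      have := mem_trS hsI x
      simpa using this
    obtain ⟨t, a, ha, hta⟩ := hI s hsI
    refine ⟨t, fun x => ?_⟩
    have h1 : s (t x) + a x = x := LinearMap.congr_fun hta x
    have h2 : (trS I).mkQ (a x) = 0 := by simpa using mem_trS ha x
    rw [← hs, LinearMap.comp_apply]
    conv_rhs => rw [← h1, map_add, h2, add_zero]
  have hM' : ∀ Y : FDMod k A, U Y → ∀ g : Y.H B, g ≠ 0 → ∃ c : M.H Y, g.comp c ≠ 0 := by
    intro Y hY g hg
    by_contra hc
    push Not at hc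
    apply hg
    ext y
    obtain ⟨c, rfl⟩ := h.univ Y hY y
    exact LinearMap.congr_fun (hc c) m
  have hsurj : ∀ Y : FDMod k A, U Y → ∀ g : Y.H B, g ≠ 0 → Function.Surjective g := by
    intro Y hY g hg b
    obtain ⟨c, hc⟩ := hM' Y hY g hg
    obtain ⟨t, ht⟩ := hlift _ hc
    obtain ⟨x, rfl⟩ := Submodule.mkQ_surjective _ b
    exact ⟨c (t x), ht x⟩
  refine ⟨B, ⟨hnt, hBU, hsurj, ?_⟩, ?_⟩
  · intro Y hY g hg
    refine ker_of_split hU ?_ Y hY g (hsurj Y hY g hg)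
    intro Y hY g hg hcond
    have hg0 : g ≠ 0 := by
      rintro rfl
      obtain ⟨b, hb⟩ := exists_ne (0 : B.carrier)
      obtain ⟨y, hy⟩ := hg b
      exact hb hy.symm
    obtain ⟨c, hc⟩ := hM' Y hY g hg0
    obtain ⟨t, ht⟩ := hlift _ hc
    have hle : trS I ≤ LinearMap.ker (c.comp t) := by
      apply trS_le
      intro s hs x
      have h1 : LinearMap.range ((c.comp t).comp s) = ⊥ := by
        apply hcond
        · exact hU.range (M := M) (N := Y) ((c.comp t).comp s) h.mem
        · rintro _ ⟨z, rfl⟩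
          have h2 := ht (s z)
          have h3 : (trS I).mkQ (s z) = 0 := by simpa using mem_trS hs z
          rw [LinearMap.mem_ker]
          exact h2.trans h3
      have h4 : ((c.comp t).comp s) x ∈ LinearMap.range ((c.comp t).comp s) := ⟨x, rfl⟩
      rw [h1] at h4
      simpa using h4
    refine ⟨Submodule.liftQ _ _ hle, ?_⟩
    apply LinearMap.ext
    intro x
    obtain ⟨x, rfl⟩ := Submodule.mkQ_surjective _ x
    exact ht x
  · intro Y hY g
    by_contra hg
    exact hIT (hT.quot g (hsurj Y (hTU Y hY) g hg) hY)

theorem fitting {N : FDMod k A} (s : N.H N) : ∃ n : ℕ, 1 ≤ n ∧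
    IsCompl (LinearMap.ker (s ^ n : Module.End A N.carrier))
      (LinearMap.range (s ^ n : Module.End A N.carrier)) := by
  have : IsNoetherian A N.carrier := isNoetherian_of_tower k inferInstance
  have : IsArtinian A N.carrier := isArtinian_of_tower k inferInstance
  obtain ⟨n, hn⟩ := Filter.eventually_atTop.mp
    (LinearMap.eventually_isCompl_ker_pow_range_pow (R := A) (M := N.carrier) s)
  exact ⟨n + 1, by omega, hn (n + 1) (by omega)⟩

structure MinN (U : FDMod k A → Prop) (B N : FDMod k A) (a : N.H B) : Prop where
  mem : U N
  ep : EP U N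
  ne : a ≠ 0
  min : ∀ N' : FDMod k A, U N' → EP U N' → ∀ a' : N'.H B, a' ≠ 0 → N.dim ≤ N'.dim

theorem exists_MinN (hU : Tors U) {M : FDMod k A} {m : M.carrier} (h : MinApprox U M m)
    {B : FDMod k A} (hB : ASimple U B) : ∃ N a, MinN U B N a := by
  obtain ⟨N, ⟨h1, h2, a, ha⟩, hmin⟩ := exists_min_dim
    (fun N => U N ∧ EP U N ∧ ∃ a : N.H B, a ≠ 0) ⟨M, h.mem, h.ep hU, by
      have := hB.nontriv
      obtain ⟨b, hb⟩ := exists_ne (0 : B.carrier)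
      obtain ⟨g, hg⟩ := h.univ B hB.mem b
      refine ⟨g, ?_⟩
      rintro rfl
      exact hb hg.symm⟩
  exact ⟨N, a, h1, h2, ha, fun N' a1 a2 a' ha' => hmin N' ⟨a1, a2, a', ha'⟩⟩

variable {B N : FDMod k A} {a : N.H B}

theorem MinN.top (hU : Tors U) (h : MinN U B N a) {p q : Submodule A N.carrier}
    (hpq : IsCompl p q) {x : N.carrier} (hx : x ∈ p) (hax : a x ≠ 0) : p = ⊤ := by
  apply sub_dim_eq
  refine h.min _ ?_ ?_ (a.comp p.subtype) ?_
  · refine hU.quot (M := N) (p.projectionOnto q hpq) ?_ h.mem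
    intro y
    exact ⟨y, Submodule.projectionOnto_apply_left hpq y⟩
  · exact h.ep.retract (N' := N.sub p) p.subtype (p.projectionOnto q hpq)
      (Submodule.projectionOnto_apply_left hpq)
  · intro h0
    exact hax (LinearMap.congr_fun h0 ⟨x, hx⟩)

theorem MinN.exists_ne (h : MinN U B N a) : ∃ x, a x ≠ 0 := by
  by_contra hc
  push Not at hc
  exact h.ne (LinearMap.ext hc)

theorem pow_comp_eq {s : N.H N} (h : a.comp s = a) (n : ℕ) (x : N.carrier) :
    a ((s ^ n : Module.End A N.carrier) x) = a x := by
  induction n generalizing x with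
  | zero => rfl
  | succ n ih =>
    rw [pow_succ, Module.End.mul_apply, ih]
    exact LinearMap.congr_fun h x

theorem range_pow_le {s : N.H N} {n : ℕ} (hn : 1 ≤ n) :
    LinearMap.range (s ^ n : Module.End A N.carrier) ≤ LinearMap.range s := by
  obtain ⟨n, rfl⟩ : ∃ j, n = j + 1 := ⟨n - 1, by omega⟩
  rintro _ ⟨x, rfl⟩
  rw [pow_succ', Module.End.mul_apply]
  exact ⟨_, rfl⟩

theorem MinN.zero_of (hU : Tors U) (hB : ASimple U B) (h : MinN U B N a) {X : FDMod k A}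
    (hX : ASimple U X) (b : N.H X) {x : N.carrier} (hbx : b x = 0) (hax : a x ≠ 0) : b = 0 := by
  by_contra hb
  have hK := hX.ker N h.mem b hb
  have ha' : (a.comp (LinearMap.ker b).subtype : (N.sub (LinearMap.ker b)).H B) ≠ 0 := by
    intro h0
    exact hax (LinearMap.congr_fun h0 ⟨x, hbx⟩)
  obtain ⟨f, hf⟩ := h.ep (N.sub (LinearMap.ker b)) B (a.comp (LinearMap.ker b).subtype)
    (hB.surj _ hK _ ha') (hB.ker _ hK _ ha') a
  let s : N.H N := (LinearMap.ker b).subtype.comp f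
  have hs : a.comp s = a := hf
  obtain ⟨n, hn, hc⟩ := fitting s
  obtain ⟨y, hy⟩ := h.exists_ne
  have htop := h.top hU hc.symm (x := (s ^ n : Module.End A N.carrier) y) ⟨y, rfl⟩
    (by rwa [pow_comp_eq hs])
  apply hb
  ext z
  have hz : z ∈ LinearMap.range s := range_pow_le hn (by rw [htop]; trivial)
  obtain ⟨w, rfl⟩ := hz
  exact (f w).2

theorem MinN.scalar [IsAlgClosed k] (hU : Tors U) (hB : ASimple U B) (h : MinN U B N a)
    (b : N.H B) : ∃ c : k, b = c • a := by
  by_cases hb : b = 0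
  · exact ⟨0, by simp [hb]⟩
  obtain ⟨φ, hφ⟩ := factor b (hB.surj N h.mem b hb) a (by
    intro x hx
    by_contra hax
    exact hb (h.zero_of hU hB hB b hx hax))
  obtain ⟨c, hc⟩ := hB.brick.2 φ
  have hac : a = c • b := by
    rw [← hφ]
    ext x
    simp [hc]
  have hc0 : c ≠ 0 := by
    rintro rfl
    exact h.ne (by simpa using hac)
  exact ⟨c⁻¹, by rw [hac, smul_smul, inv_mul_cancel₀ hc0, one_smul]⟩

theorem MinN.hom_eq_one [IsAlgClosed k] (hU : Tors U) (hB : ASimple U B) (h : MinN U B N a) :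
    N.hom B = 1 := by
  refine finrank_eq_one (R := k) a h.ne fun b => ?_
  obtain ⟨c, hc⟩ := h.scalar hU hB b
  exact ⟨c, hc.symm⟩

theorem MinN.nilp (hU : Tors U) (h : MinN U B N a) (s : N.H N) (hs : a.comp s = 0) :
    ∃ n : ℕ, (s ^ n : Module.End A N.carrier) = 0 := by
  obtain ⟨n, hn, hc⟩ := fitting s
  obtain ⟨x, hx⟩ := h.exists_ne
  have hr : ∀ z ∈ LinearMap.range (s ^ n : Module.End A N.carrier), a z = 0 := by
    intro z hz
    obtain ⟨w, rfl⟩ := range_pow_le hn hz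
    exact LinearMap.congr_fun hs w
  have hx' : x ∈ LinearMap.ker (s ^ n : Module.End A N.carrier) ⊔
      LinearMap.range (s ^ n : Module.End A N.carrier) := by
    rw [hc.sup_eq_top]; trivial
  obtain ⟨y, hy, z, hz, rfl⟩ := Submodule.mem_sup.mp hx'
  rw [map_add, hr z hz, add_zero] at hx
  have := h.top hU hc hy hx
  exact ⟨n, LinearMap.ker_eq_top.mp this⟩

theorem MinN.bij (hU : Tors U) (h : MinN U B N a) (s : N.H N) (hs : a.comp s = a) :
    Function.Bijective s := by
  obtain ⟨n, hn, hc⟩ := fitting s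
  obtain ⟨y, hy⟩ := h.exists_ne
  have htop := h.top hU hc.symm (x := (s ^ n : Module.End A N.carrier) y) ⟨y, rfl⟩
    (by rwa [pow_comp_eq hs])
  apply bij_of_surj
  rw [← LinearMap.range_eq_top, eq_top_iff, ← htop]
  exact range_pow_le hn

theorem hom_split {N N₁ V : FDMod k A} (i : N₁.H N) (j : N.H N₁) (hij : ∀ x, j (i x) = x) :
    N.hom V = (N.sub (LinearMap.ker j)).hom V + N₁.hom V := by
  let Φ : (N.H V) →ₗ[k] ((N.sub (LinearMap.ker j)).H V) × (N₁.H V) :=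
    { toFun := fun f => (f.comp (LinearMap.ker j).subtype, f.comp i)
      map_add' := fun f g => rfl
      map_smul' := fun c f => rfl }
  let r : N.H (N.sub (LinearMap.ker j)) :=
    (LinearMap.id - i.comp j).codRestrict (LinearMap.ker j) (by intro x; simp [hij])
  have hr : ∀ x, ((r x : N.carrier)) = x - i (j x) := fun x => rfl
  have hb : Function.Bijective Φ := by
    constructor
    · intro f g hfg
      have h1 : f.comp (LinearMap.ker j).subtype = g.comp (LinearMap.ker j).subtype :=
        congrArg Prod.fst hfg
      have h2 : f.comp i = g.comp i := congrArg Prod.snd hfg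
      ext x
      have h3 := LinearMap.congr_fun h1 (r x)
      have h4 := LinearMap.congr_fun h2 (j x)
      simp only [LinearMap.comp_apply, Submodule.subtype_apply, hr, map_sub] at h3 h4
      rw [h4] at h3
      exact sub_left_injective h3
    · rintro ⟨f, g⟩
      refine ⟨f.comp r + g.comp j, ?_⟩
      apply Prod.ext
      · ext x
        have h1 : j x.1 = 0 := x.2
        have h2 : r x.1 = x := by
          apply Subtype.ext
          rw [hr, h1, map_zero, sub_zero]
        change f (r x.1) + g (j x.1) = f x
        rw [h1, h2, map_zero, add_zero]
      · ext x
        have h2 : r (i x) = 0 := by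
          apply Subtype.ext
          rw [hr, hij, sub_self]
          rfl
        change f (r (i x)) + g (j (i x)) = g x
        rw [h2, hij, map_zero, zero_add]
  have := (LinearEquiv.ofBijective Φ hb).finrank_eq
  rw [Module.finrank_prod] at this
  exact this

theorem MinN.decomp [IsAlgClosed k] (hU : Tors U) (hB : ASimple U B) (h : MinN U B N a) :
    ∀ (d : ℕ) (L : FDMod k A), L.dim ≤ d → U L → EP U L →
    ∃ Q : FDMod k A, U Q ∧ EP U Q ∧ (∀ g : Q.H B, g = 0) ∧
      (∀ V : FDMod k A, (∀ g : Q.H V, g = 0) → L.hom V = L.hom B * N.hom V) ∧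
      (∀ (V : FDMod k A) (g : N.H V), (∀ s : N.H N, a.comp s = 0 → g.comp s = 0) →
        (∀ g : Q.H V, g = 0) → ∀ c : L.H N, a.comp c = 0 → g.comp c = 0) := by
  intro d
  induction d with
  | zero =>
    intro L hL hLU hLE
    have hs : Subsingleton L.carrier := finrank_zero_iff.mp (Nat.le_zero.mp hL)
    have h0 : ∀ (V : FDMod k A) (g : L.H V), g = 0 := by
      intro V g
      ext x
      rw [Subsingleton.elim x 0]
      simp
    have h1 : ∀ V, L.hom V = 0 := by
      intro V
      have : Subsingleton (L.H V) := ⟨fun x y => by rw [h0 V x, h0 V y]⟩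
      exact finrank_zero_of_subsingleton
    exact ⟨L, hLU, hLE, h0 B, fun V _ => by rw [h1, h1, zero_mul], fun V g _ _ c _ => h0 _ _⟩
  | succ d ih =>
    intro L hL hLU hLE
    by_cases hLB : ∀ g : L.H B, g = 0
    · have h1 : ∀ V, (∀ g : L.H V, g = 0) → L.hom V = 0 := by
        intro V hV
        have : Subsingleton (L.H V) := ⟨fun x y => by rw [hV x, hV y]⟩
        exact finrank_zero_of_subsingleton
      exact ⟨L, hLU, hLE, hLB, fun V hV => by rw [h1 V hV, h1 B hLB, zero_mul],
        fun V g _ hV c _ => hV _⟩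
    · push Not at hLB
      obtain ⟨b, hb⟩ := hLB
      obtain ⟨i, hi⟩ := h.ep L B b (hB.surj L hLU b hb) (hB.ker L hLU b hb) a
      obtain ⟨j, hj⟩ := hLE N B a (hB.surj N h.mem a h.ne) (hB.ker N h.mem a h.ne) b
      have hbij := h.bij hU (j.comp i) (by rw [← LinearMap.comp_assoc, hj, hi])
      let e := LinearEquiv.ofBijective (j.comp i) hbij
      let j' : L.H N := e.symm.toLinearMap.comp j
      have hji : ∀ x, j' (i x) = x := fun x => e.symm_apply_apply x
      let L' := L.sub (LinearMap.ker j')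
      have hr : ∀ x, x - i (j' x) ∈ LinearMap.ker j' := by
        intro x
        rw [LinearMap.mem_ker, map_sub, hji, sub_self]
      let r : L.H L' := (LinearMap.id - i.comp j').codRestrict (LinearMap.ker j') hr
      have hrr : ∀ x : L'.carrier, r x.1 = x := by
        intro x
        have hx : j' x.1 = 0 := x.2
        apply Subtype.ext
        change x.1 - i (j' x.1) = x.1
        rw [hx, map_zero, sub_zero]
      have hL'U : U L' := hU.quot (M := L) r (fun x => ⟨x.1, hrr x⟩) hLU
      have hL'E : EP U L' := hLE.retract (N' := L') (LinearMap.ker j').subtype r hrr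
      have hne : LinearMap.ker j' ≠ ⊤ := by
        intro htop
        obtain ⟨x, hx⟩ := h.exists_ne
        have : i x ∈ LinearMap.ker j' := by rw [htop]; trivial
        rw [LinearMap.mem_ker, hji] at this
        exact hx (by rw [this, map_zero])
      have hdim := sub_dim_lt_top hne
      obtain ⟨Q, q1, q2, q3, q4, q5⟩ := ih L' (by
        change L'.dim < L.dim at hdim
        omega) hL'U hL'E
      refine ⟨Q, q1, q2, q3, ?_, ?_⟩
      · intro V hV
        have e1 := hom_split (V := V) i j' hji
        have e2 := hom_split (V := B) i j' hji
        rw [h.hom_eq_one hU hB] at e2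
        have e3 := q4 V hV
        rw [e1, e2, e3]
        ring
      · intro V g hg hV c hc
        have c1 := q5 V g hg hV (c.comp (LinearMap.ker j').subtype) (by
          rw [← LinearMap.comp_assoc, hc, LinearMap.zero_comp])
        have c2 := hg (c.comp i) (by
          rw [← LinearMap.comp_assoc, hc, LinearMap.zero_comp])
        ext x
        have d1 : g (c (x - i (j' x))) = 0 := LinearMap.congr_fun c1 ⟨_, hr x⟩
        have d2 : g (c (i (j' x))) = 0 := LinearMap.congr_fun c2 (j' x)
        rw [map_sub, map_sub, d2, sub_zero] at d1
        exact d1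

theorem MinN.socle (hU : Tors U) (h : MinN U B N a) {V : FDMod k A} (g : N.H V) (hg : g ≠ 0) :
    ∃ g : N.H V, g ≠ 0 ∧ ∀ s : N.H N, a.comp s = 0 → g.comp s = 0 := by
  classical
  let Lg : N.H V → (N.H N →ₗ[k] N.H V) := fun g =>
    { toFun := fun t => g.comp t
      map_add' := fun a b => LinearMap.comp_add _ _ _
      map_smul' := fun c a => by
        ext x
        simp only [LinearMap.comp_apply, LinearMap.smul_apply, RingHom.id_apply]
        exact (g.restrictScalars k).map_smul c (a x) }
  have hex : ∃ d, ∃ g : N.H V, g ≠ 0 ∧ finrank k (LinearMap.range (Lg g)) = d := ⟨_, g, hg, rfl⟩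
  obtain ⟨g, hg, hd⟩ := Nat.find_spec hex
  refine ⟨g, hg, fun s hs => ?_⟩
  by_contra hgs
  have hmin := Nat.find_min' hex ⟨g.comp s, hgs, rfl⟩
  rw [← hd] at hmin
  have hle : LinearMap.range (Lg (g.comp s)) ≤ LinearMap.range (Lg g) := by
    rintro _ ⟨t, rfl⟩
    exact ⟨s.comp t, rfl⟩
  have heq := Submodule.eq_of_le_of_finrank_le hle hmin
  have hgm : g ∈ LinearMap.range (Lg g) := ⟨LinearMap.id, rfl⟩
  rw [← heq] at hgm
  obtain ⟨t, ht⟩ := hgm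
  have ht' : g.comp (s.comp t) = g := ht
  obtain ⟨n, hn⟩ := h.nilp hU (s.comp t) (by
    rw [← LinearMap.comp_assoc, hs, LinearMap.zero_comp])
  apply hg
  ext x
  rw [← pow_comp_eq (a := g) ht' n x, hn]
  simp

theorem Tors.pow (h : Tors U) {G : FDMod k A} (hG : U G) (r : ℕ) : U (G.pow r) := by
  have h1 : U ((G.pow r).sub
      (⨆ i, LinearMap.range (LinearMap.single A (fun _ : Fin r => G.carrier) i))) :=
    h.iSup (M := G.pow r) _ fun i => h.range (M := G) (N := G.pow r) _ hG
  rw [LinearMap.iSup_range_single] at h1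
  exact h.top.mp h1

theorem approx_of_gen (hU : Tors U) {G : FDMod k A} (hG : U G)
    (hgen : ∀ Z, U Z → (⨆ h : G.H Z, LinearMap.range h) = ⊤) : ∃ M m, Approx U M m := by
  classical
  let b := Module.finBasis k G.carrier
  refine ⟨G.pow (finrank k G.carrier), fun i => b i, hU.pow hG _, fun Z hZ y => ?_⟩
  have hy : y ∈ (⨆ h : G.H Z, LinearMap.range h) := by rw [hgen Z hZ]; trivial
  induction hy using Submodule.iSup_induction' with
  | mem i x hx =>
    obtain ⟨g, rfl⟩ := hx
    refine ⟨∑ j, (b.repr g j) • (i.comp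
      (LinearMap.proj (R := A) (φ := fun _ : Fin (finrank k G.carrier) => G.carrier) j)), ?_⟩
    conv_rhs => rw [← b.sum_repr g]
    rw [LinearMap.sum_apply, map_sum]
    refine Finset.sum_congr rfl fun j _ => ?_
    simp only [LinearMap.smul_apply, LinearMap.comp_apply, LinearMap.proj_apply]
    exact ((i.restrictScalars k).map_smul _ _).symm
  | zero => exact ⟨0, rfl⟩
  | add x y _ _ hx hy =>
    obtain ⟨f, rfl⟩ := hx
    obtain ⟨g, rfl⟩ := hy
    exact ⟨f + g, rfl⟩

theorem eval_dim {M : FDMod k A} {m : M.carrier} (h : Approx U M m) {V : FDMod k A} (hV : U V) :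
    V.dim + (coker M m).hom V = M.hom V := by
  let ev : M.H V →ₗ[k] V.carrier :=
    { toFun := fun f => f m
      map_add' := fun _ _ => rfl
      map_smul' := fun _ _ => rfl }
  let Φ : (coker M m).H V →ₗ[k] M.H V :=
    { toFun := fun f => f.comp (Submodule.mkQ _)
      map_add' := fun _ _ => rfl
      map_smul' := fun _ _ => rfl }
  have h1 := LinearMap.finrank_range_add_finrank_ker ev
  have h2 : LinearMap.range ev = ⊤ := by
    rw [eq_top_iff]
    intro y _
    obtain ⟨f, hf⟩ := h.univ V hV y
    exact ⟨f, hf⟩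
  have h3 : Function.Injective Φ := by
    intro f g hfg
    apply LinearMap.ext
    intro x
    obtain ⟨x, rfl⟩ := Submodule.mkQ_surjective _ x
    exact LinearMap.congr_fun hfg x
  have h4 : LinearMap.range Φ = LinearMap.ker ev := by
    apply le_antisymm
    · rintro _ ⟨f, rfl⟩
      change f ((Submodule.span A {m}).mkQ m) = 0
      have : (Submodule.span A {m}).mkQ m = 0 := by
        simp [Submodule.mem_span_singleton_self]
      rw [this, map_zero]
    · intro f hf
      refine ⟨Submodule.liftQ _ f ?_, ?_⟩
      · rw [Submodule.span_singleton_le_iff_mem]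
        exact hf
      · apply LinearMap.ext
        intro x
        rfl
  rw [h2, finrank_top, ← h4, LinearMap.finrank_range_of_inj h3] at h1
  exact h1

def perpIn (U : FDMod k A → Prop) (B : FDMod k A) : FDMod k A → Prop :=
  fun Y => U Y ∧ ∀ g : Y.H B, g = 0

theorem Tors.perp (hU : Tors U) (B : FDMod k A) : Tors (perpIn U B) where
  quot := fun {M N} g hg hM => ⟨hU.quot g hg hM.1, fun f => by
    ext x
    obtain ⟨y, rfl⟩ := hg x
    exact LinearMap.congr_fun (hM.2 (f.comp g)) y⟩
  ext := fun {M N} g hg hN hK => ⟨hU.ext g hg hN.1 hK.1, fun f => by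
    obtain ⟨φ, hφ⟩ := factor g hg f (by
      intro x hx
      exact LinearMap.congr_fun (hK.2 (f.comp (LinearMap.ker g).subtype)) ⟨x, hx⟩)
    rw [← hφ, hN.2 φ, LinearMap.zero_comp]⟩
  zero := fun M hM => ⟨hU.zero M hM, fun g => by
    ext x
    rw [Subsingleton.elim x 0]
    simp⟩

theorem hom_zero {M V : FDMod k A} (h : ∀ g : M.H V, g = 0) : M.hom V = 0 := by
  have : Subsingleton (M.H V) := ⟨fun x y => by rw [h x, h y]⟩
  exact finrank_zero_of_subsingleton

theorem hom_zero' {M V : FDMod k A} (h : M.hom V = 0) (g : M.H V) : g = 0 := by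
  have : Subsingleton (M.H V) := finrank_zero_iff.mp h
  exact Subsingleton.elim _ _

theorem mutation [IsAlgClosed k] (hU : Tors U) {M : FDMod k A} {m : M.carrier}
    (h : MinApprox U M m) {B : FDMod k A} (hB : ASimple U B) :
    ∃ M m, Approx (perpIn U B) M m := by
  obtain ⟨N, a, hN⟩ := exists_MinN hU h hB
  obtain ⟨Q, q1, q2, q3, q4, q5⟩ := hN.decomp hU hB M.dim M le_rfl h.mem (h.ep hU)
  let G := Q.prod (coker M m)
  have hGU : U G := hU.prod q1 (h.mem_coker hU)
  have hGE : EP U G := q2.prod (h.ep_coker hU)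
  have hGB : ∀ g : G.H B, g = 0 := by
    intro g
    ext x
    · exact LinearMap.congr_fun (q3 (g.comp (LinearMap.inl A _ _))) x
    · exact LinearMap.congr_fun
        (ASimple.hom_coker h hB (g.comp (LinearMap.inr A _ _))) _
  have hBdim : B.dim = M.hom B := by
    have := eval_dim h.toApprox hB.mem
    rw [hom_zero (ASimple.hom_coker h hB)] at this
    exact this
  have hno : ∀ V : FDMod k A, U V → (∀ g : V.H B, g = 0) → (∀ g : G.H V, g = 0) →
      Subsingleton V.carrier := by
    intro V0 h1 h2 h3
    by_contra hV0
    obtain ⟨V, ⟨v1, v2, v3, v4⟩, hmin⟩ := exists_min_dim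
      (fun V => U V ∧ (∀ g : V.H B, g = 0) ∧ (∀ g : G.H V, g = 0) ∧ ¬ Subsingleton V.carrier)
      ⟨V0, h1, h2, h3, hV0⟩
    have vQ : ∀ g : Q.H V, g = 0 := by
      intro g
      ext x
      exact LinearMap.congr_fun (v3 (LinearMap.coprod g 0)) (x, 0) |> fun h => by simpa using h
    have vC : ∀ g : (coker M m).H V, g = 0 := by
      intro g
      apply LinearMap.ext
      intro x
      have := LinearMap.congr_fun (v3 (LinearMap.coprod 0 g)) (0, x)
      simpa using this
    have hVdim : V.dim = B.dim * N.hom V := by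
      have := eval_dim h.toApprox v1
      rw [hom_zero vC, q4 V vQ, ← hBdim] at this
      exact this
    have hV0 : V.dim ≠ 0 := fun h0 => v4 (finrank_zero_iff.mp h0)
    have hNV : ¬ ∀ g : N.H V, g = 0 := by
      intro h0
      rw [hom_zero h0, mul_zero] at hVdim
      exact hV0 hVdim
    push Not at hNV
    obtain ⟨g0, hg0⟩ := hNV
    obtain ⟨g, hg, hgs⟩ := hN.socle hU g0 hg0
    have hker : LinearMap.ker a ≤ LinearMap.ker g := by
      intro x hx
      obtain ⟨c, hc⟩ := h.univ _ (hB.ker N hN.mem a hN.ne) ⟨x, hx⟩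
      have := q5 V g hgs vQ ((LinearMap.ker a).subtype.comp c) (by
        ext y
        exact (c y).2)
      have := LinearMap.congr_fun this m
      simp only [LinearMap.comp_apply, hc] at this
      exact this
    have hrU : U (V.sub (LinearMap.range g)) := hU.range g hN.mem
    have hsurj : LinearMap.range g = ⊤ := by
      by_contra hr
      have hlt := hmin (V.quo (LinearMap.range g)) ⟨?_, ?_, ?_, ?_⟩
      · have h5 := dim_quo (LinearMap.range g)
        have h6 : (V.sub (LinearMap.range g)).dim ≠ 0 := by
          intro h0
          have : Subsingleton (LinearMap.range g) := finrank_zero_iff.mp h0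
          apply hg
          ext x
          exact congrArg Subtype.val (Subsingleton.elim (⟨g x, x, rfl⟩ : LinearMap.range g) 0)
        omega
      · exact hU.quot (M := V) _ (Submodule.mkQ_surjective _) v1
      · intro f
        apply LinearMap.ext
        intro x
        obtain ⟨x, rfl⟩ := Submodule.mkQ_surjective _ x
        exact LinearMap.congr_fun (v2 (f.comp (Submodule.mkQ _))) x
      · intro f
        obtain ⟨f', rfl⟩ := hGE.quo _ hrU f
        rw [v3 f', LinearMap.comp_zero]
      · rw [Submodule.Quotient.subsingleton_iff]
        exact hr
    have e1 := dim_ker_range g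
    have e2 := dim_ker_range a
    rw [hsurj] at e1
    rw [LinearMap.range_eq_top.mpr (hB.surj N hN.mem a hN.ne)] at e2
    have e3 : (V.sub ⊤).dim = V.dim := (Submodule.topEquiv.restrictScalars k).finrank_eq
    have e4 : (B.sub ⊤).dim = B.dim := (Submodule.topEquiv.restrictScalars k).finrank_eq
    have hle : B.dim ≤ V.dim := by
      rw [hVdim]
      refine Nat.le_mul_of_pos_right _ (Nat.pos_of_ne_zero fun h0 => ?_)
      exact hg (hom_zero' h0 g)
    have hker' : LinearMap.ker g = LinearMap.ker a := by
      by_contra hne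
      have := sub_dim_lt (lt_of_le_of_ne hker (Ne.symm hne))
      omega
    obtain ⟨φ, hφ⟩ := factor g (LinearMap.range_eq_top.mp hsurj) a hker'.le
    apply hN.ne
    rw [← hφ, v2 φ, LinearMap.zero_comp]
  refine approx_of_gen (hU.perp B) (G := G) ⟨hGU, hGB⟩ fun Z hZ => ?_
  have hW : U (Z.sub (⨆ h : G.H Z, LinearMap.range h)) := hU.iSup _ fun g => hU.range g hGU
  have hZ' := (hU.perp B).quot (M := Z) (N := Z.quo (⨆ h : G.H Z, LinearMap.range h)) _
    (Submodule.mkQ_surjective _) hZ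
  rw [← Submodule.Quotient.subsingleton_iff]
  refine hno (Z.quo (⨆ h : G.H Z, LinearMap.range h)) hZ'.1 hZ'.2 fun f => ?_
  obtain ⟨f', rfl⟩ := hGE.quo _ hW f
  apply LinearMap.ext
  intro x
  simp only [LinearMap.comp_apply, Submodule.mkQ_apply, LinearMap.zero_apply]
  rw [Submodule.Quotient.mk_eq_zero]
  exact (le_iSup (fun h : G.H Z => LinearMap.range h) f') ⟨x, rfl⟩

theorem approx_of_tors [IsAlgClosed k] [FiniteDimensional k A] (hbf : BrickFinite k A)
    {T : FDMod k A → Prop} (hT : Tors T) : ∃ M m, Approx T M m := by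
  classical
  obtain ⟨r, f, hf⟩ := hbf
  let P : (FDMod k A → Prop) → Prop := fun U =>
    Tors U ∧ (∀ Y, T Y → U Y) ∧ ∃ M m, Approx U M m
  have hex : ∃ d, ∃ U, P U ∧ (Finset.univ.filter fun i => U (f i)).card = d := by
    refine ⟨_, fun _ => True, ⟨⟨fun _ _ _ => trivial, fun _ _ _ _ => trivial, fun _ _ => trivial⟩,
      fun _ _ => trivial, ⟨A⟩, (1 : A), trivial, fun Y _ y => ?_⟩, rfl⟩
    exact ⟨LinearMap.toSpanSingleton A Y.carrier y, by simp⟩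
  obtain ⟨U, ⟨hU, hTU, hA⟩, hd⟩ := Nat.find_spec hex
  obtain ⟨M, m, hM⟩ := Approx.exists_min hU hA
  by_cases hTM : T M
  · refine ⟨M, m, hTM, fun Y hY y => hM.univ Y (hTU Y hY) y⟩
  exfalso
  obtain ⟨B, hB, hTB⟩ := exists_B hT hU hTU hM hTM
  have hmin := Nat.find_min' hex ⟨perpIn U B, ⟨hU.perp B, fun Y hY => ⟨hTU Y hY, hTB Y hY⟩,
    mutation hU hM hB⟩, rfl⟩
  rw [← hd] at hmin
  obtain ⟨i, ⟨e⟩⟩ := hf B hB.brick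
  refine absurd hmin (not_le.mpr (Finset.card_lt_card ?_))
  rw [Finset.ssubset_iff_of_subset]
  · refine ⟨i, ?_, ?_⟩
    · simp only [Finset.mem_filter, Finset.mem_univ, true_and]
      exact hU.equiv e hB.mem
    · simp only [Finset.mem_filter, Finset.mem_univ, true_and]
      intro hc
      have h0 := hc.2 e.symm.toLinearMap
      have := hB.nontriv
      obtain ⟨b, hb⟩ := exists_ne (0 : B.carrier)
      apply hb
      have := LinearMap.congr_fun h0 (e b)
      simpa using this
  · intro j hj
    simp only [Finset.mem_filter, Finset.mem_univ, true_and] at hj ⊢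
    exact hj.1

/-- the smallest torsion class containing the family -/
def Tcl {n : ℕ} (X : Fin n → FDMod k A) : FDMod k A → Prop := fun Y =>
  ∀ F : FDMod k A, (∀ i (g : (X i).H F), g = 0) → ∀ g : Y.H F, g = 0

theorem tors_Tcl {n : ℕ} (X : Fin n → FDMod k A) : Tors (Tcl X) where
  quot := fun {M N} g hg hM F hF f => by
    ext x
    obtain ⟨y, rfl⟩ := hg x
    exact LinearMap.congr_fun (hM F hF (f.comp g)) y
  ext := fun {M N} g hg hN hK F hF f => by
    obtain ⟨φ, hφ⟩ := factor g hg f (by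
      intro x hx
      exact LinearMap.congr_fun (hK F hF (f.comp (LinearMap.ker g).subtype)) ⟨x, hx⟩)
    rw [← hφ, hN F hF φ, LinearMap.zero_comp]
  zero := fun M hM F hF g => by
    ext x
    rw [Subsingleton.elim x 0]
    simp

theorem mem_Tcl {n : ℕ} (X : Fin n → FDMod k A) (i : Fin n) : Tcl X (X i) :=
  fun _ hF g => hF i g

theorem Tcl.exists_hom {n : ℕ} {X : Fin n → FDMod k A} {Y : FDMod k A} (hY : Tcl X Y)
    {y : Y.carrier} (hy : y ≠ 0) : ∃ i, ∃ g : (X i).H Y, g ≠ 0 := by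
  by_contra hc
  push Not at hc
  exact hy (LinearMap.congr_fun (hY Y hc LinearMap.id) y)

theorem brick_scalar {B : FDMod k A} (hB : B.IsBrick) (g : B.H B) (hg : g ≠ 0) :
    ∃ c : k, c ≠ 0 ∧ ∀ x, g x = c • x := by
  obtain ⟨c, hc⟩ := hB.2 g
  refine ⟨c, ?_, hc⟩
  rintro rfl
  exact hg (LinearMap.ext fun x => by simp [hc])

theorem asimple_X {n : ℕ} {X : Fin n → FDMod k A} (hbrick : ∀ i, (X i).IsBrick)
    (horth : ∀ i j, i ≠ j → (X i).HomOrth (X j)) (i : Fin n) : ASimple (Tcl X) (X i) := by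
  have hT := tors_Tcl X
  have hij : ∀ j, ∀ g : (X j).H (X i), g ≠ 0 → j = i := by
    intro j g hg
    by_contra hne
    exact hg ((horth j i hne).1 g)
  have hsurj : ∀ Y : FDMod k A, Tcl X Y → ∀ g : Y.H (X i), g ≠ 0 → Function.Surjective g := by
    intro Y hY g hg
    obtain ⟨y, hy⟩ : ∃ y, g y ≠ 0 := by
      by_contra hc
      push Not at hc
      exact hg (LinearMap.ext hc)
    have hr := hT.range g hY
    obtain ⟨j, s, hs⟩ := hr.exists_hom (y := ⟨g y, y, rfl⟩) (by
      intro h0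
      exact hy (congrArg Subtype.val h0))
    have hs' : (LinearMap.range g).subtype.comp s ≠ 0 := by
      intro h0
      apply hs
      ext x
      exact LinearMap.congr_fun h0 x
    obtain rfl := hij j _ hs'
    obtain ⟨c, hc, hcx⟩ := brick_scalar (hbrick j) _ hs'
    intro x
    have h1 := hcx (c⁻¹ • x)
    rw [smul_smul, mul_inv_cancel₀ hc, one_smul] at h1
    have h2 := (s (c⁻¹ • x)).2
    simp only [LinearMap.comp_apply, Submodule.subtype_apply] at h1
    rw [h1] at h2
    exact h2
  refine ⟨(hbrick i).1, mem_Tcl X i, hsurj, fun Y hY g hg => ?_⟩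
  refine ker_of_split hT ?_ Y hY g (hsurj Y hY g hg)
  clear hg hY g Y
  intro Y hY g hg hq
  have := (hbrick i).1
  obtain ⟨x, hx⟩ := exists_ne (0 : (X i).carrier)
  obtain ⟨y, rfl⟩ := hg x
  obtain ⟨j, s, hs⟩ := hY.exists_hom (y := y) (by
    rintro rfl
    exact hx (map_zero g))
  have hgs : g.comp s ≠ 0 := by
    intro h0
    have h1 := hq _ (hT.range s (mem_Tcl X j)) (by
      rintro _ ⟨z, rfl⟩
      exact LinearMap.congr_fun h0 z)
    exact hs (LinearMap.range_eq_bot.mp h1)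
  obtain rfl := hij j _ hgs
  obtain ⟨c, hc, hcx⟩ := brick_scalar (hbrick j) _ hgs
  refine ⟨c⁻¹ • s, ?_⟩
  ext z
  have h1 := hcx z
  simp only [LinearMap.comp_apply, LinearMap.smul_apply, LinearMap.id_apply] at h1 ⊢
  have h2 : g (c⁻¹ • s z) = c⁻¹ • g (s z) := (g.restrictScalars k).map_smul _ _
  rw [h2, h1, smul_smul, inv_mul_cancel₀ hc, one_smul]

/-- projectives -/
abbrev Pj (P : FDMod k A) : Prop := EP (fun _ => True) P

def postc (P : FDMod k A) {Y Z : FDMod k A} (i : Y.H Z) : P.H Y →ₗ[k] P.H Z where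
  toFun f := i.comp f
  map_add' f g := LinearMap.comp_add _ _ _
  map_smul' c f := by
    ext x
    exact (i.restrictScalars k).map_smul c (f x)

def prec {P Q : FDMod k A} (i : P.H Q) (Z : FDMod k A) : Q.H Z →ₗ[k] P.H Z where
  toFun f := f.comp i
  map_add' f g := rfl
  map_smul' c f := rfl

theorem hom_le (P : FDMod k A) {Y Z : FDMod k A} (i : Y.H Z) (hi : Function.Injective i) :
    P.hom Y ≤ P.hom Z := by
  apply LinearMap.finrank_le_finrank_of_injective (f := postc P i)
  intro f g h
  ext x
  exact hi (LinearMap.congr_fun h x)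

theorem hom_iso (P : FDMod k A) {Y Z : FDMod k A} (h : Y.Iso Z) : P.hom Y = P.hom Z := by
  obtain ⟨e⟩ := h
  exact le_antisymm (hom_le P e.toLinearMap e.injective) (hom_le P e.symm.toLinearMap e.symm.injective)

theorem hom_exact {P : FDMod k A} (hP : Pj P) {Y : FDMod k A} (p : Submodule A Y.carrier) :
    P.hom Y = P.hom (Y.quo p) + P.hom (Y.sub p) := by
  have h1 := LinearMap.finrank_range_add_finrank_ker (postc P (Y := Y) (Z := Y.quo p) p.mkQ)
  have h2 : LinearMap.range (postc P (Y := Y) (Z := Y.quo p) p.mkQ) = ⊤ := by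
    rw [eq_top_iff]
    intro f _
    obtain ⟨g, hg⟩ := hP.quo p trivial f
    exact ⟨g, hg⟩
  have h3 : Function.Injective (postc P (Y := Y.sub p) (Z := Y) p.subtype) := by
    intro f g h
    ext x
    exact LinearMap.congr_fun h x
  have h4 : LinearMap.range (postc P (Y := Y.sub p) (Z := Y) p.subtype) =
      LinearMap.ker (postc P (Y := Y) (Z := Y.quo p) p.mkQ) := by
    apply le_antisymm
    · rintro _ ⟨f, rfl⟩
      apply LinearMap.ext
      intro x
      exact (Submodule.Quotient.mk_eq_zero p).mpr (f x).2
    · intro f hf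
      refine ⟨f.codRestrict p fun x => ?_, ?_⟩
      · exact (Submodule.Quotient.mk_eq_zero p).mp (LinearMap.congr_fun hf x)
      · rfl
  rw [h2, finrank_top, ← h4, LinearMap.finrank_range_of_inj h3] at h1
  exact h1.symm

theorem comp_vec {n : ℕ} (S : Fin n → FDMod k A)
    (hS : ∀ T : FDMod k A, IsSimpleModule A T.carrier → ∃ i, T.Iso (S i)) :
    ∀ (d : ℕ) (Y : FDMod k A), Y.dim ≤ d → ∃ v : Fin n → ℕ, ∀ P : FDMod k A, Pj P →
      P.hom Y = ∑ s, v s * P.hom (S s) := by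
  classical
  intro d
  induction d with
  | zero =>
    intro Y hY
    have hs : Subsingleton Y.carrier := finrank_zero_iff.mp (Nat.le_zero.mp hY)
    refine ⟨0, fun P _ => ?_⟩
    rw [hom_zero fun g => LinearMap.ext fun x => Subsingleton.elim _ _]
    simp
  | succ d ih =>
    intro Y hY
    by_cases hs : Subsingleton Y.carrier
    · refine ⟨0, fun P _ => ?_⟩
      rw [hom_zero fun g => LinearMap.ext fun x => Subsingleton.elim _ _]
      simp
    · rw [not_subsingleton_iff_nontrivial] at hs
      have : IsArtinian A Y.carrier := isArtinian_of_tower k inferInstance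
      obtain ⟨p, hp⟩ := IsAtomic.exists_atom (Submodule A Y.carrier)
      have hsim : IsSimpleModule A p := isSimpleModule_iff_isAtom.mpr hp
      obtain ⟨i, hi⟩ := hS (Y.sub p) hsim
      have h1 := dim_quo p
      have h2 : (Y.sub p).dim ≠ 0 := by
        intro h0
        have h3 : Subsingleton p := finrank_zero_iff.mp h0
        exact hp.1 ((Submodule.subsingleton_iff_eq_bot).mp h3)
      obtain ⟨v, hv⟩ := ih (Y.quo p) (by omega)
      refine ⟨v + Pi.single i 1, fun P hP => ?_⟩
      rw [hom_exact hP p, hv P hP, hom_iso P hi]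
      simp [add_mul, Finset.sum_add_distrib, Pi.single_apply]

theorem exists_free [FiniteDimensional k A] (Y : FDMod k A) :
    ∃ P : FDMod k A, Pj P ∧ ∃ π : P.H Y, Function.Surjective π := by
  let b := Module.finBasis k Y.carrier
  let F : FDMod k A := ⟨A⟩
  refine ⟨F.pow (finrank k Y.carrier), ?_, Fintype.linearCombination A b, ?_⟩
  · intro Z W p hp _ g
    exact Module.projective_lifting_property
      (P := Fin (finrank k Y.carrier) → A) p g hp
  · intro y
    refine ⟨fun i => algebraMap k A (b.repr y i), ?_⟩
    rw [Fintype.linearCombination_apply]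
    simp only [algebraMap_smul]
    exact b.sum_repr y

theorem proj_cover [FiniteDimensional k A] (P₀ : FDMod k A) (Ω : Submodule A P₀.carrier) :
    ∃ P₁ : FDMod k A, Pj P₁ ∧ ∃ q : P₁.H P₀, LinearMap.range q = Ω ∧
      ∀ L : Submodule A P₁.carrier, LinearMap.ker q ⊔ L = ⊤ → L = ⊤ := by
  obtain ⟨P, ⟨hP, q, hq⟩, hmin⟩ := exists_min_dim
    (fun P => Pj P ∧ ∃ q : P.H P₀, LinearMap.range q = Ω) (by
      obtain ⟨P, hP, π, hπ⟩ := exists_free (P₀.sub Ω)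
      refine ⟨P, hP, Ω.subtype.comp π, ?_⟩
      rw [LinearMap.range_comp_of_range_eq_top _ (LinearMap.range_eq_top.mpr hπ),
        Submodule.range_subtype])
  refine ⟨P, hP, q, hq, fun L hL => ?_⟩
  let ρ : (P.sub (LinearMap.ker q)).H (P.quo L) := L.mkQ.comp (LinearMap.ker q).subtype
  have hρ : Function.Surjective ρ := by
    intro x
    obtain ⟨x, rfl⟩ := Submodule.mkQ_surjective _ x
    have hx : x ∈ LinearMap.ker q ⊔ L := by rw [hL]; trivial
    obtain ⟨y, hy, z, hz, rfl⟩ := Submodule.mem_sup.mp hx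
    refine ⟨⟨y, hy⟩, ?_⟩
    rw [map_add]
    have : L.mkQ z = 0 := (Submodule.Quotient.mk_eq_zero L).mpr hz
    rw [this, add_zero]
    rfl
  obtain ⟨f, hf⟩ := hP _ _ ρ hρ trivial L.mkQ
  let s : P.H P := (LinearMap.ker q).subtype.comp f
  have hsL : ∀ x, x - s x ∈ L := by
    intro x
    rw [← Submodule.Quotient.mk_eq_zero L, Submodule.Quotient.mk_sub, sub_eq_zero]
    exact (LinearMap.congr_fun hf x).symm
  obtain ⟨n, hn, hc⟩ := fitting s
  have htop : LinearMap.ker (s ^ n : Module.End A P.carrier) = ⊤ := by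
    apply sub_dim_eq
    apply hmin
    refine ⟨?_, q.comp (Submodule.subtype _), ?_⟩
    · exact hP.retract (N' := P.sub _) (Submodule.subtype _) (Submodule.projectionOnto _ _ hc)
        (Submodule.projectionOnto_apply_left hc)
    · rw [← hq]
      apply le_antisymm
      · rintro _ ⟨x, rfl⟩
        exact ⟨x.1, rfl⟩
      · rintro _ ⟨x, rfl⟩
        have hx : x ∈ LinearMap.ker (s ^ n : Module.End A P.carrier) ⊔
            LinearMap.range (s ^ n : Module.End A P.carrier) := by
          rw [hc.sup_eq_top]; trivial
        obtain ⟨y, hy, z, hz, rfl⟩ := Submodule.mem_sup.mp hx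
        obtain ⟨w, rfl⟩ := range_pow_le hn hz
        refine ⟨⟨y, hy⟩, ?_⟩
        have : q (s w) = 0 := (f w).2
        rw [map_add, this, add_zero]
        rfl
  have hpow : ∀ j : ℕ, ∀ x, x - (s ^ j : Module.End A P.carrier) x ∈ L := by
    intro j
    induction j with
    | zero => intro x; simp
    | succ j ih =>
      intro x
      have := L.add_mem (hsL x) (ih (s x))
      rw [pow_succ, Module.End.mul_apply]
      simpa using this
  rw [eq_top_iff]
  intro x _
  have h1 := hpow n x
  have h2 : x ∈ LinearMap.ker (s ^ n : Module.End A P.carrier) := by rw [htop]; trivial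
  rw [LinearMap.mem_ker.mp h2, sub_zero] at h1
  exact h1

theorem extend_map (hU : Tors U) {N P₀ P₁ Y : FDMod k A} (hN : EP U N) (hP₀ : Pj P₀)
    (π : P₀.H N) (hπ : Function.Surjective π) (q : P₁.H P₀)
    (hq : LinearMap.range q = LinearMap.ker π)
    (hK : ∀ L : Submodule A P₁.carrier, LinearMap.ker q ⊔ L = ⊤ → L = ⊤)
    (hY : U Y) (h : P₁.H Y) : ∃ e : P₀.H Y, e.comp q = h := by
  classical
  have hex : ∃ d, ∃ e : P₀.H Y, (Y.sub (LinearMap.range (h - e.comp q))).dim = d := ⟨_, 0, rfl⟩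
  obtain ⟨e₀, he₀⟩ := Nat.find_spec hex
  have hmin : ∀ e : P₀.H Y, (Y.sub (LinearMap.range (h - e₀.comp q))).dim ≤
      (Y.sub (LinearMap.range (h - e.comp q))).dim := by
    intro e
    rw [he₀]
    exact Nat.find_min' hex ⟨e, rfl⟩
  set h' : P₁.H Y := h - e₀.comp q with hh'
  let R : Submodule A (P₀.prod Y).carrier := LinearMap.range (q.prod (-h'))
  have hRmem : ∀ w, (q w, - h' w) ∈ R := fun w => ⟨w, rfl⟩
  have hqπ : ∀ w, π (q w) = 0 := by
    intro w
    have : q w ∈ LinearMap.ker π := hq ▸ ⟨w, rfl⟩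
    exact this
  have hR : R ≤ LinearMap.ker (π.comp (LinearMap.fst A P₀.carrier Y.carrier)) := by
    rintro _ ⟨w, rfl⟩
    exact hqπ w
  let Z := (P₀.prod Y).quo R
  let p : Z.H N := R.liftQ _ hR
  have hpa : ∀ x y, p (R.mkQ (x, y)) = π x := fun x y => rfl
  have hp : Function.Surjective p := by
    intro x
    obtain ⟨x, rfl⟩ := hπ x
    exact ⟨R.mkQ (x, 0), hpa _ _⟩
  let ι : Y.H (Z.sub (LinearMap.ker p)) :=
    (R.mkQ.comp (LinearMap.inr A P₀.carrier Y.carrier)).codRestrict _ (by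
      intro y
      change π 0 = 0
      exact map_zero π)
  have hιa : ∀ y, ((ι y : Z.carrier)) = R.mkQ (0, y) := fun y => rfl
  have hι : Function.Surjective ι := by
    rintro ⟨z, hz⟩
    obtain ⟨⟨x, y⟩, rfl⟩ := Submodule.mkQ_surjective _ z
    have hx : x ∈ LinearMap.ker π := hz
    rw [← hq] at hx
    obtain ⟨w, rfl⟩ := hx
    refine ⟨y + h' w, Subtype.ext ?_⟩
    rw [hιa]
    rw [← sub_eq_zero, ← map_sub]
    have := R.neg_mem (hRmem w)
    refine (Submodule.Quotient.mk_eq_zero R).mpr ?_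
    simpa using this
  have hker : U (Z.sub (LinearMap.ker p)) := hU.quot ι hι hY
  obtain ⟨σ, hσ⟩ := hN Z N p hp hker LinearMap.id
  let D : P₀.H (Z.sub (LinearMap.ker p)) :=
    (R.mkQ.comp (LinearMap.inl A P₀.carrier Y.carrier) - σ.comp π).codRestrict _ (by
      intro x
      have h1 : p (σ (π x)) = π x := LinearMap.congr_fun hσ (π x)
      rw [LinearMap.mem_ker, LinearMap.sub_apply, map_sub]
      simp only [LinearMap.comp_apply, h1]
      exact sub_eq_zero.mpr rfl)
  have hDa : ∀ x, ((D x : Z.carrier)) = R.mkQ (x, 0) - σ (π x) := fun x => rfl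
  obtain ⟨e, he⟩ := hP₀ Y _ ι hι trivial D
  have hkey : ∀ w, ∃ v ∈ LinearMap.ker q, h' w - e (q w) = h' v := by
    intro w
    have h1 := congrArg Subtype.val (LinearMap.congr_fun he (q w))
    rw [LinearMap.comp_apply, hιa, hDa, hqπ, map_zero, sub_zero] at h1
    rw [← sub_eq_zero, ← map_sub] at h1
    have h2 := (Submodule.Quotient.mk_eq_zero R).mp h1
    have h3 := R.add_mem h2 (hRmem w)
    obtain ⟨v, hv⟩ := h3
    have h4 : q v = (0 - q w) + q w := congrArg Prod.fst hv
    have h5 : - h' v = (e (q w) - 0) + - h' w := congrArg Prod.snd hv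
    refine ⟨v, ?_, ?_⟩
    · rw [LinearMap.mem_ker, h4]; abel
    · rw [← neg_inj, h5]; abel
  have hle : LinearMap.range (h - (e₀ + e).comp q) ≤ (LinearMap.ker q).map h' := by
    rintro _ ⟨w, rfl⟩
    obtain ⟨v, hv, hvw⟩ := hkey w
    refine ⟨v, hv, ?_⟩
    rw [← hvw, hh']
    simp only [LinearMap.sub_apply, LinearMap.comp_apply, LinearMap.add_apply]
    abel
  have hle2 : (LinearMap.ker q).map h' ≤ LinearMap.range h' := LinearMap.map_le_range
  have heq : (LinearMap.ker q).map h' = LinearMap.range h' := by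
    by_contra hne
    have h1 := sub_dim_lt (M := Y) (lt_of_le_of_ne hle2 hne)
    have h2 := hmin (e₀ + e)
    have h3 : (Y.sub (LinearMap.range (h - (e₀ + e).comp q))).dim ≤
        (Y.sub ((LinearMap.ker q).map h')).dim := by
      rcases eq_or_lt_of_le hle with h4 | h4
      · rw [h4]
      · exact (sub_dim_lt h4).le
    omega
  have htop := hK (LinearMap.ker h') (by
    rw [eq_top_iff]
    intro x _
    have hx : h' x ∈ (LinearMap.ker q).map h' := heq ▸ ⟨x, rfl⟩
    obtain ⟨y, hy, hyx⟩ := hx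
    refine Submodule.mem_sup.mpr ⟨y, hy, x - y, ?_, by abel⟩
    rw [LinearMap.mem_ker, map_sub, hyx, sub_self])
  have h0 := LinearMap.ker_eq_top.mp htop
  refine ⟨e₀, ?_⟩
  rw [hh', sub_eq_zero] at h0
  exact h0.symm

theorem exists_pres [FiniteDimensional k A] (hU : Tors U) {N : FDMod k A} (hN : EP U N) :
    ∃ P₀ P₁ : FDMod k A, Pj P₀ ∧ Pj P₁ ∧
      ∀ Y : FDMod k A, U Y → P₁.hom Y + N.hom Y = P₀.hom Y := by
  obtain ⟨P₀, hP₀, π, hπ⟩ := exists_free N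
  obtain ⟨P₁, hP₁, q, hq, hK⟩ := proj_cover P₀ (LinearMap.ker π)
  refine ⟨P₀, P₁, hP₀, hP₁, fun Y hY => ?_⟩
  have h1 := LinearMap.finrank_range_add_finrank_ker (prec q Y)
  have h2 : LinearMap.range (prec q Y) = ⊤ := by
    rw [eq_top_iff]
    intro f _
    obtain ⟨e, he⟩ := extend_map hU hN hP₀ π hπ q hq hK hY f
    exact ⟨e, he⟩
  have h3 : Function.Injective (prec π Y) := by
    intro f g h
    ext x
    obtain ⟨y, rfl⟩ := hπ x
    exact LinearMap.congr_fun h y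
  have h4 : LinearMap.range (prec π Y) = LinearMap.ker (prec q Y) := by
    apply le_antisymm
    · rintro _ ⟨f, rfl⟩
      apply LinearMap.ext
      intro x
      have : q x ∈ LinearMap.ker π := hq ▸ ⟨x, rfl⟩
      change f (π (q x)) = 0
      rw [LinearMap.mem_ker.mp this, map_zero]
    · intro f hf
      obtain ⟨φ, hφ⟩ := factor π hπ f (by
        rw [← hq]
        rintro _ ⟨x, rfl⟩
        exact LinearMap.congr_fun hf x)
      exact ⟨φ, hφ⟩
  rw [h2, finrank_top, ← h4, LinearMap.finrank_range_of_inj h3] at h1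
  exact h1

theorem coker_trivial [IsAlgClosed k] [FiniteDimensional k A] {n : ℕ} (S : Fin n → FDMod k A)
    (hS : ∀ T : FDMod k A, IsSimpleModule A T.carrier → ∃ i, T.Iso (S i))
    {X : Fin n → FDMod k A} (hbrick : ∀ i, (X i).IsBrick)
    (horth : ∀ i j, i ≠ j → (X i).HomOrth (X j))
    {M : FDMod k A} {m : M.carrier} (h : MinApprox (Tcl X) M m) :
    Submodule.span A {m} = ⊤ := by
  classical
  have hT := tors_Tcl X
  have hX := asimple_X hbrick horth
  choose v hv using fun Y : FDMod k A => comp_vec S hS Y.dim Y le_rfl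
  have hw : ∀ N : FDMod k A, EP (Tcl X) N → ∃ w : Fin n → ℚ, ∀ Y, Tcl X Y →
      ∑ s, (v Y s : ℚ) * w s = N.hom Y := by
    intro N hN
    obtain ⟨P₀, P₁, h0, h1, hP⟩ := exists_pres hT hN
    refine ⟨fun s => (P₀.hom (S s) : ℚ) - P₁.hom (S s), fun Y hY => ?_⟩
    have e := hP Y hY
    rw [hv Y P₀ h0, hv Y P₁ h1] at e
    have e' : (∑ s, (v Y s : ℚ) * P₁.hom (S s)) + N.hom Y = ∑ s, (v Y s : ℚ) * P₀.hom (S s) := by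
      exact_mod_cast e
    simp only [mul_sub, Finset.sum_sub_distrib]
    linarith
  choose N a hN using fun i => exists_MinN hT h (hX i)
  choose w hwN using fun i => hw (N i) (hN i).ep
  obtain ⟨c, hc⟩ := hw _ (h.ep_coker hT)
  have hoff : ∀ i j, i ≠ j → (N j).hom (X i) = 0 := by
    intro i j hij
    apply hom_zero
    intro b
    by_contra hb
    obtain ⟨φ, hφ⟩ := factor b ((hX i).surj _ (hN j).mem b hb) (a j) (by
      intro x hx
      by_contra hax
      exact hb ((hN j).zero_of hT (hX j) (hX i) b hx hax))
    apply (hN j).ne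
    rw [← hφ, (horth i j hij).1 φ, LinearMap.zero_comp]
  let V : Matrix (Fin n) (Fin n) ℚ := Matrix.of fun i s => (v (X i) s : ℚ)
  let W : Matrix (Fin n) (Fin n) ℚ := Matrix.of fun s j => w j s
  have hVW : V * W = 1 := by
    ext i j
    rw [Matrix.mul_apply]
    have := hwN j (X i) (mem_Tcl X i)
    simp only [V, W, Matrix.of_apply]
    rw [this]
    by_cases hij : i = j
    · subst hij
      rw [(hN i).hom_eq_one hT (hX i)]
      simp
    · rw [hoff i j hij]
      simp [hij]
  have hdet : V.det ≠ 0 := by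
    intro h0
    have := congrArg Matrix.det hVW
    rw [Matrix.det_mul, h0, zero_mul, Matrix.det_one] at this
    exact zero_ne_one this
  have hc0 : c = 0 := by
    apply Matrix.eq_zero_of_mulVec_eq_zero hdet
    ext i
    change ∑ s, (v (X i) s : ℚ) * c s = 0
    rw [hc (X i) (mem_Tcl X i), hom_zero (ASimple.hom_coker h (hX i))]
    simp
  have hCC := hc _ (h.mem_coker hT)
  rw [hc0] at hCC
  simp only [Pi.zero_apply, mul_zero, Finset.sum_const_zero] at hCC
  have hCC' : (coker M m).hom (coker M m) = 0 := by exact_mod_cast hCC.symm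
  have hid := hom_zero' hCC' LinearMap.id
  rw [← Submodule.Quotient.subsingleton_iff]
  refine subsingleton_of_forall_eq 0 fun x => ?_
  exact LinearMap.congr_fun hid x

theorem simple_X [IsAlgClosed k] [FiniteDimensional k A] (hbf : BrickFinite k A)
    {n : ℕ} (S : Fin n → FDMod k A)
    (hS : ∀ T : FDMod k A, IsSimpleModule A T.carrier → ∃ i, T.Iso (S i))
    {X : Fin n → FDMod k A} (hbrick : ∀ i, (X i).IsBrick)
    (horth : ∀ i j, i ≠ j → (X i).HomOrth (X j)) (i : Fin n) :
    IsSimpleModule A (X i).carrier := by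
  have hT := tors_Tcl X
  have hX := asimple_X hbrick horth i
  obtain ⟨M, m, h⟩ := Approx.exists_min hT (approx_of_tors hbf hT)
  have htop := coker_trivial S hS hbrick horth h
  have hnt := hX.nontriv
  rw [isSimpleModule_iff_toSpanSingleton_surjective]
  refine ⟨hnt, fun y hy => ?_⟩
  obtain ⟨f, hf⟩ := h.univ _ hX.mem y
  have hf0 : f ≠ 0 := by
    rintro rfl
    exact hy hf.symm
  intro z
  obtain ⟨x, rfl⟩ := hX.surj M h.mem f hf0 z
  have hx : x ∈ Submodule.span A {m} := by rw [htop]; trivial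
  obtain ⟨r, rfl⟩ := Submodule.mem_span_singleton.mp hx
  exact ⟨r, by simp [hf]⟩

/-- Let `A` be a brick-finite finite-dimensional algebra over an
algebraically closed field of rank `n`. Then the only semibrick of size `n` in
`mod A` is the set of the `n` simple `A`-modules: if `X 1, ..., X n` are `n`
pairwise non-isomorphic, pairwise Hom-orthogonal bricks, then each `X i` is simple
and `{X i}` is a complete set of representatives of the simple `A`-modules. -/
theorem stmt4 {k A : Type u} [Field k] [IsAlgClosed k] [Ring A] [Algebra k A]
    [FiniteDimensional k A] (n : ℕ) (hrank : HasRank k A n) (hbf : BrickFinite k A)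
    (X : Fin n → FDMod k A)
    (hbrick : ∀ i, (X i).IsBrick)
    (hnoniso : ∀ i j, i ≠ j → ¬(X i).Iso (X j))
    (horth : ∀ i j, i ≠ j → (X i).HomOrth (X j)) :
    (∀ i, IsSimpleModule A (X i).carrier) ∧
    (∀ T : FDMod k A, IsSimpleModule A T.carrier → ∃ i, T.Iso (X i)) := by
  obtain ⟨S, -, -, hS⟩ := hrank
  have hsim := simple_X hbf S hS hbrick horth
  refine ⟨hsim, fun T hT => ?_⟩
  choose σ hσ using fun i => hS (X i) (hsim i)
  have hinj : Function.Injective σ := by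
    intro i j hij
    by_contra hne
    obtain ⟨e⟩ := hσ i
    obtain ⟨f⟩ := hσ j
    rw [← hij] at f
    exact hnoniso i j hne ⟨e.trans f.symm⟩
  obtain ⟨j, ⟨e⟩⟩ := hS T hT
  obtain ⟨i, rfl⟩ := (Finite.injective_iff_surjective.mp hinj) j
  obtain ⟨f⟩ := hσ i
  exact ⟨i, ⟨e.trans f.symm⟩⟩
end

section
/- Let A be a minimal brick-infinite finite-dimensional algebra over an algebraically closed field (i.e. A has infinitely many isomorphism classes of bricks, but for every nonzero two-sided ideal I of A the quotient algebra A/I has only finitely many isomorphism classes of bricks). If A admits infinitely many pairwise non-isomorphic unfaithful bricks, then there exists a positive integer d such that A admits an infinite semibrick consisting of bricks all of k-dimension d. -/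
universe u v

open Module

variable {k A : Type u} [Field k] [Ring A] [Algebra k A]

/-- There are only finitely many isomorphism classes of bricks annihilated by the
two-sided ideal `J`; equivalently, the quotient algebra `A/J` is brick-finite
(modules over `A/J` are exactly the `A`-modules annihilated by `J`, and this
identification preserves endomorphism rings). -/
def BrickFiniteKilledBy (k A : Type u) [Field k] [Ring A] [Algebra k A]
    (J : TwoSidedIdeal A) : Prop :=
  ∃ (m : ℕ) (f : Fin m → FDMod k A), ∀ N : FDMod k A, N.IsBrick →
    (∀ a ∈ J, ∀ x : N.carrier, a • x = 0) → ∃ i, N.Iso (f i)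

/-- `A` is minimal brick-infinite: `A` is brick-infinite, but the quotient of `A`
by any nonzero two-sided ideal is brick-finite. -/
def MinimalBrickInfinite (k A : Type u) [Field k] [Ring A] [Algebra k A] : Prop :=
  ¬ BrickFinite k A ∧
  ∀ J : TwoSidedIdeal A, (∃ a ∈ J, a ≠ 0) → BrickFiniteKilledBy k A J

namespace Brk
variable {k A : Type u} [Field k] [Ring A] [Algebra k A]

instance fdSub {M : Type u} [AddCommGroup M] [Module k M] [Module A M] [IsScalarTower k A M]
    [FiniteDimensional k M] (U : Submodule A M) : FiniteDimensional k U :=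
  (inferInstance : FiniteDimensional k (U.restrictScalars k))

/-- A submodule, as a bundled module. -/
abbrev sub (Z : FDMod k A) (U : Submodule A Z.carrier) : FDMod k A := ⟨U⟩
/-- A quotient, as a bundled module. -/
abbrev quo (Z : FDMod k A) (U : Submodule A Z.carrier) : FDMod k A := ⟨Z.carrier ⧸ U⟩
/-- The module is killed by the two-sided ideal. -/
def Kd (J : TwoSidedIdeal A) (Z : FDMod k A) : Prop := ∀ a ∈ J, ∀ x : Z.carrier, a • x = 0
/-- The submodule `J M`. -/
def JS (J : TwoSidedIdeal A) (M : Type u) [AddCommGroup M] [Module A M] : Submodule A M :=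
  Submodule.span A {y | ∃ a ∈ J, ∃ x : M, y = a • x}

/-- Torsion classes of the modules killed by `J`. -/
structure Tors (J : TwoSidedIdeal A) (t : FDMod k A → Prop) : Prop where
  kd : ∀ Z, t Z → Kd J Z
  zero : ∀ Z : FDMod k A, Subsingleton Z.carrier → t Z
  quot : ∀ (Z Z' : FDMod k A) (g : Z.carrier →ₗ[A] Z'.carrier), Function.Surjective g → t Z → t Z'
  ext : ∀ (Z : FDMod k A) (U : Submodule A Z.carrier), Kd J Z → t (sub Z U) → t (quo Z U) → t Z

theorem JS_le_ker (J : TwoSidedIdeal A) (M : Type u) [AddCommGroup M] [Module A M]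
    (Z : FDMod k A) (hZ : Kd J Z) (g : M →ₗ[A] Z.carrier) : JS J M ≤ LinearMap.ker g := by
  unfold JS
  rw [Submodule.span_le]
  rintro _ ⟨a, ha, x, rfl⟩
  simp only [SetLike.mem_coe, LinearMap.mem_ker, map_smul]
  exact hZ a ha _

theorem smul_mem_JS (J : TwoSidedIdeal A) (M : Type u) [AddCommGroup M] [Module A M]
    {a : A} (ha : a ∈ J) (x : M) : a • x ∈ JS J M :=
  Submodule.subset_span ⟨a, ha, x, rfl⟩

theorem Kd.surj {J : TwoSidedIdeal A} {Z Z' : FDMod k A} (hZ : Kd J Z)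
    (g : Z.carrier →ₗ[A] Z'.carrier) (hg : Function.Surjective g) : Kd J Z' := by
  intro a ha x
  obtain ⟨y, rfl⟩ := hg x
  rw [← map_smul, hZ a ha, map_zero]

theorem Kd.inj {J : TwoSidedIdeal A} {Z Z' : FDMod k A} (hZ : Kd J Z')
    (g : Z.carrier →ₗ[A] Z'.carrier) (hg : Function.Injective g) : Kd J Z := by
  intro a ha x
  apply hg
  rw [map_smul, hZ a ha, map_zero]

theorem finrank_range_lt {Z Z' : FDMod k A} (g : Z.carrier →ₗ[A] Z'.carrier)
    (hg : ¬ Function.Injective g) :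
    finrank k (LinearMap.range g) < finrank k Z.carrier := by
  have h1 := LinearMap.finrank_range_add_finrank_ker (g.restrictScalars k)
  have h2 : 0 < finrank k (LinearMap.ker (g.restrictScalars k)) := by
    rw [Module.finrank_pos_iff, Submodule.nontrivial_iff_ne_bot]
    intro h
    have h' := (LinearMap.ker_eq_bot (f := g.restrictScalars k)).mp h
    exact hg h'
  have h3 : finrank k (LinearMap.range g) = finrank k (LinearMap.range (g.restrictScalars k)) := rfl
  omega

theorem finrank_quo_lt {Z : FDMod k A} (U : Submodule A Z.carrier) (hU : U ≠ ⊥) :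
    finrank k (Z.carrier ⧸ U) < finrank k Z.carrier := by
  have h1 := Submodule.finrank_quotient_add_finrank (U.restrictScalars k)
  have h2 : 0 < finrank k (U.restrictScalars k) := by
    rw [Module.finrank_pos_iff, Submodule.nontrivial_iff_ne_bot]
    intro h
    apply hU
    exact (Submodule.restrictScalars_eq_bot_iff k A _).mp h
  have h3 : finrank k (Z.carrier ⧸ U) = finrank k (Z.carrier ⧸ (U.restrictScalars k)) :=
    (Submodule.Quotient.restrictScalarsEquiv k U).finrank_eq.symm
  omega

theorem finrank_sub_lt {Z : FDMod k A} {U V : Submodule A Z.carrier} (hU : U < V) :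
    finrank k U < finrank k V := by
  exact Submodule.finrank_lt_finrank_of_lt (s := U.restrictScalars k) (t := V.restrictScalars k) hU

theorem finrank_le_surj {Z Z' : FDMod k A} (g : Z.carrier →ₗ[A] Z'.carrier)
    (hg : Function.Surjective g) : finrank k Z'.carrier ≤ finrank k Z.carrier :=
  LinearMap.finrank_le_finrank_of_surjective (f := g.restrictScalars k) hg

theorem inj_iff_surj {Z : FDMod k A} (g : Z.carrier →ₗ[A] Z.carrier) :
    Function.Injective g ↔ Function.Surjective g :=
  LinearMap.injective_iff_surjective (f := g.restrictScalars k)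

/-- Brick criterion. -/
theorem brick_of [IsAlgClosed k] (Y : FDMod k A) [Nontrivial Y.carrier]
    (h : ∀ g : Y.carrier →ₗ[A] Y.carrier, g ≠ 0 → Function.Injective g) : Y.IsBrick := by
  refine ⟨inferInstance, fun f => ?_⟩
  obtain ⟨c, hc⟩ := Module.End.exists_eigenvalue (f.restrictScalars k : Module.End k Y.carrier)
  obtain ⟨x, hx⟩ := hc.exists_hasEigenvector
  refine ⟨c, ?_⟩
  by_contra hne
  push Not at hne
  obtain ⟨y, hy⟩ := hne
  have h0 : f - c • LinearMap.id ≠ 0 := by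
    intro h0
    apply hy
    have := LinearMap.congr_fun h0 y
    simpa [sub_eq_zero] using this
  apply hx.2
  apply h _ h0
  have := hx.apply_eq_smul
  simp at this
  simp [this]

/-- A non-brick module has a nonzero non-injective endomorphism. -/
theorem exists_endo [IsAlgClosed k] (Y : FDMod k A) [Nontrivial Y.carrier] (h : ¬ Y.IsBrick) :
    ∃ g : Y.carrier →ₗ[A] Y.carrier, g ≠ 0 ∧ ¬ Function.Injective g := by
  by_contra hc
  push Not at hc
  exact h (brick_of Y hc)

theorem Tors.iso {J : TwoSidedIdeal A} {t : FDMod k A → Prop} (ht : Tors J t) {Z Z' : FDMod k A}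
    (h : Z.Iso Z') : t Z ↔ t Z' := by
  obtain ⟨e⟩ := h
  exact ⟨ht.quot _ _ e.toLinearMap e.surjective, ht.quot _ _ e.symm.toLinearMap e.symm.surjective⟩

/-- Torsion classes are determined by their bricks. -/
theorem Tors.le_of_bricks [IsAlgClosed k] {J : TwoSidedIdeal A} {t t' : FDMod k A → Prop}
    (ht : Tors J t)
    (ht' : Tors J t') (h : ∀ Z : FDMod k A, Z.IsBrick → t Z → t' Z) : ∀ Z, t Z → t' Z := by
  have key : ∀ n : ℕ, ∀ Z : FDMod k A, finrank k Z.carrier = n → t Z → t' Z := by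
    intro n
    induction n using Nat.strong_induction_on with
    | _ n ih =>
      intro Z hn hZ
      rcases subsingleton_or_nontrivial Z.carrier with hs | hs
      · exact ht'.zero Z hs
      by_cases hb : Z.IsBrick
      · exact h Z hb hZ
      obtain ⟨g, hg0, hg⟩ := exists_endo Z hb
      have hr : LinearMap.range g ≠ ⊥ := by
        rwa [Ne, LinearMap.range_eq_bot]
      refine ht'.ext Z (LinearMap.range g) (ht.kd Z hZ) ?_ ?_
      · refine ih _ ?_ (sub Z (LinearMap.range g)) rfl ?_
        · rw [← hn]; exact finrank_range_lt g hg
        · exact ht.quot Z _ g.rangeRestrict g.surjective_rangeRestrict hZ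
      · refine ih _ ?_ (quo Z (LinearMap.range g)) rfl ?_
        · rw [← hn]; exact finrank_quo_lt _ hr
        · exact ht.quot Z _ (Submodule.mkQ _) (Submodule.mkQ_surjective _) hZ
  exact fun Z => key _ Z rfl

/-- Generation. -/
def Gen (M Z : FDMod k A) : Prop :=
  (⨆ g : M.carrier →ₗ[A] Z.carrier, LinearMap.range g) = ⊤

/-- The torsion submodule. -/
theorem Tors.trace {J : TwoSidedIdeal A} {t : FDMod k A → Prop} (ht : Tors J t) (Z : FDMod k A)
    (hZ : Kd J Z) : ∃ U : Submodule A Z.carrier, t (sub Z U) ∧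
      ∀ N : FDMod k A, t N → ∀ g : N.carrier →ₗ[A] Z.carrier ⧸ U, g = 0 := by
  have : WellFoundedGT (Submodule A Z.carrier) := by
    have : IsNoetherian A Z.carrier := isNoetherian_of_tower k inferInstance
    infer_instance
  obtain ⟨U, hU, hmax⟩ := WellFounded.has_min (wellFounded_gt (α := Submodule A Z.carrier))
    {U | t (sub Z U)} ⟨⊥, ht.zero _ (by infer_instance)⟩
  refine ⟨U, hU, fun N hN g => ?_⟩
  by_contra hg
  let V := (LinearMap.range g).comap U.mkQ
  have hUV : U ≤ V := by
    intro x hx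
    change U.mkQ x ∈ LinearMap.range g
    have : U.mkQ x = 0 := by simpa using hx
    rw [this]; exact Submodule.zero_mem _
  have hlt : U < V := by
    refine lt_of_le_of_ne hUV ?_
    intro h
    apply hg
    ext n
    obtain ⟨x, hx⟩ := U.mkQ_surjective (g n)
    have : x ∈ V := by
      change U.mkQ x ∈ LinearMap.range g
      exact ⟨n, hx.symm⟩
    rw [← h] at this
    rw [← hx]
    simpa using this
  refine hmax V ?_ hlt
  refine ht.ext (sub Z V) (U.submoduleOf V) (hZ.inj V.subtype V.injective_subtype) ?_ ?_
  · refine ht.quot (sub Z U) _ (Submodule.submoduleOfEquivOfLe hUV).symm.toLinearMap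
      (Submodule.submoduleOfEquivOfLe hUV).symm.surjective hU
  · -- the quotient is the range of g
    let φ : V →ₗ[A] LinearMap.range g := (U.mkQ ∘ₗ V.subtype).codRestrict _ (fun x => x.2)
    have hφs : Function.Surjective φ := by
      rintro ⟨y, hy⟩
      obtain ⟨x, rfl⟩ := U.mkQ_surjective y
      exact ⟨⟨x, hy⟩, rfl⟩
    have hker : LinearMap.ker φ = U.submoduleOf V := by
      ext x
      simp only [LinearMap.mem_ker, Submodule.submoduleOf, Submodule.mem_comap]
      rw [Subtype.ext_iff]
      change U.mkQ x.1 = 0 ↔ _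
      simp
    let e := (Submodule.quotEquivOfEq _ _ hker.symm).trans (φ.quotKerEquivOfSurjective hφs)
    have h1 : t (⟨LinearMap.range g⟩ : FDMod k A) :=
      ht.quot N _ g.rangeRestrict g.surjective_rangeRestrict hN
    exact ht.quot _ _ e.symm.toLinearMap e.symm.surjective h1

theorem Gen.kd {J : TwoSidedIdeal A} {M Z : FDMod k A} (h : Gen M Z) (hM : Kd J M) : Kd J Z := by
  intro a ha x
  have hx : x ∈ (⨆ g : M.carrier →ₗ[A] Z.carrier, LinearMap.range g) := by rw [h]; trivial
  induction hx using Submodule.iSup_induction' with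
  | mem i x hx => obtain ⟨y, rfl⟩ := hx; rw [← map_smul, hM a ha, map_zero]
  | zero => simp
  | add x y _ _ h1 h2 => rw [smul_add, h1, h2, add_zero]

theorem Gen.eq_zero {M Z Y : FDMod k A} (h : Gen M Z) (g : Z.carrier →ₗ[A] Y.carrier)
    (hg : ∀ u : M.carrier →ₗ[A] Z.carrier, g ∘ₗ u = 0) : g = 0 := by
  have : (⊤ : Submodule A Z.carrier) ≤ LinearMap.ker g := by
    rw [← h, iSup_le_iff]
    rintro u _ ⟨y, rfl⟩
    exact LinearMap.congr_fun (hg u) y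
  exact LinearMap.ker_eq_top.mp (top_le_iff.mp this)

theorem Tors.of_gen {J : TwoSidedIdeal A} {t : FDMod k A → Prop} (ht : Tors J t) {M Z : FDMod k A}
    (hM : t M) (h : Gen M Z) : t Z := by
  obtain ⟨U, hU, hU'⟩ := ht.trace Z (h.kd (ht.kd _ hM))
  have : U.mkQ = 0 := h.eq_zero (Y := quo Z U) _ (fun u => hU' M hM _)
  have hU2 : U = ⊤ := by rw [← U.ker_mkQ, this, LinearMap.ker_zero]
  refine ht.quot (sub Z U) Z U.subtype ?_ hU
  rw [← LinearMap.range_eq_top, Submodule.range_subtype, hU2]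

theorem Gen.surj {M Z Z' : FDMod k A} (h : Gen M Z) (g : Z.carrier →ₗ[A] Z'.carrier)
    (hg : Function.Surjective g) : Gen M Z' := by
  unfold Gen at *
  rw [eq_top_iff, ← LinearMap.range_eq_top.mpr hg, LinearMap.range_eq_map, ← h, Submodule.map_iSup,
    iSup_le_iff]
  intro u
  rw [← LinearMap.range_comp]
  exact le_iSup (fun g : M.carrier →ₗ[A] Z'.carrier => LinearMap.range g) (g ∘ₗ u)

/-- `T` is generated by a single module. -/
def IsFac (T : FDMod k A → Prop) : Prop := ∃ M, T M ∧ ∀ Z, T Z → Gen M Z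

/-- Minimal universal pointed module. -/
theorem exists_pointed {J : TwoSidedIdeal A} {T : FDMod k A → Prop} (hT : Tors J T)
    (hF : IsFac T) : ∃ (M : FDMod k A) (m : M.carrier), T M ∧
      (∀ Z : FDMod k A, T Z → ∀ z : Z.carrier, ∃ h : M.carrier →ₗ[A] Z.carrier, h m = z) ∧
      (∀ u : M.carrier →ₗ[A] M.carrier, u m = m → Function.Bijective u) := by
  classical
  let P : ℕ → Prop := fun n => ∃ (M : FDMod k A) (m : M.carrier), T M ∧
      (∀ Z : FDMod k A, T Z → ∀ z : Z.carrier, ∃ h : M.carrier →ₗ[A] Z.carrier, h m = z) ∧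
      finrank k M.carrier = n
  have hP : ∃ n, P n := by
    obtain ⟨M, hM, hg⟩ := hF
    let bs := Module.finBasis k M.carrier
    refine ⟨_, ⟨Fin (finrank k M.carrier) → M.carrier⟩, bs, ?_, ?_, rfl⟩
    · refine hT.of_gen hM ?_
      unfold Gen
      rw [eq_top_iff]
      intro x _
      have : x = ∑ i, LinearMap.single A (fun _ => M.carrier) i (x i) := by
        ext j
        simp [Finset.sum_apply, Pi.single_apply]
      rw [this]
      refine Submodule.sum_mem _ (fun i _ => ?_)
      exact Submodule.mem_iSup_of_mem (p := fun g : M.carrier →ₗ[A] (Fin (finrank k M.carrier) → M.carrier) => LinearMap.range g)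
        (LinearMap.single A (fun _ => M.carrier) i) ⟨_, rfl⟩
    · intro Z hZ z
      have hz : z ∈ (⨆ g : M.carrier →ₗ[A] Z.carrier, LinearMap.range g) := by
        rw [hg Z hZ]; trivial
      induction hz using Submodule.iSup_induction' with
      | mem g x hx =>
        obtain ⟨y, rfl⟩ := hx
        refine ⟨∑ i, (bs.repr y i) • (g ∘ₗ LinearMap.proj i), ?_⟩
        conv_rhs => rw [← bs.sum_repr y, map_sum]
        simp only [LinearMap.sum_apply, LinearMap.smul_apply, LinearMap.comp_apply, LinearMap.proj_apply]
        refine Finset.sum_congr rfl (fun i _ => ?_)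
        exact ((g.restrictScalars k).map_smul _ _).symm
      | zero => exact ⟨0, rfl⟩
      | add x y _ _ h1 h2 =>
        obtain ⟨a, ha⟩ := h1
        obtain ⟨b, hb⟩ := h2
        exact ⟨a + b, by simp [ha, hb]⟩
  obtain ⟨M, m, hM, hu, hn⟩ := Nat.find_spec hP
  refine ⟨M, m, hM, hu, fun u hum => ?_⟩
  suffices h : Function.Injective u from ⟨h, (inj_iff_surj u).mp h⟩
  by_contra hni
  have hlt := finrank_range_lt u hni
  have hPn : P (finrank k (LinearMap.range u)) := by
    refine ⟨⟨LinearMap.range u⟩, ⟨m, m, hum⟩, hT.quot M _ u.rangeRestrict u.surjective_rangeRestrict hM, ?_, rfl⟩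
    intro Z hZ z
    obtain ⟨h, hh⟩ := hu Z hZ z
    exact ⟨h ∘ₗ (LinearMap.range u).subtype, by simpa using hh⟩
  have := Nat.find_min' hP hPn
  omega

end Brk

namespace Brk
variable {k A : Type u} [Field k] [Ring A] [Algebra k A]

/-- Presentation datum. -/
structure Dat (A : Type u) [Ring A] where
  b : ℕ
  c : ℕ
  w : (Fin c → A) →ₗ[A] (Fin c → A)
  f : (Fin c → A) →ₗ[A] (Fin b → A)
  α : Fin b → A
  hw : w ∘ₗ w = w
  hf : f ∘ₗ w = f

/-- Solvability condition attached to a datum. -/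
def TD (D : Dat A) (Z : FDMod k A) : Prop :=
  ∀ (y : (Fin D.c → A) →ₗ[A] Z.carrier) (z : Z.carrier),
    ∃ h : (Fin D.b → A) →ₗ[A] Z.carrier, h ∘ₗ D.f = y ∘ₗ D.w ∧ h D.α = z

theorem TD_tors (D : Dat A) (I : TwoSidedIdeal A) :
    Tors I (fun Z : FDMod k A => Kd I Z ∧ TD D Z) where
  kd := fun Z h => h.1
  zero := by
    intro Z hs
    refine ⟨fun a _ x => Subsingleton.elim _ _, fun y z => ⟨0, ?_, Subsingleton.elim _ _⟩⟩
    ext; exact Subsingleton.elim _ _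
  quot := by
    intro Z Z' g hg h
    refine ⟨h.1.surj g hg, fun y z => ?_⟩
    obtain ⟨y0, rfl⟩ := Module.projective_lifting_property g y hg
    obtain ⟨z0, rfl⟩ := hg z
    obtain ⟨h0, h1, h2⟩ := h.2 y0 z0
    refine ⟨g ∘ₗ h0, ?_, by simp [h2]⟩
    rw [LinearMap.comp_assoc, h1, LinearMap.comp_assoc]
  ext := by
    intro Z U hk hU hQ
    refine ⟨hk, fun y z => ?_⟩
    obtain ⟨h'', h1, h2⟩ := hQ.2 (U.mkQ ∘ₗ y) (U.mkQ z)
    obtain ⟨h0, rfl⟩ := Module.projective_lifting_property U.mkQ h'' U.mkQ_surjective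
    have hd : ∀ v, (y ∘ₗ D.w - h0 ∘ₗ D.f) v ∈ U := by
      intro v
      have := LinearMap.congr_fun h1 v
      simp only [LinearMap.comp_apply] at this
      rw [← U.ker_mkQ, LinearMap.mem_ker]
      simp only [LinearMap.sub_apply, LinearMap.comp_apply, map_sub, this, sub_self]
    have hz : z - h0 D.α ∈ U := by
      rw [← U.ker_mkQ, LinearMap.mem_ker, map_sub, ← h2]
      simp
    obtain ⟨h', h3, h4⟩ := hU.2 (LinearMap.codRestrict U _ hd) ⟨_, hz⟩
    refine ⟨h0 + U.subtype ∘ₗ h', ?_, ?_⟩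
    · refine LinearMap.ext fun v => ?_
      have e1 := congrArg U.subtype (LinearMap.congr_fun h3 v)
      have e2 := LinearMap.congr_fun D.hw
      have e3 := LinearMap.congr_fun D.hf
      simp only [LinearMap.comp_apply, Submodule.subtype_apply, LinearMap.codRestrict_apply, LinearMap.sub_apply] at e1 e2 e3
      simp only [LinearMap.comp_apply, LinearMap.add_apply, Submodule.subtype_apply, e1, e2, e3]
      abel
    · have e1 := congrArg U.subtype h4
      simp only [Submodule.subtype_apply] at e1
      simp only [LinearMap.comp_apply, LinearMap.add_apply, Submodule.subtype_apply, e1]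
      abel

theorem lift_pt {J : TwoSidedIdeal A} {T : FDMod k A → Prop} (hT : Tors J T) [FiniteDimensional k A]
    (M : FDMod k A) (m : M.carrier) (hM : T M)
    (huni : ∀ Z : FDMod k A, T Z → ∀ z : Z.carrier, ∃ h : M.carrier →ₗ[A] Z.carrier, h m = z)
    (hmin : ∀ u : M.carrier →ₗ[A] M.carrier, u m = m → Function.Bijective u)
    {b c : ℕ} (q : (Fin b → A) →ₗ[A] M.carrier) (hq : Function.Surjective q)
    (α : Fin b → A) (hα : q α = m) (f : (Fin c → A) →ₗ[A] (Fin b → A))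
    (hqf : q ∘ₗ f = 0) (hker : LinearMap.ker q ≤ LinearMap.range f ⊔ JS J (Fin b → A))
    (Z : FDMod k A) (hZ : T Z) (g : (Fin c → A) →ₗ[A] Z.carrier)
    (hg : ∀ v, f v ∈ JS J (Fin b → A) → g v = 0) :
    ∃ h : (Fin b → A) →ₗ[A] Z.carrier, h ∘ₗ f = g := by
  have hJq : JS J (Fin b → A) ≤ LinearMap.ker q := JS_le_ker J _ M (hT.kd M hM) q
  let Γ : Submodule A (Z.carrier × (Fin b → A)) :=
    LinearMap.range (g.prod (-f)) ⊔ (JS J (Fin b → A)).map (LinearMap.inr A Z.carrier (Fin b → A))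
  have hΓ1 : ∀ v, (g v, - f v) ∈ Γ := fun v => Submodule.mem_sup_left ⟨v, rfl⟩
  have hΓ2 : ∀ x ∈ JS J (Fin b → A), ((0 : Z.carrier), x) ∈ Γ := fun x hx =>
    Submodule.mem_sup_right ⟨x, hx, rfl⟩
  have hΓ : ∀ z x, (z, x) ∈ Γ → ∃ v, ∃ j ∈ JS J (Fin b → A), z = g v ∧ x = - f v + j := by
    intro z x h
    obtain ⟨_, ⟨v, rfl⟩, _, ⟨j, hj, rfl⟩, h⟩ := Submodule.mem_sup.mp h
    refine ⟨v, j, hj, ?_, ?_⟩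
    · simpa using (congrArg Prod.fst h).symm
    · simpa using (congrArg Prod.snd h).symm
  let E : FDMod k A := ⟨(Z.carrier × (Fin b → A)) ⧸ Γ⟩
  let ι : Z.carrier →ₗ[A] E.carrier := Γ.mkQ ∘ₗ LinearMap.inl A _ _
  let κ : (Fin b → A) →ₗ[A] E.carrier := Γ.mkQ ∘ₗ LinearMap.inr A _ _
  have hsur : ∀ e : E.carrier, ∃ z x, e = ι z + κ x := by
    intro e
    obtain ⟨⟨z, x⟩, rfl⟩ := Γ.mkQ_surjective e
    refine ⟨z, x, ?_⟩
    change Γ.mkQ _ = Γ.mkQ _ + Γ.mkQ _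
    rw [← map_add]
    simp
  have hκf : ∀ v, κ (f v) = ι (g v) := by
    intro v
    symm
    rw [← sub_eq_zero]
    change Γ.mkQ _ - Γ.mkQ _ = 0
    rw [← map_sub, ← LinearMap.mem_ker, Submodule.ker_mkQ]
    simpa using hΓ1 v
  have hκJ : ∀ x ∈ JS J (Fin b → A), κ x = 0 := by
    intro x hx
    change Γ.mkQ _ = 0
    rw [← LinearMap.mem_ker, Submodule.ker_mkQ]
    exact hΓ2 x hx
  have hι : Function.Injective ι := by
    rw [← LinearMap.ker_eq_bot, eq_bot_iff]
    intro z hz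
    have : Γ.mkQ (z, 0) = 0 := hz
    rw [← LinearMap.mem_ker, Submodule.ker_mkQ] at this
    obtain ⟨v, j, hj, rfl, h2⟩ := hΓ _ _ this
    have : f v = j := by
      rw [eq_comm, neg_add_eq_zero] at h2
      exact h2
    exact hg v (this ▸ hj)
  let π : E.carrier →ₗ[A] M.carrier := Γ.liftQ (q ∘ₗ LinearMap.snd A _ _) (by
    rintro ⟨z, x⟩ h
    obtain ⟨v, j, hj, rfl, rfl⟩ := hΓ _ _ h
    have h1 := LinearMap.congr_fun hqf v
    have h2 : q j = 0 := hJq hj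
    simp only [LinearMap.comp_apply, LinearMap.zero_apply] at h1
    simp [h1, h2])
  have hπι : ∀ z, π (ι z) = 0 := by
    intro z
    exact map_zero q
  have hπκ : ∀ x, π (κ x) = q x := by
    intro x
    rfl
  have hkq : ∀ x, q x = 0 → ∃ z, κ x = ι z := by
    intro x hx
    obtain ⟨_, ⟨v, rfl⟩, j, hj, rfl⟩ := Submodule.mem_sup.mp (hker hx)
    exact ⟨g v, by rw [map_add, hκf, hκJ j hj, add_zero]⟩
  have hE : Kd J E := by
    intro a ha e
    obtain ⟨z, x, rfl⟩ := hsur e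
    rw [smul_add, ← map_smul, ← map_smul, hT.kd Z hZ a ha, map_zero, zero_add]
    exact hκJ _ (smul_mem_JS J _ ha x)
  have hET : T E := by
    refine hT.ext E (LinearMap.range ι) hE (hT.quot Z _ ι.rangeRestrict ι.surjective_rangeRestrict hZ) ?_
    let e1 := q.quotKerEquivOfSurjective hq
    have h1 : T (⟨(Fin b → A) ⧸ LinearMap.ker q⟩ : FDMod k A) :=
      hT.quot M _ e1.symm.toLinearMap e1.symm.surjective hM
    refine hT.quot _ _ ((LinearMap.ker q).liftQ ((LinearMap.range ι).mkQ ∘ₗ κ) ?_) ?_ h1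
    · intro x hx
      obtain ⟨z, hz⟩ := hkq x hx
      rw [LinearMap.mem_ker, LinearMap.comp_apply, hz, ← LinearMap.mem_ker, Submodule.ker_mkQ]
      exact ⟨z, rfl⟩
    · intro y
      obtain ⟨e, rfl⟩ := (LinearMap.range ι).mkQ_surjective y
      obtain ⟨z, x, rfl⟩ := hsur e
      refine ⟨(LinearMap.ker q).mkQ x, ?_⟩
      have : (LinearMap.range ι).mkQ (ι z) = 0 := by
        rw [← LinearMap.mem_ker, Submodule.ker_mkQ]
        exact ⟨z, rfl⟩
      rw [map_add, this, zero_add]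
      rfl
  obtain ⟨h1, hh1⟩ := huni E hET (κ α)
  have hbij := hmin (π ∘ₗ h1) (by rw [LinearMap.comp_apply, hh1, hπκ, hα])
  let e := LinearEquiv.ofBijective _ hbij
  let s : M.carrier →ₗ[A] E.carrier := h1 ∘ₗ e.symm.toLinearMap
  have hs : ∀ x, π (s x) = x := fun x => e.apply_symm_apply x
  let φ : (Fin b → A) →ₗ[A] E.carrier := κ - s ∘ₗ q
  have hφ : ∀ x, φ x ∈ LinearMap.range ι := by
    intro x
    have h0 : π (φ x) = 0 := by
      simp only [φ, LinearMap.sub_apply, LinearMap.comp_apply, map_sub, hπκ, hs, sub_self]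
    obtain ⟨z, x', hx'⟩ := hsur (φ x)
    rw [hx', map_add, hπι, hπκ, zero_add] at h0
    obtain ⟨z', hz'⟩ := hkq x' h0
    exact ⟨z + z', by rw [hx', hz', map_add]⟩
  let e2 := LinearEquiv.ofInjective ι hι
  let h : (Fin b → A) →ₗ[A] Z.carrier := e2.symm.toLinearMap ∘ₗ φ.codRestrict _ hφ
  have hh : ∀ x, ι (h x) = φ x := by
    intro x
    have := e2.apply_symm_apply (φ.codRestrict _ hφ x)
    exact congrArg Subtype.val this
  refine ⟨h, ?_⟩
  refine LinearMap.ext fun v => ?_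
  apply hι
  change ι (h (f v)) = ι (g v)
  rw [hh]
  have h3 := LinearMap.congr_fun hqf v
  simp only [LinearMap.comp_apply, LinearMap.zero_apply] at h3
  simp only [φ, LinearMap.sub_apply, LinearMap.comp_apply, h3, map_zero, sub_zero, hκf]


theorem fitting_zero {V : Type u} [AddCommGroup V] [Module k V] [Module A V] [IsScalarTower k A V]
    [FiniteDimensional k V] [Module.Projective A V] {Q Z : Type u} [AddCommGroup Q] [Module A Q]
    [AddCommGroup Z] [Module A Z] (w : V →ₗ[A] V) (p : V →ₗ[A] Q) (hw : w ∘ₗ w = w) (hp : p ∘ₗ w = p)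
    (hmin : ∀ w' : V →ₗ[A] V, w' ∘ₗ w' = w' → p ∘ₗ w' = p →
      finrank k (LinearMap.range w) ≤ finrank k (LinearMap.range w'))
    (δ : V →ₗ[A] Z) (hδw : δ ∘ₗ w = δ) (hδ : ∀ v, ∃ x, p x = 0 ∧ δ x = δ v) : δ = 0 := by
  have hwx : ∀ x, w (w x) = w x := LinearMap.congr_fun hw
  have hpx : ∀ x, p (w x) = p x := LinearMap.congr_fun hp
  have hδx : ∀ x, δ (w x) = δ x := LinearMap.congr_fun hδw
  obtain ⟨η, hη⟩ : ∃ η : V →ₗ[A] LinearMap.ker p, ∀ v, δ (η v) = δ v := by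
    let d : LinearMap.ker p →ₗ[A] LinearMap.range δ :=
      (δ ∘ₗ (LinearMap.ker p).subtype).codRestrict _ (fun x => ⟨x.1, rfl⟩)
    have hd : Function.Surjective d := by
      rintro ⟨_, v, rfl⟩
      obtain ⟨x, hx, hx'⟩ := hδ v
      exact ⟨⟨x, hx⟩, Subtype.ext hx'⟩
    obtain ⟨η, hη⟩ := Module.projective_lifting_property d δ.rangeRestrict hd
    exact ⟨η, fun v => congrArg Subtype.val (LinearMap.congr_fun hη v)⟩
  let θ : Module.End A V := w ∘ₗ (LinearMap.ker p).subtype ∘ₗ η ∘ₗ w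
  have hθ : ∀ v, θ v = w (η (w v)) := fun v => rfl
  have hδθ : ∀ v, δ (θ v) = δ v := fun v => by rw [hθ, hδx, hη, hδx]
  have hpθ : ∀ v, p (θ v) = 0 := fun v => by rw [hθ, hpx]; exact (η (w v)).2
  have hwθ : ∀ v, w (θ v) = θ v := fun v => by rw [hθ, hwx]
  have hθw : ∀ v, θ (w v) = θ v := fun v => by rw [hθ, hθ, hwx]
  have : IsNoetherian A V := isNoetherian_of_tower k inferInstance
  have : IsArtinian A V := isArtinian_of_tower k inferInstance
  obtain ⟨N, hN, hN1⟩ := (θ.eventually_isCompl_ker_pow_range_pow.and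
    (Filter.eventually_ge_atTop 1)).exists
  obtain ⟨n, rfl⟩ : ∃ n, N = n + 1 := ⟨N - 1, by omega⟩
  have hpN : ∀ v, p ((θ ^ (n+1)) v) = 0 := fun v => by rw [pow_succ']; exact hpθ _
  have hwN : ∀ v, w ((θ ^ (n+1)) v) = (θ ^ (n+1)) v := fun v => by rw [pow_succ']; exact hwθ _
  have hNw : ∀ v, (θ ^ (n+1)) (w v) = (θ ^ (n+1)) v := fun v => by
    rw [pow_succ]; exact congrArg (θ ^ n) (hθw v)
  have hδN : ∀ m v, δ ((θ ^ m) v) = δ v := by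
    intro m
    induction m with
    | zero => intro v; simp
    | succ m ih => intro v; rw [pow_succ']; exact (hδθ _).trans (ih v)
  let ε : V →ₗ[A] V := Submodule.projection _ _ hN.symm
  have hε1 : ∀ v, ∃ u, ε v = (θ ^ (n+1)) u := by
    intro v
    obtain ⟨u, hu⟩ := Submodule.projection_apply_mem hN.symm v
    exact ⟨u, hu.symm⟩
  have hε2 : ∀ u, ε ((θ ^ (n+1)) u) = (θ ^ (n+1)) u := fun u =>
    Submodule.projection_apply_left hN.symm ⟨_, u, rfl⟩
  have hε3 : ∀ v, (θ ^ (n+1)) v = 0 → ε v = 0 := fun v hv =>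
    (Submodule.projection_apply_eq_zero_iff hN.symm).mpr hv
  have hεε : ∀ v, ε (ε v) = ε v := fun v => by obtain ⟨u, hu⟩ := hε1 v; rw [hu, hε2]
  have hwε : ∀ v, w (ε v) = ε v := fun v => by obtain ⟨u, hu⟩ := hε1 v; rw [hu, hwN]
  have hpε : ∀ v, p (ε v) = 0 := fun v => by obtain ⟨u, hu⟩ := hε1 v; rw [hu, hpN]
  have hεw : ∀ v, ε (w v) = ε v := fun v => by
    rw [← sub_eq_zero, ← map_sub]
    apply hε3
    rw [map_sub, hNw, sub_self]
  have h1 := hmin (w - ε) (LinearMap.ext fun v => by simp [hwx, hwε, hεw, hεε])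
    (LinearMap.ext fun v => by simp [hpx, hpε])
  have h2 : LinearMap.range (w - ε) ≤ LinearMap.range w := by
    rintro _ ⟨v, rfl⟩
    exact ⟨(w - ε) v, by simp [hwx, hwε]⟩
  have h3 : LinearMap.range w ≤ LinearMap.range (w - ε) := by
    by_contra hc
    have hlt : LinearMap.range (w - ε) < LinearMap.range w := lt_of_le_not_ge h2 hc
    have := Submodule.finrank_lt_finrank_of_lt (s := (LinearMap.range (w - ε)).restrictScalars k)
      (t := (LinearMap.range w).restrictScalars k) hlt
    exact absurd h1 (not_le.mpr this)
  have hε0 : ∀ v, ε v = 0 := by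
    intro v
    obtain ⟨u, hu⟩ := h3 ⟨ε v, hwε v⟩
    rw [← hεε v, ← hu]
    simp [hεw, hεε]
  refine LinearMap.ext fun v => ?_
  rw [← hδN (n+1) v, ← hε2, hε0]
  simp

/-- The module presented by a datum. -/
abbrev MD [FiniteDimensional k A] (D : Dat A) (I : TwoSidedIdeal A) : FDMod k A :=
  ⟨(Fin D.b → A) ⧸ (LinearMap.range D.f ⊔ JS I (Fin D.b → A))⟩

theorem exists_datum {J : TwoSidedIdeal A} {T : FDMod k A → Prop} (hT : Tors J T)
    [FiniteDimensional k A] (hF : IsFac T) :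
    ∃ D : Dat A, (∀ Z, T Z ↔ (Kd J Z ∧ TD D Z)) ∧ T (MD D J) := by
  obtain ⟨M, m, hM, huni, hpt⟩ := exists_pointed hT hF
  have : Module.Finite A M.carrier := Module.Finite.of_restrictScalars_finite k A M.carrier
  obtain ⟨b, q, hq⟩ := Module.Finite.exists_fin' A M.carrier
  have : Module.Finite A (LinearMap.ker q) := Module.Finite.of_restrictScalars_finite k A _
  obtain ⟨c, f0', hf0⟩ := Module.Finite.exists_fin' A (LinearMap.ker q)
  let f0 : (Fin c → A) →ₗ[A] (Fin b → A) := (LinearMap.ker q).subtype ∘ₗ f0'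
  have hqf0 : ∀ v, q (f0 v) = 0 := fun v => (f0' v).2
  let p : (Fin c → A) →ₗ[A] _ := (JS J (Fin b → A)).mkQ ∘ₗ f0
  have hpv : ∀ v, p v = 0 ↔ f0 v ∈ JS J (Fin b → A) := by
    intro v
    change (JS J (Fin b → A)).mkQ (f0 v) = 0 ↔ _
    rw [← LinearMap.mem_ker, Submodule.ker_mkQ]
  obtain ⟨w, ⟨hw, hpw⟩, hmin⟩ := WellFounded.has_min
    (measure (fun w : (Fin c → A) →ₗ[A] (Fin c → A) => finrank k (LinearMap.range w))).wf
    {w | w ∘ₗ w = w ∧ p ∘ₗ w = p} ⟨LinearMap.id, by simp⟩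
  obtain ⟨α, hα⟩ := hq m
  have hwx : ∀ x, w (w x) = w x := LinearMap.congr_fun hw
  have hpx : ∀ x, p (w x) = p x := LinearMap.congr_fun hpw
  let D : Dat A := ⟨b, c, w, f0 ∘ₗ w, α, hw, by rw [LinearMap.comp_assoc, hw]⟩
  have hJq : JS J (Fin b → A) ≤ LinearMap.ker q := JS_le_ker J _ M (hT.kd M hM) q
  have hker : LinearMap.ker q ≤ LinearMap.range D.f ⊔ JS J (Fin b → A) := by
    intro x hx
    obtain ⟨v, hv⟩ := hf0 ⟨x, hx⟩
    have hv' : f0 v = x := congrArg Subtype.val hv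
    have h1 : p (v - w v) = 0 := by rw [map_sub, hpx, sub_self]
    rw [hpv] at h1
    refine Submodule.mem_sup.mpr ⟨f0 (w v), ⟨v, rfl⟩, _, h1, ?_⟩
    rw [map_sub, hv']; abel
  have hqf : q ∘ₗ D.f = 0 := LinearMap.ext fun v => hqf0 _
  refine ⟨D, fun Z => ⟨fun hZ => ⟨hT.kd Z hZ, fun y z => ?_⟩, fun ⟨hZ, hD⟩ => ?_⟩, ?_⟩
  · let g := y ∘ₗ w
    have hgw : ∀ x, g (w x) = g x := fun x => congrArg y (hwx x)
    let Z1 : Submodule A Z.carrier := (LinearMap.ker p).map g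
    obtain ⟨hb, hhb⟩ := lift_pt hT M m hM huni hpt q hq α hα D.f hqf hker (quo Z Z1)
      (hT.quot Z _ Z1.mkQ Z1.mkQ_surjective hZ) (Z1.mkQ ∘ₗ g) (by
        intro v hv
        have h1 : p (w v) = 0 := (hpv _).mpr hv
        change Z1.mkQ (g v) = 0
        rw [← LinearMap.mem_ker, Submodule.ker_mkQ, ← hgw]
        exact ⟨_, h1, rfl⟩)
    obtain ⟨h, rfl⟩ := Module.projective_lifting_property Z1.mkQ hb Z1.mkQ_surjective
    have hhJ : ∀ x ∈ JS J (Fin b → A), h x = 0 := fun x hx => JS_le_ker J _ Z (hT.kd Z hZ) h hx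
    have hδ : g - h ∘ₗ D.f = 0 := by
      refine fitting_zero (k := k) w p hw hpw
        (fun w' h1 h2 => not_lt.mp (hmin w' ⟨h1, h2⟩)) _ ?_ ?_
      · refine LinearMap.ext fun v => ?_
        change g (w v) - h (f0 (w (w v))) = g v - h (f0 (w v))
        rw [hgw, hwx]
      · intro v
        have h1 : (g - h ∘ₗ D.f) v ∈ Z1 := by
          rw [← Z1.ker_mkQ, LinearMap.mem_ker]
          have := LinearMap.congr_fun hhb v
          simp only [LinearMap.comp_apply] at this
          change Z1.mkQ (g v - h (D.f v)) = 0
          rw [map_sub, this, sub_self]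
        obtain ⟨x, hx, hx'⟩ := h1
        refine ⟨x, hx, ?_⟩
        rw [← hx']
        have h2 : p (w x) = 0 := by rw [hpx]; exact hx
        rw [hpv] at h2
        change g x - h (f0 (w x)) = g x
        rw [hhJ _ h2, sub_zero]
    obtain ⟨h1, hh1⟩ := huni Z hZ (z - h α)
    refine ⟨h + h1 ∘ₗ q, ?_, ?_⟩
    · refine LinearMap.ext fun v => ?_
      have e1 := LinearMap.congr_fun hqf v
      have e2 := LinearMap.congr_fun hδ v
      simp only [LinearMap.comp_apply, LinearMap.zero_apply, LinearMap.sub_apply, sub_eq_zero] at e1 e2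
      change h (D.f v) + h1 (q (D.f v)) = g v
      rw [e1, map_zero, add_zero, e2]
    · change h α + h1 (q α) = z
      rw [hα, hh1]; abel
  · refine hT.of_gen hM ?_
    unfold Gen
    rw [eq_top_iff]
    intro z _
    obtain ⟨h, h1, h2⟩ := hD 0 z
    have hk : LinearMap.ker q ≤ LinearMap.ker h := by
      refine hker.trans (sup_le ?_ (JS_le_ker J _ Z hZ h))
      rintro _ ⟨v, rfl⟩
      exact LinearMap.congr_fun h1 v
    let h' : M.carrier →ₗ[A] Z.carrier :=
      (LinearMap.ker q).liftQ h hk ∘ₗ (q.quotKerEquivOfSurjective hq).symm.toLinearMap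
    refine Submodule.mem_iSup_of_mem h' ⟨q α, ?_⟩
    rw [← h2]
    have : (q.quotKerEquivOfSurjective hq).symm (q α) = (LinearMap.ker q).mkQ α := by
      rw [LinearEquiv.symm_apply_eq]; rfl
    change (LinearMap.ker q).liftQ h hk ((q.quotKerEquivOfSurjective hq).symm (q α)) = _
    rw [this]; rfl
  · have e1 := q.quotKerEquivOfSurjective hq
    have h1 : T (⟨(Fin b → A) ⧸ LinearMap.ker q⟩ : FDMod k A) :=
      hT.quot M _ e1.symm.toLinearMap e1.symm.surjective hM
    refine hT.quot _ _ ((LinearMap.ker q).liftQ (LinearMap.range D.f ⊔ JS J (Fin b → A)).mkQ ?_) ?_ h1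
    · rw [Submodule.ker_mkQ]; exact hker
    · intro y
      obtain ⟨x, rfl⟩ := (LinearMap.range D.f ⊔ JS J (Fin b → A)).mkQ_surjective y
      exact ⟨(LinearMap.ker q).mkQ x, rfl⟩

end Brk

namespace Brk

theorem simple_hom_aux {R S Y : Type*} [Ring R] [AddCommGroup S] [Module R S] [IsSimpleModule R S]
    [AddCommGroup Y] [Module R Y] [IsSimpleModule R Y] (y : Y) (hy : y ≠ 0) (F : Finset S) :
    (∀ r : R, (∀ s ∈ F, r • s = 0) → r • y = 0) → ∃ s : S, s ≠ 0 ∧ ∀ x : R, x • y = 0 → x • s = 0 := by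
  classical
  induction F using Finset.induction_on with
  | empty =>
    intro h
    exact absurd (h 1 (by simp)) (by simpa using hy)
  | insert s F hs ih =>
    intro h
    by_cases hF : ∀ r : R, (∀ s ∈ F, r • s = 0) → r • y = 0
    · exact ih hF
    push Not at hF
    obtain ⟨c0, hc0, hc0y⟩ := hF
    obtain ⟨r, hr⟩ := IsSimpleModule.toSpanSingleton_surjective R hc0y y
    rw [LinearMap.toSpanSingleton_apply, ← mul_smul] at hr
    have hcF : ∀ s ∈ F, (r * c0) • s = 0 := fun s hs => by rw [mul_smul, hc0 s hs, smul_zero]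
    generalize r * c0 = c at hr hcF
    refine ⟨c • s, ?_, ?_⟩
    · intro hcs
      apply hy
      rw [← hr]
      apply h
      intro s' hs'
      rcases Finset.mem_insert.mp hs' with rfl | h1
      · exact hcs
      · exact hcF _ h1
    · intro x hx
      by_contra hne
      obtain ⟨q, hq⟩ := IsSimpleModule.toSpanSingleton_surjective R hne (c • s)
      rw [LinearMap.toSpanSingleton_apply] at hq
      have h2 : (c - q * x * c) • y = 0 := by
        apply h
        intro s' hs'
        rcases Finset.mem_insert.mp hs' with rfl | h1
        · rw [sub_smul, mul_smul, mul_smul, hq, sub_self]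
        · rw [sub_smul, mul_smul, hcF _ h1, smul_zero, sub_self]
      rw [sub_smul, mul_smul, hr, mul_smul, hx, smul_zero, sub_zero] at h2
      exact hy h2

theorem exists_desc {R M N Q : Type*} [Ring R] [AddCommGroup M] [Module R M] [AddCommGroup N] [Module R N]
    [AddCommGroup Q] [Module R Q] (φ : M →ₗ[R] N) (hφ : Function.Surjective φ) (ψ : M →ₗ[R] Q)
    (h : ∀ x, φ x = 0 → ψ x = 0) : ∃ g : N →ₗ[R] Q, ∀ x, g (φ x) = ψ x := by
  refine ⟨(LinearMap.ker φ).liftQ ψ h ∘ₗ (φ.quotKerEquivOfSurjective hφ).symm.toLinearMap, fun x => ?_⟩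
  have : (φ.quotKerEquivOfSurjective hφ).symm (φ x) = (LinearMap.ker φ).mkQ x := by
    rw [LinearEquiv.symm_apply_eq]; rfl
  change (LinearMap.ker φ).liftQ ψ h ((φ.quotKerEquivOfSurjective hφ).symm (φ x)) = _
  rw [this]; rfl

theorem simple_hom {R S Y : Type*} [Ring R] [AddCommGroup S] [Module R S] [IsSimpleModule R S]
    [AddCommGroup Y] [Module R Y] [Module.Finite R Y] [Nontrivial Y] (F : Finset S)
    (hF : ∀ r : R, (∀ s ∈ F, r • s = 0) → ∀ y : Y, r • y = 0) : ∃ ω : Y →ₗ[R] S, ω ≠ 0 := by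
  obtain ⟨N, hN, -⟩ := (eq_top_or_exists_le_coatom (⊥ : Submodule R Y)).resolve_left bot_ne_top
  have hs : IsSimpleModule R (Y ⧸ N) := isSimpleModule_iff_isCoatom.mpr hN
  have := hs.nontrivial
  obtain ⟨y, hy⟩ := exists_ne (0 : Y ⧸ N)
  obtain ⟨s, hs0, hs1⟩ := simple_hom_aux (R := R) y hy F (by
    intro r hr
    obtain ⟨y', rfl⟩ := N.mkQ_surjective y
    rw [← map_smul, hF r hr, map_zero])
  obtain ⟨g, hg⟩ := exists_desc (LinearMap.toSpanSingleton R (Y ⧸ N) y)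
    (IsSimpleModule.toSpanSingleton_surjective R hy) (LinearMap.toSpanSingleton R S s) hs1
  refine ⟨g ∘ₗ N.mkQ, fun h => hs0 ?_⟩
  obtain ⟨y', rfl⟩ := N.mkQ_surjective y
  have h1 := hg 1
  simp only [LinearMap.toSpanSingleton_apply, one_smul] at h1
  rw [← h1]
  exact LinearMap.congr_fun h y'

variable {k A : Type u} [Field k] [Ring A] [Algebra k A]

/-- The opposite endomorphism ring. -/
def EO (P : FDMod k A) : Type u := (Module.End A P.carrier)ᵐᵒᵖ

noncomputable instance (P : FDMod k A) : Ring (EO P) :=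
  inferInstanceAs (Ring (Module.End A P.carrier)ᵐᵒᵖ)
noncomputable instance (P : FDMod k A) : Algebra k (EO P) :=
  inferInstanceAs (Algebra k (Module.End A P.carrier)ᵐᵒᵖ)

/-- The underlying endomorphism. -/
def EO.un {P : FDMod k A} (r : EO P) : Module.End A P.carrier := MulOpposite.unop r
/-- The endomorphism as a scalar. -/
def EO.mk {P : FDMod k A} (r : Module.End A P.carrier) : EO P := MulOpposite.op r

noncomputable instance domMod (P Z : FDMod k A) : Module (EO P) (P.carrier →ₗ[A] Z.carrier) where
  smul r g := g ∘ₗ r.un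
  one_smul _ := rfl
  mul_smul _ _ _ := rfl
  smul_zero _ := rfl
  smul_add _ _ _ := rfl
  add_smul r s g := LinearMap.ext fun x => g.map_add (r.un x) (s.un x)
  zero_smul g := LinearMap.ext fun _ => g.map_zero

theorem dom_smul (P Z : FDMod k A) (u : EO P) (g : P.carrier →ₗ[A] Z.carrier) :
    u • g = g ∘ₗ u.un := rfl

instance domTower (P Z : FDMod k A) :
    IsScalarTower k (EO P) (P.carrier →ₗ[A] Z.carrier) where
  smul_assoc c r g := by
    refine LinearMap.ext fun p => ?_
    change g ((c • r.un) p) = c • g (r.un p)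
    exact (g.restrictScalars k).map_smul c _

theorem gen_mem {M Z : FDMod k A} (h : ∀ z : Z.carrier, ∃ (g : M.carrier →ₗ[A] Z.carrier) (x : M.carrier), g x = z) :
    Gen M Z := by
  unfold Gen
  rw [eq_top_iff]
  intro z _
  obtain ⟨g, x, hx⟩ := h z
  exact Submodule.mem_iSup_of_mem g ⟨x, hx⟩

theorem gen_pi (M : FDMod k A) (n : ℕ) : Gen M ⟨Fin n → M.carrier⟩ := by
  unfold Gen
  rw [eq_top_iff]
  intro x _
  have : x = ∑ i, LinearMap.single A (fun _ => M.carrier) i (x i) := by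
    ext j
    simp [Finset.sum_apply, Pi.single_apply]
  rw [this]
  refine Submodule.sum_mem _ (fun i _ => ?_)
  exact Submodule.mem_iSup_of_mem (p := fun g : M.carrier →ₗ[A] (Fin n → M.carrier) => LinearMap.range g)
    (LinearMap.single A (fun _ => M.carrier) i) ⟨_, rfl⟩

/-- first relation module -/
abbrev N1 (D : Dat A) (J : TwoSidedIdeal A) : Submodule A (Fin D.b → A) :=
  LinearMap.range D.f ⊔ JS J (Fin D.b → A)
/-- second relation module -/
abbrev N2 (D : Dat A) (J : TwoSidedIdeal A) : Submodule A (Fin D.b → A) :=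
  N1 D J ⊔ Submodule.span A {D.α}

/-- The relative projective generator. -/
abbrev PD [FiniteDimensional k A] (D : Dat A) (J : TwoSidedIdeal A) : FDMod k A :=
  ⟨((Fin D.b → A) ⧸ N1 D J) × ((Fin D.b → A) ⧸ N2 D J)⟩

theorem N1_le {D : Dat A} {J : TwoSidedIdeal A} {Z : FDMod k A} (hZ : Kd J Z)
    (h : (Fin D.b → A) →ₗ[A] Z.carrier) (hf : h ∘ₗ D.f = 0) : N1 D J ≤ LinearMap.ker h := by
  refine sup_le ?_ (JS_le_ker J _ Z hZ h)
  rintro _ ⟨v, rfl⟩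
  exact LinearMap.congr_fun hf v

theorem N2_le {D : Dat A} {J : TwoSidedIdeal A} {Z : FDMod k A} (hZ : Kd J Z)
    (h : (Fin D.b → A) →ₗ[A] Z.carrier) (hf : h ∘ₗ D.f = 0) (hα : h D.α = 0) :
    N2 D J ≤ LinearMap.ker h := by
  refine sup_le (N1_le hZ h hf) ?_
  rw [Submodule.span_le]
  rintro _ rfl
  exact hα

theorem f_mem (D : Dat A) (J : TwoSidedIdeal A) (v) : D.f v ∈ N1 D J := Submodule.mem_sup_left ⟨v, rfl⟩

section
variable [FiniteDimensional k A] {J : TwoSidedIdeal A} {T : FDMod k A → Prop} {D : Dat A}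

theorem PD_gen (hD : ∀ Z, T Z ↔ (Kd J Z ∧ TD D Z)) (Z : FDMod k A) (hZ : T Z) : Gen (PD D J) Z := by
  obtain ⟨h1, h2⟩ := (hD Z).mp hZ
  refine gen_mem fun z => ?_
  obtain ⟨h, hf, hα⟩ := h2 0 z
  refine ⟨(N1 D J).liftQ h (N1_le h1 h (by rw [hf]; rfl)) ∘ₗ LinearMap.fst A _ _, ((N1 D J).mkQ D.α, 0), ?_⟩
  rw [← hα]
  rfl

theorem PD_mem (hT : Tors J T) (hM : T (MD D J)) : T (PD D J) := by
  refine hT.of_gen hM ?_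
  unfold Gen
  rw [eq_top_iff]
  rintro ⟨x, y⟩ _
  obtain ⟨y, rfl⟩ := (N2 D J).mkQ_surjective y
  let e1 : (MD D J : FDMod k A).carrier →ₗ[A] (PD D J : FDMod k A).carrier := LinearMap.inl A _ _
  let e2 : (MD D J : FDMod k A).carrier →ₗ[A] (PD D J : FDMod k A).carrier :=
    LinearMap.inr A _ _ ∘ₗ Submodule.factor (le_sup_left : N1 D J ≤ N2 D J)
  have : (x, (N2 D J).mkQ y) = e1 x + e2 ((N1 D J).mkQ y) := by
    refine Prod.ext ?_ ?_
    · exact (add_zero x).symm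
    · exact (zero_add ((N2 D J).mkQ y)).symm
  rw [this]
  exact Submodule.add_mem _ (Submodule.mem_iSup_of_mem e1 ⟨_, rfl⟩) (Submodule.mem_iSup_of_mem e2 ⟨_, rfl⟩)

theorem lift_corr (hD : ∀ Z, T Z ↔ (Kd J Z ∧ TD D Z)) (Z : FDMod k A)
    (U : Submodule A Z.carrier) (hU : T (sub Z U)) (h0 : (Fin D.b → A) →ₗ[A] Z.carrier)
    (hf : ∀ v, h0 (D.f v) ∈ U) : ∃ h : (Fin D.b → A) →ₗ[A] Z.carrier,
      U.mkQ ∘ₗ h = U.mkQ ∘ₗ h0 ∧ h ∘ₗ D.f = 0 ∧ (h0 D.α ∈ U → h D.α = 0) := by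
  classical
  obtain ⟨-, h2⟩ := (hD _).mp hU
  obtain ⟨h', h3, h4⟩ := h2 ((h0 ∘ₗ D.f).codRestrict U hf)
    (if h : h0 D.α ∈ U then ⟨_, h⟩ else 0)
  refine ⟨h0 - U.subtype ∘ₗ h', ?_, ?_, ?_⟩
  · refine LinearMap.ext fun v => ?_
    change U.mkQ (h0 v - (h' v).1) = U.mkQ (h0 v)
    have : U.mkQ (h' v).1 = 0 := by
      rw [← LinearMap.mem_ker, Submodule.ker_mkQ]; exact (h' v).2
    rw [map_sub, this, sub_zero]
  · refine LinearMap.ext fun v => ?_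
    have e1 := congrArg Subtype.val (LinearMap.congr_fun h3 v)
    have e3 := LinearMap.congr_fun D.hf v
    change (h' (D.f v)).1 = h0 (D.f (D.w v)) at e1
    change D.f (D.w v) = D.f v at e3
    change h0 (D.f v) - (h' (D.f v)).1 = 0
    rw [e1, e3, sub_self]
  · intro hα
    rw [dif_pos hα] at h4
    change h0 D.α - (h' D.α).1 = 0
    rw [h4, sub_self]

theorem PD_lift (hD : ∀ Z, T Z ↔ (Kd J Z ∧ TD D Z)) (Z : FDMod k A) (hZ : Kd J Z)
    (U : Submodule A Z.carrier) (hU : T (sub Z U))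
    (g : (PD D J : FDMod k A).carrier →ₗ[A] (Z.carrier ⧸ U)) :
    ∃ g' : (PD D J : FDMod k A).carrier →ₗ[A] Z.carrier, U.mkQ ∘ₗ g' = g := by
  have hmk : ∀ x, U.mkQ x = 0 → x ∈ U := fun x hx => by
    rwa [← LinearMap.mem_ker, Submodule.ker_mkQ] at hx
  have z1 : ∀ x ∈ N1 D J, (N1 D J).mkQ x = 0 := fun x hx => by
    rwa [← LinearMap.mem_ker, Submodule.ker_mkQ]
  have z2 : ∀ x ∈ N2 D J, (N2 D J).mkQ x = 0 := fun x hx => by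
    rwa [← LinearMap.mem_ker, Submodule.ker_mkQ]
  obtain ⟨a, ha⟩ := Module.projective_lifting_property U.mkQ
    (g ∘ₗ LinearMap.inl A _ _ ∘ₗ (N1 D J).mkQ) U.mkQ_surjective
  obtain ⟨b, hb⟩ := Module.projective_lifting_property U.mkQ
    (g ∘ₗ LinearMap.inr A _ _ ∘ₗ (N2 D J).mkQ) U.mkQ_surjective
  obtain ⟨a', ha1, ha2, -⟩ := lift_corr hD Z U hU a (fun v => hmk _ (by
    have := LinearMap.congr_fun ha (D.f v)
    simp only [LinearMap.comp_apply] at this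
    rw [this, z1 _ (f_mem D J v), map_zero, map_zero]))
  obtain ⟨b', hb1, hb2, hb3⟩ := lift_corr hD Z U hU b (fun v => hmk _ (by
    have := LinearMap.congr_fun hb (D.f v)
    simp only [LinearMap.comp_apply] at this
    rw [this, z2 _ (Submodule.mem_sup_left (f_mem D J v)), map_zero, map_zero]))
  have hb4 : b' D.α = 0 := hb3 (hmk _ (by
    have := LinearMap.congr_fun hb D.α
    simp only [LinearMap.comp_apply] at this
    rw [this, z2 _ (Submodule.mem_sup_right (Submodule.mem_span_singleton_self _)), map_zero, map_zero]))
  refine ⟨LinearMap.coprod ((N1 D J).liftQ a' (N1_le hZ a' ha2)) ((N2 D J).liftQ b' (N2_le hZ b' hb2 hb4)), ?_⟩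
  refine LinearMap.ext ?_
  rintro ⟨x, y⟩
  obtain ⟨x, rfl⟩ := (N1 D J).mkQ_surjective x
  obtain ⟨y, rfl⟩ := (N2 D J).mkQ_surjective y
  change U.mkQ (a' x + b' y) = _
  have e1 := LinearMap.congr_fun (ha1.trans ha) x
  have e2 := LinearMap.congr_fun (hb1.trans hb) y
  simp only [LinearMap.comp_apply] at e1 e2
  rw [map_add, e1, e2, ← map_add]
  simp
end

end Brk

namespace Brk
variable {k A : Type u} [Field k] [Ring A] [Algebra k A] [FiniteDimensional k A]

/-- Relative projective generators of a torsion class. -/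
structure PG (J : TwoSidedIdeal A) (T : FDMod k A → Prop) (P : FDMod k A) : Prop where
  mem : T P
  gen : ∀ Z, T Z → Gen P Z
  lift : ∀ (Z : FDMod k A), Kd J Z → ∀ (U : Submodule A Z.carrier), T (sub Z U) →
    ∀ g : P.carrier →ₗ[A] (Z.carrier ⧸ U), ∃ g' : P.carrier →ₗ[A] Z.carrier, U.mkQ ∘ₗ g' = g
  ker : ∀ (W Z : FDMod k A) (Φ : W.carrier →ₗ[A] Z.carrier), T W → T Z →
    (∀ g : P.carrier →ₗ[A] Z.carrier, ∃ g' : P.carrier →ₗ[A] W.carrier, ∀ x, Φ (g' x) = g x) →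
    T (sub W (LinearMap.ker Φ))

theorem exists_PG {J : TwoSidedIdeal A} {T : FDMod k A → Prop} (hT : Tors J T) (hF : IsFac T) :
    ∃ P, PG J T P := by
  obtain ⟨D, hD, hM⟩ := exists_datum hT hF
  refine ⟨PD D J, PD_mem hT hM, PD_gen hD, PD_lift hD, ?_⟩
  intro Pa Z Φ hPa hZ hlift
  have hPaK := (hD Pa).mp hPa
  have hZK := (hD Z).mp hZ
  rw [hD]
  refine ⟨hPaK.1.inj (LinearMap.ker Φ).subtype (Submodule.injective_subtype _), fun y z => ?_⟩
  obtain ⟨h, h1, h2⟩ := hPaK.2 ((LinearMap.ker Φ).subtype ∘ₗ y) z.1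
  have e1 : (Φ ∘ₗ h) ∘ₗ D.f = 0 := by
    rw [LinearMap.comp_assoc, h1]
    exact LinearMap.ext fun v => (y (D.w v)).2
  have e2 : (Φ ∘ₗ h) D.α = 0 := by
    rw [LinearMap.comp_apply, h2]; exact z.2
  let l := (N2 D J).liftQ (Φ ∘ₗ h) (N2_le hZK.1 _ e1 e2)
  obtain ⟨g', hg'⟩ := hlift (l ∘ₗ LinearMap.snd A _ _)
  let m : (Fin D.b → A) →ₗ[A] Pa.carrier := g' ∘ₗ LinearMap.inr A _ _ ∘ₗ (N2 D J).mkQ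
  have hm0 : ∀ x ∈ N2 D J, m x = 0 := by
    intro x hx
    have : (N2 D J).mkQ x = 0 := by rwa [← LinearMap.mem_ker, Submodule.ker_mkQ]
    change g' (LinearMap.inr A _ _ ((N2 D J).mkQ x)) = 0
    rw [this, map_zero, map_zero]
  have hm1 : ∀ x, Φ (m x) = Φ (h x) := fun x => hg' _
  refine ⟨(h - m).codRestrict _ (fun x => ?_), ?_, ?_⟩
  · rw [LinearMap.mem_ker, LinearMap.sub_apply, map_sub, hm1, sub_self]
  · refine LinearMap.ext fun v => Subtype.ext ?_
    change h (D.f v) - m (D.f v) = (y (D.w v)).1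
    rw [hm0 _ (Submodule.mem_sup_left (f_mem D J v)), sub_zero]
    exact LinearMap.congr_fun h1 v
  · refine Subtype.ext ?_
    change h D.α - m D.α = z.1
    rw [hm0 _ (Submodule.mem_sup_right (Submodule.mem_span_singleton_self _)), sub_zero, h2]
/-- The core of the reduction: a nonzero map is produced from a homomorphism of
Hom-modules over the endomorphism ring. -/
theorem core_hom {J : TwoSidedIdeal A} {T : FDMod k A → Prop} (hT : Tors J T)
    {P : FDMod k A} (hPG : PG J T P) (Z Q : FDMod k A) (hZ : T Z)
    (ω : (P.carrier →ₗ[A] Z.carrier)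
      →ₗ[EO P] (P.carrier →ₗ[A] Q.carrier))
    (hω : ω ≠ 0) : ∃ g : Z.carrier →ₗ[A] Q.carrier, g ≠ 0 := by
  have hPT : T P := hPG.mem
  let bs := Module.finBasis k (P.carrier →ₗ[A] Z.carrier)
  set a := finrank k (P.carrier →ₗ[A] Z.carrier)
  let Pa : FDMod k A := ⟨Fin a → P.carrier⟩
  have hPa : T Pa := hT.of_gen hPT (gen_pi P a)
  let Φ : Pa.carrier →ₗ[A] Z.carrier := ∑ i, bs i ∘ₗ LinearMap.proj i
  let Ψ : Pa.carrier →ₗ[A] Q.carrier := ∑ i, ω (bs i) ∘ₗ LinearMap.proj i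
  have hΦx : ∀ x : Pa.carrier, Φ x = ∑ i, bs i (x i) := fun x => LinearMap.sum_apply _ _ _
  have hΨx : ∀ x : Pa.carrier, Ψ x = ∑ i, ω (bs i) (x i) := fun x => LinearMap.sum_apply _ _ _
  -- every map lifts through Φ
  have hlift : ∀ g : P.carrier →ₗ[A] Z.carrier, ∃ g' : P.carrier →ₗ[A] Pa.carrier, ∀ x, Φ (g' x) = g x := by
    intro g
    refine ⟨LinearMap.pi fun i => (bs.repr g i) • LinearMap.id, fun x => ?_⟩
    rw [hΦx]
    conv_rhs => rw [← bs.sum_repr g, LinearMap.sum_apply]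
    refine Finset.sum_congr rfl fun i _ => ?_
    exact ((bs i).restrictScalars k).map_smul _ _
  have hΦs : Function.Surjective Φ := by
    rw [← LinearMap.range_eq_top, eq_top_iff, ← (show _ = _ from hPG.gen Z hZ), iSup_le_iff]
    rintro g _ ⟨x, rfl⟩
    obtain ⟨g', hg'⟩ := hlift g
    exact ⟨g' x, hg' x⟩
  have hK : T (sub Pa (LinearMap.ker Φ)) := hPG.ker Pa Z Φ hPa hZ hlift
  have hΨK : Ψ ∘ₗ (LinearMap.ker Φ).subtype = 0 := by
    refine (hPG.gen _ hK).eq_zero (Z := sub Pa (LinearMap.ker Φ)) _ fun κ => ?_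
    let κi : Fin a → Module.End A P.carrier := fun i =>
      LinearMap.proj i ∘ₗ (LinearMap.ker Φ).subtype ∘ₗ κ
    have e1 : ∑ i, (EO.mk (κi i)) • bs i = 0 := by
      refine LinearMap.ext fun x => ?_
      have : Φ (κ x).1 = 0 := (κ x).2
      rw [hΦx] at this
      rw [LinearMap.sum_apply]
      exact this
    have e2 := congrArg ω e1
    rw [map_sum, map_zero] at e2
    refine LinearMap.ext fun x => ?_
    have e3 := LinearMap.congr_fun e2 x
    rw [LinearMap.sum_apply] at e3
    change Ψ (κ x).1 = 0
    rw [hΨx]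
    simp only [map_smul] at e3
    exact e3
  obtain ⟨g, hg⟩ := exists_desc Φ hΦs Ψ (fun x hx => LinearMap.congr_fun hΨK ⟨x, hx⟩)
  refine ⟨g, fun h0 => hω ?_⟩
  have hωb : ∀ i, ω (bs i) = 0 := by
    intro i
    refine LinearMap.ext fun x => ?_
    have e1 := hg (LinearMap.single A (fun _ => P.carrier) i x)
    rw [h0, hΨx, Finset.sum_eq_single i] at e1
    · simpa using e1.symm
    · intro j _ hj
      simp [Pi.single_eq_of_ne hj]
    · simp
  have h3 : ω.restrictScalars k = 0 := bs.ext hωb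
  exact LinearMap.ext fun x => LinearMap.congr_fun h3 x


/-- The trace of the maps factoring through a set of endomorphisms. -/
def BT (P : FDMod k A) (B : Submodule k (Module.End A P.carrier)) (Z : FDMod k A) :
    Submodule A Z.carrier :=
  ⨆ (g : P.carrier →ₗ[A] Z.carrier) (b : B), LinearMap.range (g ∘ₗ b.1)

theorem mem_BT {P : FDMod k A} {B : Submodule k (Module.End A P.carrier)} {Z : FDMod k A}
    (g : P.carrier →ₗ[A] Z.carrier) {b : Module.End A P.carrier} (hb : b ∈ B) (x : P.carrier) :
    g (b x) ∈ BT P B Z :=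
  Submodule.mem_iSup_of_mem g (Submodule.mem_iSup_of_mem ⟨b, hb⟩ ⟨x, rfl⟩)

theorem BT_le {P : FDMod k A} {B : Submodule k (Module.End A P.carrier)} {Z : FDMod k A}
    {U : Submodule A Z.carrier}
    (h : ∀ (g : P.carrier →ₗ[A] Z.carrier), ∀ b ∈ B, ∀ x, g (b x) ∈ U) : BT P B Z ≤ U := by
  unfold BT
  simp only [iSup_le_iff]
  rintro g ⟨b, hb⟩ _ ⟨x, rfl⟩
  exact h g b hb x

theorem BT_map {P : FDMod k A} {B : Submodule k (Module.End A P.carrier)} {Z Z' : FDMod k A}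
    (f : Z.carrier →ₗ[A] Z'.carrier) : (BT P B Z) ≤ (BT P B Z').comap f :=
  BT_le fun g _ hb x => mem_BT (f ∘ₗ g) hb x

theorem BT_tors {J : TwoSidedIdeal A} {T : FDMod k A → Prop} (hT : Tors J T)
    {P : FDMod k A} (hPG : PG J T P) (B : Submodule k (Module.End A P.carrier)) :
    Tors J (fun Z => T Z ∧ BT P B Z = ⊤) where
  kd := fun Z h => hT.kd Z h.1
  zero := fun Z h => ⟨hT.zero Z h, Subsingleton.elim _ _⟩
  quot := by
    rintro Z Z' f hf ⟨h1, h2⟩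
    refine ⟨hT.quot Z Z' f hf h1, ?_⟩
    rw [eq_top_iff]
    intro z _
    obtain ⟨x, rfl⟩ := hf z
    exact BT_map f (by rw [h2]; trivial)
  ext := by
    rintro Z U hZ ⟨h1, h2⟩ ⟨h3, h4⟩
    refine ⟨hT.ext Z U hZ h1 h3, ?_⟩
    have hU : U ≤ BT P B Z := by
      intro x hx
      exact BT_map (Z := sub Z U) U.subtype (show (⟨x, hx⟩ : U) ∈ BT P B (sub Z U) by rw [h2]; trivial)
    have hQ : BT P B (quo Z U) ≤ (BT P B Z).map U.mkQ := by
      refine BT_le fun g b hb x => ?_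
      obtain ⟨g', rfl⟩ := hPG.lift Z hZ U h1 g
      exact ⟨_, mem_BT g' hb x, rfl⟩
    rw [eq_top_iff]
    intro z _
    obtain ⟨z', hz', he⟩ := hQ (show U.mkQ z ∈ BT P B (quo Z U) by rw [h4]; trivial)
    have : z - z' ∈ U := by
      rw [← U.ker_mkQ, LinearMap.mem_ker, map_sub, he, sub_self]
    have := Submodule.add_mem _ (hU this) hz'
    simpa using this

theorem BT_fac {J : TwoSidedIdeal A} {T : FDMod k A → Prop} (hT : Tors J T)
    {P : FDMod k A} (hPG : PG J T P) (B : Submodule k (Module.End A P.carrier)) (hB : B ≤ B * B) :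
    IsFac (fun Z => T Z ∧ BT P B Z = ⊤) := by
  let G : Submodule A P.carrier := ⨆ b : B, LinearMap.range b.1
  have hbG : ∀ b ∈ B, ∀ x, b x ∈ G := fun b hb x => Submodule.mem_iSup_of_mem ⟨b, hb⟩ ⟨x, rfl⟩
  refine ⟨sub P G, ⟨?_, ?_⟩, ?_⟩
  · refine hT.of_gen hPG.mem ?_
    unfold Gen
    have : (⊤ : Submodule A G).map G.subtype ≤
        (⨆ g : P.carrier →ₗ[A] G, LinearMap.range g).map G.subtype := by
      rw [Submodule.map_top, Submodule.range_subtype, Submodule.map_iSup]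
      refine iSup_le fun b => ?_
      refine le_trans ?_ (le_iSup _ (b.1.codRestrict G (hbG b.1 b.2)))
      rintro _ ⟨x, rfl⟩
      exact ⟨_, ⟨x, rfl⟩, rfl⟩
    rw [eq_top_iff]
    exact (Submodule.map_le_map_iff_of_injective G.injective_subtype _ _).mp this
  · have : (⊤ : Submodule A G).map G.subtype ≤ (BT P B (sub P G)).map G.subtype := by
      rw [Submodule.map_top, Submodule.range_subtype]
      refine iSup_le ?_
      have key : ∀ b ∈ B * B, ∀ x, b x ∈ (BT P B (sub P G)).map G.subtype := by
        intro b hb'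
        induction hb' using Submodule.mul_induction_on' with
        | mem_mul_mem m hm n hn =>
          intro x
          exact ⟨_, mem_BT (Z := sub P G) (m.codRestrict G (hbG m hm)) hn x, rfl⟩
        | add u _ v _ hu hv => exact fun x => Submodule.add_mem _ (hu x) (hv x)
      rintro ⟨b, hb⟩ _ ⟨x, rfl⟩
      exact key b (hB hb) x
    rw [eq_top_iff]
    exact (Submodule.map_le_map_iff_of_injective G.injective_subtype _ _).mp this
  · rintro Z ⟨h1, h2⟩
    unfold Gen
    rw [eq_top_iff, ← h2]
    refine BT_le fun g b hb x => ?_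
    exact Submodule.mem_iSup_of_mem (g ∘ₗ G.subtype) ⟨⟨b x, hbG b hb x⟩, rfl⟩

end Brk

namespace Brk

theorem exists_pow {k E : Type u} [Field k] [Ring E] [Algebra k E] [FiniteDimensional k E]
    (a : Submodule k E) (ha : a * a ≤ a) :
    ∃ n : ℕ, a ^ (n + 1) ≤ a ^ (n + 1) * a ^ (n + 1) ∧ a ^ (n + 1) ≤ a := by
  have hstep : ∀ n : ℕ, a ^ (n + 1 + 1) ≤ a ^ (n + 1) := by
    intro n
    rw [pow_succ, pow_succ, mul_assoc]
    exact mul_le_mul_right ha _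
  have hanti : Antitone (fun n : ℕ => a ^ (n + 1)) := antitone_nat_of_succ_le hstep
  obtain ⟨n, hn⟩ := IsArtinian.monotone_stabilizes (R := k) (M := E)
    ⟨fun n => OrderDual.toDual (a ^ (n + 1)), fun i j h => hanti h⟩
  refine ⟨n, ?_, ?_⟩
  · rw [← pow_add]
    exact le_of_eq (hn (n + 1 + n) (by omega))
  · simpa using hanti (Nat.zero_le n)

variable {k A : Type u} [Field k] [Ring A] [Algebra k A] [FiniteDimensional k A]

/-- annihilator of a set of homomorphisms in the endomorphism ring -/
def annE (P Q : FDMod k A) (S : Submodule (EO P) (P.carrier →ₗ[A] Q.carrier)) :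
    Submodule k (Module.End A P.carrier) where
  carrier := {u | ∀ s ∈ S, s ∘ₗ u = 0}
  zero_mem' := fun s _ => LinearMap.comp_zero s
  add_mem' := fun {u v} hu hv s hs => by rw [LinearMap.comp_add, hu s hs, hv s hs, add_zero]
  smul_mem' := fun c u hu s hs => by
    refine LinearMap.ext fun x => ?_
    change s (c • u x) = 0
    have h1 : s (u x) = 0 := LinearMap.congr_fun (hu s hs) x
    have h2 := (s.restrictScalars k).map_smul c (u x)
    change s (c • u x) = c • s (u x) at h2
    rw [h2, h1, smul_zero]

theorem annE_left {P Q : FDMod k A} {S : Submodule (EO P) (P.carrier →ₗ[A] Q.carrier)}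
    {u : Module.End A P.carrier} (hu : u ∈ annE P Q S) (r : Module.End A P.carrier) :
    r * u ∈ annE P Q S := by
  intro s hs
  exact hu (s ∘ₗ r) (S.smul_mem (EO.mk r) hs)

theorem annE_right {P Q : FDMod k A} {S : Submodule (EO P) (P.carrier →ₗ[A] Q.carrier)}
    {u : Module.End A P.carrier} (hu : u ∈ annE P Q S) (r : Module.End A P.carrier) :
    u * r ∈ annE P Q S := by
  intro s hs
  change (s ∘ₗ u) ∘ₗ r = 0
  rw [hu s hs, LinearMap.zero_comp]

theorem step_aux {P Q : FDMod k A} {S : Submodule (EO P) (P.carrier →ₗ[A] Q.carrier)}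
    (Z : FDMod k A)
    (htop : Submodule.span (EO P) {h : P.carrier →ₗ[A] Z.carrier |
      ∃ (g : P.carrier →ₗ[A] Z.carrier), ∃ u ∈ annE P Q S, h = g ∘ₗ u} = ⊤)
    (n : ℕ) (hn : ∀ g : P.carrier →ₗ[A] Z.carrier, ∀ b ∈ annE P Q S ^ n, g ∘ₗ b = 0) :
    ∀ g : P.carrier →ₗ[A] Z.carrier, g = 0 := by
  induction n with
  | zero =>
    intro g
    have := hn g 1 (by rw [pow_zero]; exact Submodule.one_le.mp le_rfl)
    exact this
  | succ n ih =>
    apply ih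
    have key : ∀ g : P.carrier →ₗ[A] Z.carrier, g ∈ Submodule.span (EO P) {h : P.carrier →ₗ[A] Z.carrier |
      ∃ (g : P.carrier →ₗ[A] Z.carrier), ∃ u ∈ annE P Q S, h = g ∘ₗ u} →
      ∀ (r : Module.End A P.carrier), ∀ b ∈ annE P Q S ^ n, (g ∘ₗ r) ∘ₗ b = 0 := by
      intro g hg
      induction hg using Submodule.span_induction with
      | mem x hx =>
        obtain ⟨g, u, hu, rfl⟩ := hx
        intro r b hb
        have h1 : u * r * b ∈ annE P Q S ^ (n + 1) := by
          rw [pow_succ']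
          exact Submodule.mul_mem_mul (annE_right hu r) hb
        exact hn g _ h1
      | zero => intro r b _; rfl
      | add x y _ _ hx hy =>
        intro r b hb
        have h1 := hx r b hb
        have h2 := hy r b hb
        have : ((x + y) ∘ₗ r) ∘ₗ b = (x ∘ₗ r) ∘ₗ b + (y ∘ₗ r) ∘ₗ b := rfl
        rw [this, h1, h2, add_zero]
      | smul c x _ hx =>
        intro r b hb
        exact hx (c.un * r) b hb
    intro g b hb
    exact key g (by rw [htop]; trivial) 1 b hb

theorem step {J : TwoSidedIdeal A} {T t : FDMod k A → Prop} (hT : Tors J T) (hF : IsFac T)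
    (ht : Tors J t) (htT : ∀ Z, t Z → T Z) (hne : ¬ ∀ Z, T Z → t Z) :
    ∃ T' : FDMod k A → Prop, Tors J T' ∧ IsFac T' ∧ (∀ Z, t Z → T' Z) ∧ (∀ Z, T' Z → T Z) ∧
      ¬ ∀ Z, T Z → T' Z := by
  obtain ⟨P, hPG⟩ := exists_PG hT hF
  have hPt : ¬ t P := fun h => hne fun Z hZ => ht.of_gen h (hPG.gen Z hZ)
  obtain ⟨V, hV, hQ⟩ := ht.trace P (hT.kd P hPG.mem)
  have hmk : V.mkQ ≠ 0 := by
    intro h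
    apply hPt
    have hU2 : V = ⊤ := by rw [← V.ker_mkQ, h, LinearMap.ker_zero]
    refine ht.quot (sub P V) P V.subtype ?_ hV
    rw [← LinearMap.range_eq_top, Submodule.range_subtype, hU2]
  obtain ⟨Q, π, hπ, hQ⟩ : ∃ (Q : FDMod k A) (π : P.carrier →ₗ[A] Q.carrier), π ≠ 0 ∧
      ∀ N : FDMod k A, t N → ∀ g : N.carrier →ₗ[A] Q.carrier, g = 0 := ⟨quo P V, V.mkQ, hmk, hQ⟩
  have hArt : IsArtinian (EO P) (P.carrier →ₗ[A] Q.carrier) :=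
    isArtinian_of_tower k inferInstance
  obtain ⟨S, hS⟩ : ∃ S : Submodule (EO P) (P.carrier →ₗ[A] Q.carrier), IsAtom S := by
    rcases eq_bot_or_exists_atom_le (⊤ : Submodule (EO P) (P.carrier →ₗ[A] Q.carrier)) with h | ⟨S, h, _⟩
    · exfalso
      apply hπ
      have : π ∈ (⊤ : Submodule (EO P) (P.carrier →ₗ[A] Q.carrier)) := trivial
      rw [h] at this
      exact this
    · exact ⟨S, h⟩
  have hSs : IsSimpleModule (EO P) S := isSimpleModule_iff_isAtom.mpr hS
  set a := annE P Q S with ha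
  obtain ⟨n, hb1, hb2⟩ := exists_pow a (Submodule.mul_le.mpr fun u _ v hv => annE_left hv u)
  set b := a ^ (n + 1) with hb
  refine ⟨fun Z => T Z ∧ BT P b Z = ⊤, BT_tors hT hPG b, BT_fac hT hPG b hb1, ?_, fun Z h => h.1, ?_⟩
  · intro Z hZ
    refine ⟨htT Z hZ, ?_⟩
    have hTU : T (sub Z (BT P b Z)) := by
      refine hT.of_gen hPG.mem ?_
      unfold Gen
      have : (⊤ : Submodule A (BT P b Z)).map (BT P b Z).subtype ≤
          (⨆ g : P.carrier →ₗ[A] (BT P b Z), LinearMap.range g).map (BT P b Z).subtype := by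
        rw [Submodule.map_top, Submodule.range_subtype]
        refine BT_le fun g c hc x => ?_
        refine ⟨_, Submodule.mem_iSup_of_mem ((g ∘ₗ c).codRestrict (BT P b Z) (fun y => mem_BT g hc y)) ⟨x, rfl⟩, rfl⟩
      rw [eq_top_iff]
      exact (Submodule.map_le_map_iff_of_injective (BT P b Z).injective_subtype _ _).mp this
    obtain ⟨Z', q, hqs, hqk, hql⟩ : ∃ (Z' : FDMod k A) (q : Z.carrier →ₗ[A] Z'.carrier),
        Function.Surjective q ∧ LinearMap.ker q = BT P b Z ∧ ∀ g : P.carrier →ₗ[A] Z'.carrier,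
          ∃ g' : P.carrier →ₗ[A] Z.carrier, q ∘ₗ g' = g :=
      ⟨quo Z (BT P b Z), Submodule.mkQ _, Submodule.mkQ_surjective _, Submodule.ker_mkQ _,
        hPG.lift Z (ht.kd Z hZ) _ hTU⟩
    have hZ' : t Z' := ht.quot Z Z' q hqs hZ
    have hkill : ∀ g : P.carrier →ₗ[A] Z'.carrier, ∀ c ∈ b, g ∘ₗ c = 0 := by
      intro g c hc
      obtain ⟨g', rfl⟩ := hql g
      refine LinearMap.ext fun x => ?_
      have := mem_BT g' hc x
      rw [← hqk] at this
      exact this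
    have hH : ∀ g : P.carrier →ₗ[A] Z'.carrier, g = 0 := by
      by_cases htop : Submodule.span (EO P) {h : P.carrier →ₗ[A] Z'.carrier |
        ∃ (g : P.carrier →ₗ[A] Z'.carrier), ∃ u ∈ annE P Q S, h = g ∘ₗ u} = ⊤
      · exact step_aux Z' htop (n + 1) hkill
      exfalso
      set H := Submodule.span (EO P) {h : P.carrier →ₗ[A] Z'.carrier |
        ∃ (g : P.carrier →ₗ[A] Z'.carrier), ∃ u ∈ annE P Q S, h = g ∘ₗ u} with hHdef
      have : Nontrivial ((P.carrier →ₗ[A] Z'.carrier) ⧸ H) := Submodule.Quotient.nontrivial_iff.mpr htop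
      have hNoe : IsNoetherian (EO P) (P.carrier →ₗ[A] Z'.carrier) := isNoetherian_of_tower k inferInstance
      obtain ⟨F, hFs⟩ : (S.restrictScalars k).FG := IsNoetherian.noetherian _
      classical
      obtain ⟨ω, hω⟩ := simple_hom (R := EO P) (S := S) (Y := (P.carrier →ₗ[A] Z'.carrier) ⧸ H)
        (F.attach.image fun s => (⟨s.1, by
          have : s.1 ∈ S.restrictScalars k := by rw [← hFs]; exact Submodule.subset_span s.2
          exact this⟩ : S)) (by
        intro r hr y
        obtain ⟨y, rfl⟩ := H.mkQ_surjective y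
        have hra : r.un ∈ annE P Q S := by
          intro s hs
          have hs' : s ∈ Submodule.span k (F : Set (P.carrier →ₗ[A] Q.carrier)) := by rw [hFs]; exact hs
          clear hs
          induction hs' using Submodule.span_induction with
          | mem x hx =>
            have h1 := hr _ (Finset.mem_image_of_mem _ (Finset.mem_attach F ⟨x, hx⟩))
            exact congrArg Subtype.val h1
          | zero => rfl
          | add x y _ _ h1 h2 => rw [LinearMap.add_comp, h1, h2, add_zero]
          | smul c x _ h1 => rw [LinearMap.smul_comp, h1, smul_zero]
        rw [← map_smul, ← LinearMap.mem_ker, Submodule.ker_mkQ]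
        exact Submodule.subset_span ⟨y, r.un, hra, rfl⟩)
      obtain ⟨g, hg⟩ := core_hom hT hPG Z' Q (htT _ hZ') (S.subtype ∘ₗ ω ∘ₗ H.mkQ) (by
        intro h0
        apply hω
        refine LinearMap.ext fun y => ?_
        obtain ⟨y, rfl⟩ := H.mkQ_surjective y
        exact Subtype.ext (LinearMap.congr_fun h0 y))
      exact hg (hQ Z' hZ' g)
    have h0 : (LinearMap.id : Z'.carrier →ₗ[A] Z'.carrier) = 0 :=
      (hPG.gen Z' (htT _ hZ')).eq_zero _ fun u => by rw [hH u]; rfl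
    rw [eq_top_iff]
    intro z _
    rw [← hqk]
    exact LinearMap.congr_fun h0 (q z)
  · intro h
    obtain ⟨_, hP⟩ := h P hPG.mem
    apply hS.1
    rw [eq_bot_iff]
    intro s hs
    have : BT P b P ≤ LinearMap.ker s := by
      refine BT_le fun g c hc x => ?_
      exact LinearMap.congr_fun ((hb2 hc) (s ∘ₗ g) (S.smul_mem (EO.mk g) hs)) x
    rw [hP, top_le_iff, LinearMap.ker_eq_top] at this
    exact this

/-- Torsion classes of brick-finite quotients are generated by one module. -/
theorem fac_of_finite [IsAlgClosed k] {J : TwoSidedIdeal A} (hJ : BrickFiniteKilledBy k A J)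
    {t : FDMod k A → Prop} (ht : Tors J t) : IsFac t := by
  classical
  obtain ⟨m, fl, hfl⟩ := hJ
  let p : ℕ → Prop := fun n => ∃ T : FDMod k A → Prop, Tors J T ∧ IsFac T ∧ (∀ Z, t Z → T Z) ∧
    (Finset.univ.filter fun i => T (fl i)).card = n
  have hp : ∃ n, p n := by
    refine ⟨_, Kd J, ⟨fun _ h => h, ?_, ?_, ?_⟩, ?_, ht.kd, rfl⟩
    · intro Z hZ a _ x; exact Subsingleton.elim _ _
    · intro Z Z' g hg h; exact h.surj g hg
    · intro Z U h _ _; exact h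
    · refine ⟨⟨A ⧸ JS J A⟩, ?_, ?_⟩
      · intro a ha x
        obtain ⟨x, rfl⟩ := (JS J A).mkQ_surjective x
        rw [← map_smul, ← LinearMap.mem_ker, Submodule.ker_mkQ]
        exact smul_mem_JS J A ha x
      · intro Z hZ
        refine gen_mem fun z => ⟨(JS J A).liftQ (LinearMap.toSpanSingleton A _ z) (JS_le_ker J A Z hZ _),
          (JS J A).mkQ 1, ?_⟩
        simp
  obtain ⟨T, hT, hF, htT, hc⟩ := Nat.find_spec hp
  by_cases h : ∀ Z, T Z → t Z
  · obtain ⟨M, hM, hg⟩ := hF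
    exact ⟨M, h M hM, fun Z hZ => hg Z (htT Z hZ)⟩
  obtain ⟨T', hT', hF', h1, h2, h3⟩ := step hT hF ht htT h
  exfalso
  have hle := Nat.find_min' hp ⟨T', hT', hF', h1, rfl⟩
  have hsub : (Finset.univ.filter fun i => T' (fl i)) ⊆ (Finset.univ.filter fun i => T (fl i)) :=
    Finset.monotone_filter_right _ fun i _ hi => h2 _ hi
  have heq := Finset.eq_of_subset_of_card_le hsub (by omega)
  refine h3 (hT.le_of_bricks hT' fun Z hZ hTZ => ?_)
  obtain ⟨i, hi⟩ := hfl Z hZ (hT.kd Z hTZ)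
  rw [hT'.iso hi]
  have : i ∈ (Finset.univ.filter fun i => T (fl i)) := by simpa using (hT.iso hi).mp hTZ
  rw [← heq] at this
  simpa using this

end Brk

namespace Brk
variable {k A : Type u} [Field k] [Ring A] [Algebra k A] [FiniteDimensional k A]

theorem exists_bounded_kernel (X : FDMod k A) {ι : Type} [Fintype ι] (φ : ι → (X.carrier →ₗ[k] k)) :
    ∃ K : Submodule A X.carrier, (∀ x ∈ K, ∀ i, φ i x = 0) ∧
      finrank k (X.carrier ⧸ K) ≤ Fintype.card ι * finrank k A := by
  let Θ : ι → (X.carrier →ₗ[k] (A →ₗ[k] k)) := fun i =>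
    LinearMap.mk₂ k (fun x a => φ i (a • x))
      (fun x y a => by rw [smul_add, map_add])
      (fun c x a => by rw [smul_comm, map_smul])
      (fun x a a' => by rw [add_smul, map_add])
      (fun c x a => by rw [smul_assoc, map_smul])
  have hΘ : ∀ i x a, Θ i x a = φ i (a • x) := fun i x a => rfl
  let K : Submodule A X.carrier :=
    { carrier := {x | ∀ i, ∀ a : A, φ i (a • x) = 0}
      zero_mem' := fun i a => by rw [smul_zero, map_zero]
      add_mem' := fun {x y} hx hy i a => by rw [smul_add, map_add, hx, hy, add_zero]
      smul_mem' := fun c x hx i a => by rw [← mul_smul]; exact hx i _ }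
  refine ⟨K, fun x hx i => by simpa using hx i 1, ?_⟩
  let Ψ : X.carrier →ₗ[k] (ι → (A →ₗ[k] k)) := LinearMap.pi Θ
  have hK : K.restrictScalars k = LinearMap.ker Ψ := by
    ext x
    rw [LinearMap.mem_ker]
    constructor
    · intro hx
      funext i
      exact LinearMap.ext fun a => hx i a
    · intro hx i a
      exact LinearMap.congr_fun (congrFun hx i) a
  have h3 : finrank k (X.carrier ⧸ K) = finrank k (X.carrier ⧸ (K.restrictScalars k)) :=
    (Submodule.Quotient.restrictScalarsEquiv k K).finrank_eq.symm
  rw [h3, hK, Ψ.quotKerEquivRange.finrank_eq]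
  refine (Submodule.finrank_le _).trans ?_
  rw [Module.finrank_pi_fintype]
  simp

theorem not_TD_quot (D : Dat A) (X : FDMod k A) (hX : ¬ TD D X) :
    ∃ K : Submodule A X.carrier, ¬ TD D (quo X K) ∧
      finrank k (X.carrier ⧸ K) ≤ (D.c + 1) * finrank k A := by
  unfold TD at hX
  push Not at hX
  obtain ⟨y, z, hyz⟩ := hX
  let R : ((Fin D.b → A) →ₗ[A] X.carrier) →ₗ[k] (((Fin D.c → A) →ₗ[A] X.carrier) × X.carrier) :=
    { toFun := fun h => (h ∘ₗ D.f, h D.α)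
      map_add' := fun _ _ => rfl
      map_smul' := fun _ _ => rfl }
  have hnot : (y ∘ₗ D.w, z) ∉ LinearMap.range R := by
    rintro ⟨h, hh⟩
    exact hyz h (congrArg Prod.fst hh) (congrArg Prod.snd hh)
  obtain ⟨ξ, hξ1, hξ2⟩ := Submodule.exists_le_ker_of_notMem hnot
  let φ : Option (Fin D.c) → (X.carrier →ₗ[k] k) := fun o => match o with
    | none => ξ ∘ₗ LinearMap.inr k _ _
    | some i =>
      { toFun := fun x => ξ ((LinearMap.toSpanSingleton A X.carrier x ∘ₗ LinearMap.proj i) ∘ₗ D.w, 0)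
        map_add' := fun x x' => by
          rw [← map_add]
          congr 1
          refine Prod.ext (LinearMap.ext fun v => ?_) (by simp)
          simp
        map_smul' := fun c x => by
          rw [RingHom.id_apply, ← map_smul]
          congr 1
          refine Prod.ext (LinearMap.ext fun v => ?_) (by simp)
          exact smul_comm _ _ _ }
  obtain ⟨K, hK, hdim⟩ := exists_bounded_kernel X φ
  refine ⟨K, fun hTD => ?_, by simpa using hdim⟩
  obtain ⟨h', h1, h2⟩ := hTD (K.mkQ ∘ₗ y) (K.mkQ z)
  obtain ⟨h0, rfl⟩ := Module.projective_lifting_property K.mkQ h' K.mkQ_surjective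
  let d : (Fin D.c → A) →ₗ[A] X.carrier := y ∘ₗ D.w - h0 ∘ₗ D.f
  have hd : ∀ v, d v ∈ K := by
    intro v
    have := LinearMap.congr_fun h1 v
    simp only [LinearMap.comp_apply] at this
    rw [← K.ker_mkQ, LinearMap.mem_ker]
    simp only [d, LinearMap.sub_apply, LinearMap.comp_apply, map_sub, this, sub_self]
  have hz : z - h0 D.α ∈ K := by
    rw [← K.ker_mkQ, LinearMap.mem_ker, map_sub, ← h2]
    simp
  have hdw : d ∘ₗ D.w = d := by
    change (y ∘ₗ D.w - h0 ∘ₗ D.f) ∘ₗ D.w = _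
    rw [LinearMap.sub_comp, LinearMap.comp_assoc, LinearMap.comp_assoc, D.hw, D.hf]
  have hdsum : d = ∑ i, (LinearMap.toSpanSingleton A X.carrier (d (Pi.single i 1)) ∘ₗ LinearMap.proj i) ∘ₗ D.w := by
    conv_lhs => rw [← hdw]
    refine LinearMap.ext fun v => ?_
    rw [LinearMap.sum_apply]
    simp only [LinearMap.comp_apply, LinearMap.toSpanSingleton_apply, LinearMap.proj_apply]
    conv_lhs => rw [pi_eq_sum_univ' (D.w v)]
    rw [map_sum]
    refine Finset.sum_congr rfl fun i _ => ?_
    rw [← map_smul]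
  have e1 : ξ (d, 0) = 0 := by
    have : ((d, 0) : ((Fin D.c → A) →ₗ[A] X.carrier) × X.carrier) =
        ∑ i, ((LinearMap.toSpanSingleton A X.carrier (d (Pi.single i 1)) ∘ₗ LinearMap.proj i) ∘ₗ D.w, 0) := by
      refine Prod.ext ?_ ?_
      · rw [Prod.fst_sum]; exact hdsum
      · rw [Prod.snd_sum]; simp
    rw [this, map_sum]
    exact Finset.sum_eq_zero fun i _ => hK _ (hd _) (some i)
  have e2 : ξ (0, z - h0 D.α) = 0 := hK _ hz none
  have e3 : ξ (h0 ∘ₗ D.f, h0 D.α) = 0 := hξ2 ⟨h0, rfl⟩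
  apply hξ1
  have : (y ∘ₗ D.w, z) = (d, 0) + (0, z - h0 D.α) + (h0 ∘ₗ D.f, h0 D.α) := by
    refine Prod.ext ?_ ?_ <;> simp [d]
  rw [this, map_add, map_add, e1, e2, e3]
  simp

theorem kd_quo_JS (J : TwoSidedIdeal A) (Z : FDMod k A) : Kd J (quo Z (JS J Z.carrier)) := by
  intro a ha x
  obtain ⟨x, rfl⟩ := (JS J Z.carrier).mkQ_surjective x
  rw [← map_smul, ← LinearMap.mem_ker, Submodule.ker_mkQ]
  exact smul_mem_JS J _ ha x

theorem Tors.quo_JS {J : TwoSidedIdeal A} {t : FDMod k A → Prop} (ht : Tors J t)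
    (Z Z' : FDMod k A) (g : Z.carrier →ₗ[A] Z'.carrier) (hg : Function.Surjective g)
    (h : t (quo Z (JS J Z.carrier))) : t (quo Z' (JS J Z'.carrier)) := by
  refine ht.quot _ _ ((JS J Z.carrier).liftQ ((JS J Z'.carrier).mkQ ∘ₗ g)
    (JS_le_ker J _ (quo Z' (JS J Z'.carrier)) (kd_quo_JS J Z') _)) ?_ h
  intro y
  obtain ⟨y, rfl⟩ := (JS J Z'.carrier).mkQ_surjective y
  obtain ⟨x, rfl⟩ := hg y
  exact ⟨(JS J Z.carrier).mkQ x, rfl⟩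

/-- The modules killed by `I`, torsion-free with respect to `t`, whose maximal `J`-killed quotient
is torsion. -/
structure WW (I J : TwoSidedIdeal A) (t : FDMod k A → Prop) (Y : FDMod k A) : Prop where
  nt : Nontrivial Y.carrier
  kd : Kd I Y
  top : t (quo Y (JS J Y.carrier))
  free : ∀ N : FDMod k A, t N → ∀ g : N.carrier →ₗ[A] Y.carrier, g = 0

/-- The torsion class generated by `t`. -/
def hatT (I : TwoSidedIdeal A) (t : FDMod k A → Prop) (Z : FDMod k A) : Prop :=
  Kd I Z ∧ ∀ Y : FDMod k A, Kd I Y →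
    (∀ N : FDMod k A, t N → ∀ g : N.carrier →ₗ[A] Y.carrier, g = 0) →
    ∀ g : Z.carrier →ₗ[A] Y.carrier, g = 0

theorem hatT_tors (I : TwoSidedIdeal A) (t : FDMod k A → Prop) : Tors I (hatT I t) where
  kd := fun _ h => h.1
  zero := fun Z hs => ⟨fun a _ x => Subsingleton.elim _ _, fun Y _ _ g => LinearMap.ext fun x => by
    rw [Subsingleton.elim x 0, map_zero, map_zero]⟩
  quot := by
    rintro Z Z' f hf ⟨h1, h2⟩
    refine ⟨h1.surj f hf, fun Y hY hN g => LinearMap.ext fun z => ?_⟩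
    obtain ⟨x, rfl⟩ := hf z
    exact LinearMap.congr_fun (h2 Y hY hN (g ∘ₗ f)) x
  ext := by
    rintro Z U hk ⟨_, h2⟩ ⟨_, h4⟩
    refine ⟨hk, fun Y hY hN g => ?_⟩
    have e1 := h2 Y hY hN (g ∘ₗ U.subtype)
    have hle : U ≤ LinearMap.ker g := fun x hx => LinearMap.congr_fun e1 ⟨x, hx⟩
    have e2 := h4 Y hY hN (U.liftQ g hle)
    exact LinearMap.ext fun x => LinearMap.congr_fun e2 (U.mkQ x)

theorem kd_MD (D : Dat A) (I : TwoSidedIdeal A) : Kd I (MD (k := k) D I) := by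
  intro a ha x
  obtain ⟨x, rfl⟩ := (LinearMap.range D.f ⊔ JS I (Fin D.b → A)).mkQ_surjective x
  rw [← map_smul, ← LinearMap.mem_ker, Submodule.ker_mkQ]
  exact Submodule.mem_sup_right (smul_mem_JS I _ ha x)

theorem exists_WW {I J : TwoSidedIdeal A} (hIJ : I ≤ J) {t : FDMod k A → Prop} (ht : Tors J t)
    (D : Dat A) (hD : ∀ Z, t Z ↔ (Kd J Z ∧ TD D Z)) (hM : t (MD D J)) (X : FDMod k A)
    (hX : WW I J t X) :
    ∃ Y, WW I J t Y ∧ finrank k Y.carrier ≤ D.b * finrank k A + (D.c + 1) * finrank k A := by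
  have hIk : ∀ Z : FDMod k A, Kd J Z → Kd I Z := fun Z h a ha => h a (hIJ ha)
  have hsub : ∀ Z, t Z → hatT I t Z := fun Z hZ => ⟨hIk Z (ht.kd Z hZ), fun Y _ hN => hN Z hZ⟩
  have hXn : ¬ hatT I t X := by
    intro h
    have := h.2 X hX.kd hX.free LinearMap.id
    have hn := hX.nt
    obtain ⟨x, hx⟩ := exists_ne (0 : X.carrier)
    exact hx (LinearMap.congr_fun this x)
  have hhat : ∀ Z, hatT I t Z → TD D Z := by
    intro Z hZ
    obtain ⟨U, hU, hU'⟩ := (TD_tors D I).trace Z hZ.1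
    have h0 : U.mkQ = 0 := hZ.2 (quo Z U) (hZ.1.surj (Z' := quo Z U) U.mkQ U.mkQ_surjective)
      (fun N hN => hU' N ⟨hIk N (ht.kd N hN), ((hD N).mp hN).2⟩) _
    have hU2 : U = ⊤ := by rw [← U.ker_mkQ, h0, LinearMap.ker_zero]
    refine ((TD_tors D I).quot (sub Z U) Z U.subtype ?_ hU).2
    rw [← LinearMap.range_eq_top, Submodule.range_subtype, hU2]
  suffices h : ∃ Z : FDMod k A, Kd I Z ∧ ¬ hatT I t Z ∧ t (quo Z (JS J Z.carrier)) ∧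
      finrank k Z.carrier ≤ D.b * finrank k A + (D.c + 1) * finrank k A by
    obtain ⟨Z, h1, h2, h3, h4⟩ := h
    obtain ⟨U, hU, hU'⟩ := (hatT_tors I t).trace Z h1
    refine ⟨quo Z U, ⟨?_, h1.surj (Z' := quo Z U) U.mkQ U.mkQ_surjective,
      ht.quo_JS Z (quo Z U) U.mkQ U.mkQ_surjective h3, fun N hN => hU' N (hsub N hN)⟩,
      (finrank_le_surj (Z' := quo Z U) U.mkQ U.mkQ_surjective).trans h4⟩
    refine Submodule.Quotient.nontrivial_iff.mpr fun hU2 => h2 ?_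
    refine (hatT_tors I t).quot (sub Z U) Z U.subtype ?_ hU
    rw [← LinearMap.range_eq_top, Submodule.range_subtype, hU2]
  by_cases hMh : hatT I t (MD D I)
  · have hXT : ¬ TD D X := by
      intro hXT
      refine hXn ((hatT_tors I t).of_gen hMh (gen_mem fun z => ?_))
      obtain ⟨h, h1, h2⟩ := hXT 0 z
      rw [LinearMap.zero_comp] at h1
      exact ⟨(N1 D I).liftQ h (N1_le hX.kd h h1), (N1 D I).mkQ D.α, h2⟩
    obtain ⟨K, hK, hdim⟩ := not_TD_quot D X hXT
    refine ⟨quo X K, hX.kd.surj (Z' := quo X K) K.mkQ K.mkQ_surjective, fun h => hK (hhat _ h),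
      ht.quo_JS X (quo X K) K.mkQ K.mkQ_surjective hX.top, hdim.trans (by omega)⟩
  · refine ⟨MD D I, kd_MD D I, hMh, ?_, ?_⟩
    · have hle : N1 D J ≤ LinearMap.ker ((JS J (MD (k := k) D I).carrier).mkQ ∘ₗ (N1 D I).mkQ) := by
        refine N1_le (k := k) (Z := quo (MD D I) (JS J (MD (k := k) D I).carrier)) (kd_quo_JS J _) _ ?_
        refine LinearMap.ext fun v => ?_
        have : (N1 D I).mkQ (D.f v) = 0 := by
          rw [← LinearMap.mem_ker, Submodule.ker_mkQ]
          exact Submodule.mem_sup_left ⟨v, rfl⟩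
        change (JS J (MD (k := k) D I).carrier).mkQ ((N1 D I).mkQ (D.f v)) = 0
        rw [this, map_zero]
      refine ht.quot (MD D J) _ ((N1 D J).liftQ _ hle) ?_ hM
      intro y
      obtain ⟨y, rfl⟩ := (JS J (MD (k := k) D I).carrier).mkQ_surjective y
      obtain ⟨x, rfl⟩ := (N1 D I).mkQ_surjective y
      exact ⟨(N1 D J).mkQ x, rfl⟩
    · have := finrank_le_surj (Z := (⟨Fin D.b → A⟩ : FDMod k A)) (Z' := MD D I) (N1 D I).mkQ
        (N1 D I).mkQ_surjective
      refine this.trans ?_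
      rw [Module.finrank_pi_fintype]
      simp

theorem WW.range {I I' J : TwoSidedIdeal A} {t : FDMod k A → Prop} (ht : Tors J t) {Y Y' : FDMod k A}
    (h : WW I J t Y) (h' : WW I' J t Y') (g : Y.carrier →ₗ[A] Y'.carrier) (hg : g ≠ 0) :
    WW I J t ⟨LinearMap.range g⟩ ∧ WW I' J t ⟨LinearMap.range g⟩ := by
  have hn : Nontrivial (LinearMap.range g) := by
    rw [Submodule.nontrivial_iff_ne_bot, Ne, LinearMap.range_eq_bot]; exact hg
  have htop := ht.quo_JS Y ⟨LinearMap.range g⟩ g.rangeRestrict g.surjective_rangeRestrict h.top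
  have hfree : ∀ N : FDMod k A, t N → ∀ f : N.carrier →ₗ[A] LinearMap.range g, f = 0 := by
    intro N hN f
    have := h'.free N hN ((LinearMap.range g).subtype ∘ₗ f)
    exact LinearMap.ext fun x => Subtype.ext (LinearMap.congr_fun this x)
  exact ⟨⟨hn, h.kd.surj (Z' := ⟨LinearMap.range g⟩) g.rangeRestrict g.surjective_rangeRestrict, htop, hfree⟩,
    ⟨hn, h'.kd.inj (Z := ⟨LinearMap.range g⟩) (LinearMap.range g).subtype (Submodule.injective_subtype _), htop, hfree⟩⟩

/-- Minimal-dimensional members. -/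
def WMin (I J : TwoSidedIdeal A) (t : FDMod k A → Prop) (Y : FDMod k A) : Prop :=
  WW I J t Y ∧ ∀ Y', WW I J t Y' → finrank k Y.carrier ≤ finrank k Y'.carrier

theorem exists_WMin {I J : TwoSidedIdeal A} (hIJ : I ≤ J) {t : FDMod k A → Prop} (ht : Tors J t)
    (D : Dat A) (hD : ∀ Z, t Z ↔ (Kd J Z ∧ TD D Z)) (hM : t (MD D J)) (X : FDMod k A)
    (hX : WW I J t X) :
    ∃ Y, WMin I J t Y ∧ finrank k Y.carrier ≤ D.b * finrank k A + (D.c + 1) * finrank k A := by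
  classical
  obtain ⟨Y0, hY0, hd0⟩ := exists_WW hIJ ht D hD hM X hX
  have hp : ∃ n, ∃ Y, WW I J t Y ∧ finrank k Y.carrier = n := ⟨_, Y0, hY0, rfl⟩
  obtain ⟨Y, hY, hYn⟩ := Nat.find_spec hp
  have hmin : ∀ Y', WW I J t Y' → finrank k Y.carrier ≤ finrank k Y'.carrier := by
    intro Y' hY'
    rw [hYn]
    exact Nat.find_min' hp ⟨Y', hY', rfl⟩
  exact ⟨Y, ⟨hY, hmin⟩, (hmin Y0 hY0).trans hd0⟩

theorem WMin.bij {I I' J : TwoSidedIdeal A} {t : FDMod k A → Prop} (ht : Tors J t) {Y Y' : FDMod k A}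
    (h : WMin I J t Y) (h' : WMin I' J t Y') (g : Y.carrier →ₗ[A] Y'.carrier) (hg : g ≠ 0) :
    Function.Bijective g := by
  obtain ⟨h1, h2⟩ := h.1.range ht h'.1 g hg
  have e1 := h.2 _ h1
  have e2 := h'.2 _ h2
  constructor
  · by_contra hni
    have := finrank_range_lt g hni
    exact absurd e1 (by simpa using this)
  · rw [← LinearMap.range_eq_top]
    by_contra hne
    have h3 : finrank k (LinearMap.range g) < finrank k (⊤ : Submodule A Y'.carrier) :=
      finrank_sub_lt (lt_top_iff_ne_top.mpr hne)
    have h4 : finrank k (⊤ : Submodule A Y'.carrier) = finrank k Y'.carrier :=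
      finrank_top k Y'.carrier
    rw [h4] at h3
    exact absurd e2 (by simpa using h3)

theorem WMin.brick [IsAlgClosed k] {I J : TwoSidedIdeal A} {t : FDMod k A → Prop} (ht : Tors J t)
    {Y : FDMod k A} (h : WMin I J t Y) : Y.IsBrick := by
  have := h.1.nt
  exact brick_of Y fun g hg => (h.bij ht h g hg).1

end Brk

namespace Brk
variable {k A : Type u} [Field k] [Ring A] [Algebra k A] [FiniteDimensional k A]

/-- The annihilator of a module. -/
def annT (Z : FDMod k A) : TwoSidedIdeal A := TwoSidedIdeal.ker (Module.toAddMonoidEnd A Z.carrier)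

theorem mem_annT (Z : FDMod k A) (a : A) : a ∈ annT Z ↔ ∀ x : Z.carrier, a • x = 0 := by
  unfold annT
  rw [TwoSidedIdeal.mem_ker]
  exact ⟨fun h x => DFunLike.congr_fun h x, fun h => AddMonoidHom.ext h⟩

theorem kd_iff (J : TwoSidedIdeal A) (Z : FDMod k A) : Kd J Z ↔ J ≤ annT Z :=
  ⟨fun h a ha => (mem_annT Z a).mpr (h a ha), fun h a ha => (mem_annT Z a).mp (h ha)⟩

theorem Kd.iso {J : TwoSidedIdeal A} {Z Z' : FDMod k A} (h : Z.Iso Z') (hZ : Kd J Z) : Kd J Z' := by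
  obtain ⟨e⟩ := h
  exact hZ.surj e.toLinearMap e.surjective

variable (k) in
/-- dimension of a two-sided ideal -/
noncomputable def idim (J : TwoSidedIdeal A) : ℕ :=
  finrank k ((TwoSidedIdeal.asIdeal J).restrictScalars k)

theorem idim_eq {I J : TwoSidedIdeal A} (h : I ≤ J) (hd : idim k J ≤ idim k I) : J ≤ I := by
  have h1 : (TwoSidedIdeal.asIdeal I).restrictScalars k ≤ (TwoSidedIdeal.asIdeal J).restrictScalars k :=
    fun a ha => TwoSidedIdeal.mem_asIdeal.mpr (h (TwoSidedIdeal.mem_asIdeal.mp ha))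
  have h2 := Submodule.eq_of_le_of_finrank_le h1 hd
  intro a ha
  have h3 : a ∈ (TwoSidedIdeal.asIdeal J).restrictScalars k := TwoSidedIdeal.mem_asIdeal.mpr ha
  rw [← h2] at h3
  exact TwoSidedIdeal.mem_asIdeal.mp h3

/-- The torsion class of `J`-killed modules without maps to `X`. -/
def tX (J : TwoSidedIdeal A) (X Z : FDMod k A) : Prop :=
  Kd J Z ∧ ∀ g : Z.carrier →ₗ[A] X.carrier, g = 0

theorem tX_tors (J : TwoSidedIdeal A) (X : FDMod k A) : Tors J (tX J X) where
  kd := fun _ h => h.1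
  zero := fun Z hs => ⟨fun a _ x => Subsingleton.elim _ _, fun g => LinearMap.ext fun x => by
    rw [Subsingleton.elim x 0, map_zero, map_zero]⟩
  quot := by
    rintro Z Z' f hf ⟨h1, h2⟩
    refine ⟨h1.surj f hf, fun g => LinearMap.ext fun z => ?_⟩
    obtain ⟨x, rfl⟩ := hf z
    exact LinearMap.congr_fun (h2 (g ∘ₗ f)) x
  ext := by
    rintro Z U hk ⟨_, h2⟩ ⟨_, h4⟩
    refine ⟨hk, fun g => ?_⟩
    have e1 := h2 (g ∘ₗ U.subtype)
    have hle : U ≤ LinearMap.ker g := fun x hx => LinearMap.congr_fun e1 ⟨x, hx⟩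
    have e2 := h4 (U.liftQ g hle)
    exact LinearMap.ext fun x => LinearMap.congr_fun e2 (U.mkQ x)

theorem tX_eq [IsAlgClosed k] {J : TwoSidedIdeal A} {m : ℕ} {fl : Fin m → FDMod k A}
    (hfl : ∀ N : FDMod k A, N.IsBrick → (∀ a ∈ J, ∀ x : N.carrier, a • x = 0) → ∃ i, N.Iso (fl i))
    (X X' : FDMod k A) (h : ∀ i, tX J X (fl i) → tX J X' (fl i)) : ∀ Z, tX J X Z → tX J X' Z := by
  refine (tX_tors J X).le_of_bricks (tX_tors J X') fun Z hZ hZt => ?_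
  obtain ⟨i, hi⟩ := hfl Z hZ hZt.1
  exact ((tX_tors J X').iso hi).mpr (h i (((tX_tors J X).iso hi).mp hZt))

theorem WW_brick {J : TwoSidedIdeal A} {X : FDMod k A} (hX : X.IsBrick) (hJ : ¬ Kd J X) :
    WW (annT X) J (tX J X) X := by
  refine ⟨hX.1, (kd_iff _ _).mpr le_rfl, ⟨kd_quo_JS J X, fun g => ?_⟩, fun N hN => hN.2⟩
  obtain ⟨c, hc⟩ := hX.2 (g ∘ₗ (JS J X.carrier).mkQ)
  by_cases h0 : c = 0
  · refine LinearMap.ext fun y => ?_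
    obtain ⟨x, rfl⟩ := (JS J X.carrier).mkQ_surjective y
    have := hc x
    rw [h0, zero_smul] at this
    exact this
  · exfalso
    apply hJ
    intro a ha x
    have h1 := hc (a • x)
    have h2 : (JS J X.carrier).mkQ (a • x) = 0 := by
      rw [← LinearMap.mem_ker, Submodule.ker_mkQ]
      exact smul_mem_JS J _ ha x
    rw [LinearMap.comp_apply, h2, map_zero] at h1
    exact (smul_eq_zero.mp h1.symm).resolve_left h0

theorem WW.not_kd {I J : TwoSidedIdeal A} {t : FDMod k A → Prop} (ht : Tors J t) {Y : FDMod k A}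
    (h : WW I J t Y) : ¬ Kd J Y := by
  intro hk
  have h1 : t Y := by
    refine ht.quot _ Y ((JS J Y.carrier).liftQ LinearMap.id (JS_le_ker J _ Y hk _)) ?_ h.top
    intro y
    exact ⟨(JS J Y.carrier).mkQ y, rfl⟩
  have := h.nt
  obtain ⟨x, hx⟩ := exists_ne (0 : Y.carrier)
  exact hx (LinearMap.congr_fun (h.free Y h1 LinearMap.id) x)

theorem pigeon {ι : Type v} (U : Ultrafilter ι) {κ : Type*} [Finite κ] (f : ι → κ) :
    ∃ c, ∀ᶠ j in U, f j = c := by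
  obtain ⟨c, hc⟩ := Ultrafilter.eq_pure_of_finite (U.map f)
  refine ⟨c, ?_⟩
  have : ({c} : Set κ) ∈ U.map f := by rw [hc]; exact Set.mem_singleton c
  exact this

end Brk

open Brk in
theorem Brk.main_result {k A : Type u} [Field k] [IsAlgClosed k] [Ring A] [Algebra k A]
    [FiniteDimensional k A] (hmin : MinimalBrickInfinite k A)
    {J : Type v} [Infinite J] (X : J → FDMod k A)
    (hbrick : ∀ j, (X j).IsBrick)
    (hnoniso : ∀ i j, i ≠ j → ¬(X i).Iso (X j))
    (hunfaithful : ∀ j, ∃ a : A, a ≠ 0 ∧ ∀ x : (X j).carrier, a • x = 0) :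
    ∃ d : ℕ, 0 < d ∧
      ∃ (L : Type u) (B : L → FDMod k A), Infinite L ∧
        HomOrthFamily B ∧ (∀ l, (B l).IsBrick) ∧
        (∀ l, finrank k (B l).carrier = d) := by
  classical
  let U : Ultrafilter J := Filter.hyperfilter J
  -- the minimal eventual ideal
  let JJ : Set J → TwoSidedIdeal A := fun S => ⨆ j ∈ S, annT (X j)
  have hJJ : ∀ {S S' : Set J}, S ⊆ S' → JJ S ≤ JJ S' := fun h => biSup_mono fun j hj => h hj
  have hp : ∃ n, ∃ S ∈ U, idim k (JJ S) = n := ⟨_, Set.univ, Filter.univ_mem, rfl⟩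
  obtain ⟨S0, hS0, hn⟩ := Nat.find_spec hp
  obtain ⟨J0, hJ0⟩ : ∃ J0, J0 = JJ S0 := ⟨_, rfl⟩
  have hJ0le : ∀ S ∈ U, J0 ≤ JJ S := by
    intro S hS
    have h1 := Nat.find_min' hp ⟨S ∩ S0, Filter.inter_mem hS hS0, rfl⟩
    rw [← hn] at h1
    rw [hJ0]
    exact (idim_eq (k := k) (hJJ Set.inter_subset_right) h1).trans (hJJ Set.inter_subset_left)
  have hI0 : ∀ j ∈ S0, annT (X j) ≤ J0 := by
    intro j hj
    rw [hJ0]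
    exact le_biSup (fun j => annT (X j)) hj
  have hJ0ne : ∃ a ∈ J0, a ≠ 0 := by
    obtain ⟨j, hj⟩ := U.nonempty_of_mem hS0
    obtain ⟨a, ha, hx⟩ := hunfaithful j
    exact ⟨a, hI0 j hj ((mem_annT _ _).mpr hx), ha⟩
  have hfin := hmin.2 J0 hJ0ne
  obtain ⟨m, fl, hfl⟩ := id hfin
  -- eventually not killed
  have hnk : ∀ᶠ j in U, ¬ Kd J0 (X j) := by
    have hf : {j | Kd J0 (X j)}.Finite := by
      have hc : ∀ j : {j | Kd J0 (X j)}, ∃ i, (X j).Iso (fl i) := fun j => hfl _ (hbrick _) j.2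
      choose c hc using hc
      have hinj : Function.Injective c := by
        intro i j hij
        by_contra hne
        obtain ⟨e1⟩ := hc i
        obtain ⟨e2⟩ := hc j
        rw [← hij] at e2
        exact hnoniso i j (fun h => hne (Subtype.ext h)) ⟨e1.trans e2.symm⟩
      exact Set.finite_coe_iff.mp (Finite.of_injective c hinj)
    exact Filter.compl_mem_hyperfilter_of_finite hf
  obtain ⟨p, hpat⟩ := pigeon U (fun j => fun i => tX J0 (X j) (fl i))
  obtain ⟨j1, hj1⟩ := U.nonempty_of_mem hpat
  obtain ⟨t, htdef⟩ : ∃ t, t = tX J0 (X j1) := ⟨_, rfl⟩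
  have ht : Tors J0 t := htdef ▸ tX_tors J0 (X j1)
  have hteq : ∀ᶠ j in U, tX J0 (X j) = t := by
    filter_upwards [hpat] with j hj
    have hij : ∀ i, tX J0 (X j) (fl i) ↔ tX J0 (X j1) (fl i) := fun i =>
      iff_of_eq ((congrFun hj i).trans (congrFun hj1 i).symm)
    rw [htdef]
    funext Z
    exact propext ⟨tX_eq hfl _ _ (fun i => (hij i).mp) Z, tX_eq hfl _ _ (fun i => (hij i).mpr) Z⟩
  obtain ⟨D, hD, hM⟩ := exists_datum ht (fac_of_finite hfin ht)
  obtain ⟨N0, hN0⟩ : ∃ N0, N0 = D.b * finrank k A + (D.c + 1) * finrank k A := ⟨_, rfl⟩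
  have hY : ∀ j, ∃ Y : FDMod k A, (j ∈ S0 ∧ ¬ Kd J0 (X j) ∧ tX J0 (X j) = t) →
      WMin (annT (X j)) J0 t Y ∧ finrank k Y.carrier ≤ N0 := by
    intro j
    by_cases h : j ∈ S0 ∧ ¬ Kd J0 (X j) ∧ tX J0 (X j) = t
    · obtain ⟨Y, h1⟩ := exists_WMin (hI0 j h.1) ht D hD hM (X j) (by
        have := WW_brick (hbrick j) h.2.1
        rwa [h.2.2] at this)
      exact ⟨Y, fun _ => by rw [hN0]; exact h1⟩
    · exact ⟨X j, fun h' => absurd h' h⟩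
  choose Y hY using hY
  have hG : ∀ᶠ j in U, WMin (annT (X j)) J0 t (Y j) ∧ finrank k (Y j).carrier ≤ N0 := by
    filter_upwards [hS0, hnk, hteq] with j h1 h2 h3
    exact hY j ⟨h1, h2, h3⟩
  obtain ⟨d, hd⟩ := pigeon U (fun j => (⟨min (finrank k (Y j).carrier) N0, by omega⟩ : Fin (N0 + 1)))
  have hG' : ∀ᶠ j in U, WMin (annT (X j)) J0 t (Y j) ∧ finrank k (Y j).carrier = d := by
    filter_upwards [hG, hd] with j h1 h2
    refine ⟨h1.1, ?_⟩
    have := congrArg Fin.val h2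
    simp only at this
    omega
  have hrare : ∀ r, WMin (annT (X r)) J0 t (Y r) → ∀ᶠ s in U, ¬ (Y s).Iso (Y r) := by
    intro r hr
    rw [Ultrafilter.eventually_not]
    intro hev
    have hS := Filter.inter_mem hG' hev
    refine hr.1.not_kd ht ((kd_iff _ _).mpr ((hJ0le _ hS).trans ?_))
    refine iSup₂_le fun s hs => ?_
    exact (kd_iff _ _).mp (Kd.iso hs.2 hs.1.1.1.kd)
  obtain ⟨j2, hj2⟩ := U.nonempty_of_mem hG'
  have hd0 : 0 < (d : ℕ) := by
    have := hj2.1.1.nt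
    rw [← hj2.2]
    exact Module.finrank_pos
  let R : J → J → Prop := fun r s => ¬ (Y s).Iso (Y r) ∧ ¬ (Y r).Iso (Y s)
  have hsymm : Std.Symm R := ⟨fun r s h => ⟨h.2, h.1⟩⟩
  obtain ⟨f, hf1, hf2⟩ := exists_seq_of_forall_finset_exists'
    (fun j => WMin (annT (X j)) J0 t (Y j) ∧ finrank k (Y j).carrier = d) R (by
      intro s hs
      have h1 : ∀ᶠ y in U, ∀ x ∈ s, ¬ (Y y).Iso (Y x) :=
        (Filter.eventually_all_finset s).mpr fun x hx => hrare x (hs x hx).1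
      obtain ⟨y, hy1, hy2⟩ := U.nonempty_of_mem (Filter.inter_mem hG' h1)
      exact ⟨y, hy1, fun x hx => ⟨hy2 x hx, fun ⟨e⟩ => hy2 x hx ⟨e.symm⟩⟩⟩)
  have horth : ∀ i j, i ≠ j → ∀ g : (Y (f i)).carrier →ₗ[A] (Y (f j)).carrier, g = 0 := by
    intro i j hij g
    by_contra hg
    exact (hf2 hij).2 ⟨LinearEquiv.ofBijective g ((hf1 i).1.bij ht (hf1 j).1 g hg)⟩
  refine ⟨d, hd0, ULift ℕ, fun l => Y (f l.down), inferInstance, ⟨?_, ?_, ?_⟩, ?_, ?_⟩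
  · exact fun i => (hf1 _).1.1.nt
  · intro i j hij
    exact (hf2 (fun h => hij (ULift.ext _ _ h))).2
  · intro i j hij
    have hij' : i.down ≠ j.down := fun h => hij (ULift.ext _ _ h)
    exact ⟨horth _ _ hij', horth _ _ hij'.symm⟩
  · exact fun l => (hf1 _).1.brick ht
  · exact fun l => (hf1 _).2

/-- If `A` is a minimal brick-infinite algebra admitting infinitely
many pairwise non-isomorphic unfaithful bricks, then there is a positive integer `d`
such that `A` admits an infinite semibrick consisting of bricks of `k`-dimension `d`. -/
theorem stmt8 {k A : Type u} [Field k] [IsAlgClosed k] [Ring A] [Algebra k A]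
    [FiniteDimensional k A] (hmin : MinimalBrickInfinite k A)
    {J : Type v} [Infinite J] (X : J → FDMod k A)
    (hbrick : ∀ j, (X j).IsBrick)
    (hnoniso : ∀ i j, i ≠ j → ¬(X i).Iso (X j))
    (hunfaithful : ∀ j, ∃ a : A, a ≠ 0 ∧ ∀ x : (X j).carrier, a • x = 0) :
    ∃ d : ℕ, 0 < d ∧
      ∃ (L : Type u) (B : L → FDMod k A), Infinite L ∧
        HomOrthFamily B ∧ (∀ l, (B l).IsBrick) ∧
        (∀ l, finrank k (B l).carrier = d) := by
  exact Brk.main_result hmin X hbrick hnoniso hunfaithful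
end
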